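/- arXiv:1907.12351 — 2 statements merged into one kernel-verified Lean document; each statement's English description precedes it below -/
import Mathlib

section
/- The class number of the real quadratic field ℚ(√30) is 2. -/
/-!
By the Minkowski bound every ideal class of `ℚ(√30)` contains an ideal of norm at most `5`. The
primes `2`, `3` and `5` all ramify, so the class group is generated by the classes of the ideals
`P_p = (p, √30)` with `P_p ^ 2 = (p)`. Since `P₃ P₂ = (6 + √30)` and `P₅ = (5 + √30)`, the class of
`P₂` alone generates. It is nontrivial because a generator of `P₂` would have norm
`x ^ 2 - 30 y ^ 2 = ± 2`, while `± 2` are not squares modulo `5`.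
-/

open NumberField Module QuadraticAlgebra

section QuadraticAlgebra

variable {R : Type*} [CommRing R] {a b : R}

lemma algebraNorm_quadraticAlgebra (z : QuadraticAlgebra R a b) :
    Algebra.norm R z = z.norm := by
  rw [Algebra.norm_apply]
  exact det_toLinearMap_eq_norm z

lemma basis_zero_quadraticAlgebra : QuadraticAlgebra.basis a b 0 = 1 := by
  apply (QuadraticAlgebra.basis a b).repr.injective
  ext i
  fin_cases i <;> simp

lemma basis_one_quadraticAlgebra : QuadraticAlgebra.basis a b 1 = omega := by
  apply (QuadraticAlgebra.basis a b).repr.injective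
  ext i
  fin_cases i <;> simp

lemma algebraTrace_quadraticAlgebra (z : QuadraticAlgebra R a b) :
    Algebra.trace R _ z = z.trace := by
  rw [Algebra.trace_eq_matrix_trace (QuadraticAlgebra.basis a b), Matrix.trace_fin_two, trace_def]
  simp only [Algebra.leftMulMatrix_eq_repr_mul, basis_zero_quadraticAlgebra, mul_one,
    basis_repr_apply, Matrix.cons_val_zero, basis_one_quadraticAlgebra, re_mul, omega_re, mul_zero,
    omega_im, zero_add, im_mul, add_zero, Matrix.cons_val_one, Matrix.cons_val_fin_one]
  ring

lemma discr_quadraticAlgebra_basis :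
    Algebra.discr R (QuadraticAlgebra.basis a b) = b ^ 2 + 4 * a := by
  rw [Algebra.discr_def, Matrix.det_fin_two]
  simp only [Algebra.traceMatrix_apply, Algebra.traceForm_apply, algebraTrace_quadraticAlgebra,
    basis_zero_quadraticAlgebra, basis_one_quadraticAlgebra, trace_def, re_one, im_one, re_mul,
    im_mul, omega_re, omega_im, mul_one, one_mul, mul_zero, add_zero, zero_add]
  ring

lemma map_omega_sq_eq_intCast {S : Type*} [CommRing S] {d : ℤ}
    (f : QuadraticAlgebra ℤ d 0 →+* S) : f omega ^ 2 = d := by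
  rw [← map_pow, sq, omega_mul_omega_eq_mk, ← map_intCast f]
  rfl

lemma isIntegral_star {z : QuadraticAlgebra R a b} (hz : IsIntegral ℤ z) : IsIntegral ℤ (star z) :=
  map_isIntegral_int (starRingEnd (QuadraticAlgebra R a b)) hz

lemma isIntegral_trace_of_isIntegral {z : QuadraticAlgebra R a b} (hz : IsIntegral ℤ z) :
    IsIntegral ℤ z.trace := by
  rw [← isIntegral_algebraMap_iff (algebraMap_injective (a := a) (b := b)),
    algebraMap_trace_eq_add_star]
  exact hz.add (isIntegral_star hz)

lemma isIntegral_norm_of_isIntegral {z : QuadraticAlgebra R a b} (hz : IsIntegral ℤ z) :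
    IsIntegral ℤ z.norm := by
  rw [← isIntegral_algebraMap_iff (algebraMap_injective (a := a) (b := b)),
    algebraMap_norm_eq_mul_star]
  exact hz.mul (isIntegral_star hz)

end QuadraticAlgebra

lemma isIntegral_of_squarefree_mul_sq {R F : Type*} [CommRing R] [IsDomain R] [IsIntegrallyClosed R]
    [DecompositionMonoid R] [Field F] [Algebra R F] [IsFractionRing R F] {d : R}
    (hd : Squarefree d) {q : F} (h : IsIntegral R (algebraMap R F d * q ^ 2)) :
    IsIntegral R q := by
  have hd0 : algebraMap R F d ≠ 0 := by
    simpa using hd.ne_zero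
  obtain ⟨n, hn⟩ := IsIntegrallyClosed.isIntegral_iff.mp h
  have hsq : (algebraMap R F d * q) ^ 2 = algebraMap R F (d * n) := by
    rw [map_mul, hn]
    ring
  obtain ⟨k, hk⟩ := IsIntegrallyClosed.exists_algebraMap_eq_of_isIntegral_pow two_pos
    (hsq ▸ isIntegral_algebraMap)
  have hkn : k ^ 2 = d * n := IsFractionRing.injective R F (by rw [map_pow, hk, hsq])
  obtain ⟨j, rfl⟩ := (hd.dvd_pow_iff_dvd two_ne_zero).mp (hkn ▸ dvd_mul_right d n)
  rw [map_mul] at hk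
  exact mul_left_cancel₀ hd0 hk ▸ isIntegral_algebraMap

lemma even_and_even_of_four_dvd_sq_sub_mul_sq {d m k : ℤ} (hd : Squarefree d) (hd4 : d % 4 ≠ 1)
    (h : 4 ∣ m ^ 2 - d * k ^ 2) : Even m ∧ Even k := by
  have hd0 : ¬ (4 : ℤ) ∣ d := fun h4 ↦ by
    have hunit : IsUnit (2 : ℤ) := hd 2 (by simpa using h4)
    norm_num [Int.isUnit_iff] at hunit
  have hk : Even k := by
    by_contra hk
    have hk1 := Int.sq_mod_four_eq_one_of_odd (Int.not_even_iff_odd.mp hk)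
    have hmd : m ^ 2 % 4 = d % 4 := by
      obtain ⟨t, ht⟩ := h
      obtain ⟨c, hc⟩ : ∃ c, k ^ 2 = 4 * c + 1 := ⟨k ^ 2 / 4, by omega⟩
      have : m ^ 2 = d + 4 * (t + d * c) := by linear_combination ht + d * hc
      omega
    rcases Int.even_or_odd m with ⟨x, rfl⟩ | hm
    · exact hd0 (by ring_nf at hmd; omega)
    · exact hd4 (hmd ▸ Int.sq_mod_four_eq_one_of_odd hm)
  have hm : Even (m ^ 2) := by
    obtain ⟨y, rfl⟩ := hk
    obtain ⟨t, ht⟩ := h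
    exact ⟨2 * (t + d * y ^ 2), by linear_combination ht⟩
  exact ⟨(Int.even_pow.mp hm).1, hk⟩

lemma exists_intCast_of_isIntegral {d : ℤ} (hd : Squarefree d) (hd4 : d % 4 ≠ 1)
    {z : QuadraticAlgebra ℚ d 0} (hz : IsIntegral ℤ z) : ∃ x y : ℤ, z = ⟨x, y⟩ := by
  obtain ⟨m, hm⟩ := IsIntegrallyClosed.isIntegral_iff.mp (isIntegral_trace_of_isIntegral hz)
  obtain ⟨n, hn⟩ := IsIntegrallyClosed.isIntegral_iff.mp (isIntegral_norm_of_isIntegral hz)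
  simp only [eq_intCast, trace_def, norm_def, zero_mul, add_zero] at hm hn
  have hsq : d * (2 * z.im) ^ 2 = ((m ^ 2 - 4 * n : ℤ) : ℚ) := by
    push_cast
    rw [hm, hn]
    ring
  obtain ⟨k, hk⟩ := IsIntegrallyClosed.isIntegral_iff.mp <|
    isIntegral_of_squarefree_mul_sq (R := ℤ) hd (q := 2 * z.im) (by
      rw [eq_intCast, hsq]; exact isIntegral_algebraMap)
  rw [eq_intCast] at hk
  have hmk : m ^ 2 - d * k ^ 2 = 4 * n := by
    rw [← hk] at hsq
    have : d * k ^ 2 = m ^ 2 - 4 * n := mod_cast hsq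
    linarith
  obtain ⟨⟨x, rfl⟩, ⟨y, rfl⟩⟩ :=
    even_and_even_of_four_dvd_sq_sub_mul_sq hd hd4 (hmk ▸ dvd_mul_right 4 n)
  push_cast at hm hk
  exact ⟨x, y, QuadraticAlgebra.ext (by linarith : z.re = x) (by linarith : z.im = y)⟩

lemma nonempty_quadraticAlgebra_algEquiv {F K : Type*} [Field F] [Field K] [Algebra F K] {a : F}
    (ha : ¬ IsSquare a) {s : K} (hs : s ^ 2 = algebraMap F K a)
    (hgen : ∀ x : K, ∃ u v : F, x = algebraMap F K u + algebraMap F K v * s) :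
    Nonempty (QuadraticAlgebra F a 0 ≃ₐ[F] K) := by
  have : Fact (∀ r, r ^ 2 ≠ a + 0 * r) := ⟨fun r hr ↦ ha ⟨r, by linear_combination -hr⟩⟩
  let f : QuadraticAlgebra F a 0 →ₐ[F] K :=
    lift ⟨s, by rw [← sq, hs, zero_smul, add_zero, Algebra.algebraMap_eq_smul_one]⟩
  refine ⟨.ofBijective f ⟨f.toRingHom.injective, fun x ↦ ?_⟩⟩
  obtain ⟨u, v, rfl⟩ := hgen x
  exact ⟨⟨u, v⟩, by simp [f, lift, Algebra.smul_def]⟩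

lemma nonempty_ringOfIntegers_ringEquiv {K : Type*} [Field K] [CharZero K] {d : ℤ}
    (hd : Squarefree d) (hd4 : d % 4 ≠ 1) (f : QuadraticAlgebra ℚ d 0 ≃ₐ[ℚ] K) :
    Nonempty (QuadraticAlgebra ℤ d 0 ≃+* 𝓞 K) := by
  let φ : QuadraticAlgebra ℤ d 0 →ₐ[ℤ] K := lift ⟨f omega, by
    rw [← map_mul, omega_mul_omega_eq_mk, zero_smul, add_zero, zsmul_one, ← map_intCast f]
    congr 1⟩
  have hφ (w) : φ w = f ⟨w.re, w.im⟩ := by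
    simp [φ, lift, mk_eq_add_smul_omega, Algebra.smul_def]
  let := φ.toRingHom.toAlgebra
  have : IsIntegralClosure (QuadraticAlgebra ℤ d 0) ℤ K :=
    { algebraMap_injective := fun v w hvw ↦ by
        have h := f.injective ((hφ v).symm.trans (hvw.trans (hφ w)))
        simpa [QuadraticAlgebra.ext_iff] using h
      isIntegral_iff := fun {x} ↦ by
        refine ⟨fun hx ↦ ?_, ?_⟩
        · obtain ⟨u, v, huv⟩ :=
            exists_intCast_of_isIntegral hd hd4 (map_isIntegral_int f.symm.toRingHom hx)
          exact ⟨⟨u, v⟩, (hφ _).trans (by simp [← huv])⟩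
        · rintro ⟨w, rfl⟩
          exact (Algebra.IsIntegral.isIntegral w).map φ }
  exact ⟨(RingOfIntegers.equiv _).symm⟩

section Dedekind

open Ideal

variable {S : Type*} [CommRing S]

lemma mem_of_isCoprime_of_mul_mem {I : Ideal S} {m n x : S} (hmn : IsCoprime m n)
    (hm : m * x ∈ I) (hn : n * x ∈ I) : x ∈ I := by
  obtain ⟨u, v, huv⟩ := hmn
  have hsum : u * (m * x) + v * (n * x) = x := by linear_combination x * huv
  exact hsum ▸ add_mem (I.mul_mem_left u hm) (I.mul_mem_left v hn)

lemma span_pair_sq_eq_span_singleton {n m s : S} (hnm : IsCoprime n m) (hs : s ^ 2 = n * m) :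
    span {n, s} ^ 2 = span {n} := by
  rw [sq, span_pair_mul_span_pair, ← sq s, hs]
  apply le_antisymm
  · simp [span_le, Set.insert_subset_iff, mem_span_singleton]
  · rw [span_singleton_le_iff_mem]
    exact mem_of_isCoprime_of_mul_mem hnm (subset_span (by simp))
      (subset_span (by simp [mul_comm m]))

lemma span_pair_mul_span_pair_of_isCoprime {m n s : S} (hmn : IsCoprime m n) :
    span {m, s} * span {n, s} = span {m * n, s} := by
  have hs : s ∈ span {m * n, s} := subset_span (by simp)
  rw [span_pair_mul_span_pair]
  apply le_antisymm <;> simp only [span_le, Set.insert_subset_iff, Set.singleton_subset_iff]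
  · exact ⟨subset_span (by simp), mul_mem_left _ m hs, mul_mem_right n _ hs, mul_mem_left _ s hs⟩
  · exact ⟨subset_span (by simp), mem_of_isCoprime_of_mul_mem hmn (subset_span (by simp))
      (subset_span (by simp [mul_comm n]))⟩

lemma span_pair_eq_span_add {n s u : S} (hu : IsUnit u) (h : s ^ 2 - n ^ 2 = n * u) :
    span {n, s} = span {n + s} := by
  apply le_antisymm
  · have hn : n ∈ span {n + s} := by
      rw [← mul_unit_mem_iff_mem _ hu, mem_span_singleton]
      exact ⟨s - n, by linear_combination -h⟩
    rw [span_le, Set.insert_subset_iff, Set.singleton_subset_iff]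
    exact ⟨hn, (Ideal.add_mem_iff_right _ hn).mp (mem_span_singleton_self _)⟩
  · rw [span_singleton_le_iff_mem]
    exact add_mem (subset_span (by simp)) (subset_span (by simp))

variable [IsDedekindDomain S]

lemma mk0_mem_of_forall_isPrime_dvd {H : Subgroup (ClassGroup S)} {I : Ideal S}
    (hI : I ∈ nonZeroDivisors (Ideal S))
    (h : ∀ P (hP : P ∈ nonZeroDivisors (Ideal S)), P.IsPrime → P ∣ I → ClassGroup.mk0 ⟨P, hP⟩ ∈ H) :
    ClassGroup.mk0 ⟨I, hI⟩ ∈ H := by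
  induction I using UniqueFactorizationMonoid.induction_on_prime with
  | h₁ => simp at hI
  | h₂ I hu =>
    obtain rfl : I = 1 := isUnit_iff_eq_one.mp hu
    have hone : ClassGroup.mk0 ⟨1, hI⟩ = 1 := map_one (ClassGroup.mk0 (R := S))
    exact hone ▸ H.one_mem
  | h₃ J P hJ0 hP ih =>
    have hP0 := mem_nonZeroDivisors_of_ne_zero hP.ne_zero
    have hJ := mem_nonZeroDivisors_of_ne_zero hJ0
    rw [← Submonoid.mk_mul_mk _ P J hP0 hJ, map_mul]
    exact H.mul_mem (h P hP0 (isPrime_of_prime hP) (dvd_mul_right P J))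
      (ih hJ fun Q hQ0 hQ hQJ ↦ h Q hQ0 hQ (hQJ.mul_left P))

variable [Module.Free ℤ S] [Module.Finite ℤ S]

lemma absNorm_span_pair_of_sq_eq {n : ℕ} {m s : S} (hrank : finrank ℤ S = 2)
    (hnm : IsCoprime (n : S) m) (hs : s ^ 2 = n * m) :
    absNorm (span {(n : S), s}) = n := by
  have h := congrArg absNorm (span_pair_sq_eq_span_singleton hnm hs)
  rw [map_pow, absNorm_span_natCast, hrank] at h
  exact Nat.pow_left_injective two_ne_zero h

lemma eq_span_pair_of_isPrime {p : ℕ} {m s : S} (hrank : finrank ℤ S = 2)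
    (hp : p.Prime) (hpm : IsCoprime (p : S) m) (hs : s ^ 2 = p * m)
    {P : Ideal S} (hP : P.IsPrime) (hpP : (p : S) ∈ P) : P = span {(p : S), s} := by
  have hnorm := absNorm_span_pair_of_sq_eq hrank hpm hs
  have hprime : (span {(p : S), s}).IsPrime := isPrime_of_irreducible_absNorm (hnorm.symm ▸ hp)
  have hmax : (span {(p : S), s}).IsMaximal := hprime.isMaximal fun h0 ↦ by
    rw [h0, absNorm_bot] at hnorm
    exact hp.ne_zero hnorm.symm
  have hsP : s ∈ P := hP.mem_of_pow_mem 2 (hs ▸ P.mul_mem_right m hpP)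
  refine (hmax.eq_of_le hP.ne_top ?_).symm
  simp [span_le, Set.insert_subset_iff, hpP, hsP]

lemma eq_span_pair_of_isPrime_of_absNorm_le_five {s : S} (hrank : finrank ℤ S = 2)
    (hs : s ^ 2 = 30) {P : Ideal S} (hP0 : P ≠ ⊥) (hP : P.IsPrime) (hle : absNorm P ≤ 5) :
    P = span {2, s} ∨ P = span {3, s} ∨ P = span {5, s} := by
  have := hP.isMaximal hP0
  obtain ⟨p, n, hn, hpP, hp, hnorm⟩ := exists_prime_and_absNorm_eq_pow P
  have hp5 : p ≤ 5 := (Nat.le_self_pow hn.ne' p).trans (hnorm ▸ hle)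
  have heq (m : ℕ) (hpm : p.Coprime m) (hm : p * m = 30) : P = span {(p : S), s} :=
    eq_span_pair_of_isPrime hrank hp hpm.cast (by rw [hs, ← Nat.cast_mul, hm, Nat.cast_ofNat])
      hP hpP
  interval_cases p
  · exact absurd hp Nat.not_prime_zero
  · exact absurd hp Nat.not_prime_one
  · exact .inl (mod_cast heq 15 (by decide) rfl)
  · exact .inr (.inl (mod_cast heq 10 (by decide) rfl))
  · exact absurd hp (by decide)
  · exact .inr (.inr (mod_cast heq 6 (by decide) rfl))

end Dedekind

section NumberField

open Ideal

variable {K : Type*} [Field K] [NumberField K]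

lemma nrComplexPlaces_eq_zero_of_discr_pos (hrank : finrank ℚ K = 2) (hdiscr : 0 < discr K) :
    InfinitePlace.nrComplexPlaces K = 0 := by
  have hplaces := InfinitePlace.card_add_two_mul_card_eq_rank K
  have hne : InfinitePlace.nrComplexPlaces K ≠ 1 := fun h1 ↦ by
    have hsign := sign_discr K
    rw [h1, Int.sign_eq_one_of_pos hdiscr] at hsign
    norm_num at hsign
  omega

lemma exists_ideal_in_class_of_four_mul_sq_le_discr (hrank : finrank ℚ K = 2) (hdiscr : 0 < discr K)
    (C : ClassGroup (𝓞 K)) : ∃ I : nonZeroDivisors (Ideal (𝓞 K)), ClassGroup.mk0 I = C ∧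
      4 * (absNorm (I : Ideal (𝓞 K)) : ℤ) ^ 2 ≤ discr K := by
  obtain ⟨I, hI, hbound⟩ := exists_ideal_in_class_of_norm_le C
  refine ⟨I, hI, ?_⟩
  rw [hrank, nrComplexPlaces_eq_zero_of_discr_pos hrank hdiscr, Nat.factorial_two, pow_zero,
    one_mul, abs_of_pos (mod_cast hdiscr), Nat.cast_ofNat] at hbound
  have hle : 2 * (absNorm (I : Ideal (𝓞 K)) : ℝ) ≤ √(discr K) := by linarith
  have hsq := (Real.le_sqrt (by positivity) (mod_cast hdiscr.le)).mp hle
  rw [mul_pow, (by norm_num : (2 : ℝ) ^ 2 = 4)] at hsq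
  exact_mod_cast hsq

lemma subgroup_eq_top_of_forall_isPrime (hrank : finrank ℚ K = 2) (hdiscr : 0 < discr K)
    {H : Subgroup (ClassGroup (𝓞 K))}
    (h : ∀ P (hP : P ∈ nonZeroDivisors (Ideal (𝓞 K))), P.IsPrime →
      4 * (absNorm P : ℤ) ^ 2 ≤ discr K → ClassGroup.mk0 ⟨P, hP⟩ ∈ H) : H = ⊤ := by
  refine (Subgroup.eq_top_iff' H).mpr fun C ↦ ?_
  obtain ⟨⟨I, hI⟩, rfl, hbound⟩ := exists_ideal_in_class_of_four_mul_sq_le_discr hrank hdiscr C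
  refine mk0_mem_of_forall_isPrime_dvd hI fun P hP0 hP hPI ↦ h P hP0 hP ?_
  have hle : absNorm P ≤ absNorm I :=
    Nat.le_of_dvd (absNorm_pos_iff_mem_nonZeroDivisors.mpr hI) (map_dvd absNorm hPI)
  refine le_trans ?_ hbound
  gcongr

variable {a b : ℤ}

lemma finrank_eq_two_of_ringOfIntegers_equiv (e : QuadraticAlgebra ℤ a b ≃+* 𝓞 K) :
    finrank ℚ K = 2 := by
  rw [← RingOfIntegers.rank, ← e.toIntAlgEquiv.toLinearEquiv.finrank_eq, finrank_eq_two]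

lemma discr_eq_of_ringOfIntegers_equiv (e : QuadraticAlgebra ℤ a b ≃+* 𝓞 K) :
    discr K = b ^ 2 + 4 * a := by
  rw [← discr_quadraticAlgebra_basis,
    ← discr_eq_discr K ((QuadraticAlgebra.basis a b).map e.toIntAlgEquiv.toLinearEquiv),
    Algebra.discr_eq_discr_of_algEquiv _ e.toIntAlgEquiv]
  rfl

lemma absNorm_span_singleton_of_equiv (e : QuadraticAlgebra ℤ a b ≃+* 𝓞 K) (z) :
    absNorm (span {e z}) = z.norm.natAbs := by
  rw [absNorm_span_singleton, ← algebraNorm_quadraticAlgebra]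
  exact congrArg _ (Algebra.norm_eq_of_algEquiv e.toIntAlgEquiv z)

lemma exists_natAbs_norm_eq_absNorm_of_isPrincipal (e : QuadraticAlgebra ℤ a b ≃+* 𝓞 K)
    {I : Ideal (𝓞 K)} (hI : I.IsPrincipal) : ∃ z : QuadraticAlgebra ℤ a b,
      z.norm.natAbs = absNorm I := by
  obtain ⟨w, rfl⟩ := hI
  refine ⟨e.symm w, ?_⟩
  rw [← absNorm_span_singleton_of_equiv e, e.apply_symm_apply, submodule_span_eq]

end NumberField

lemma natAbs_sq_sub_thirty_mul_sq_ne_two (x y : ℤ) : (x ^ 2 - 30 * y ^ 2).natAbs ≠ 2 := by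
  intro h
  have hmod : x ^ 2 % 5 = 2 ∨ x ^ 2 % 5 = 3 := by omega
  have hx : x % 5 = 0 ∨ x % 5 = 1 ∨ x % 5 = 2 ∨ x % 5 = 3 ∨ x % 5 = 4 := by omega
  rcases hx with hx | hx | hx | hx | hx <;> simp [pow_two, Int.mul_emod, hx] at hmod

lemma natCard_eq_prime_of_zpowers_eq_top {G : Type*} [Group G] {p : ℕ} [Fact p.Prime] {g : G}
    (hpow : g ^ p = 1) (hne : g ≠ 1) (htop : Subgroup.zpowers g = ⊤) : Nat.card G = p := by
  rw [← Subgroup.card_top, ← htop, Nat.card_zpowers, orderOf_eq_prime hpow hne]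

section Sqrt30

open Ideal

variable {K : Type*} [Field K] [NumberField K]

lemma not_isPrincipal_span_two (e : QuadraticAlgebra ℤ 30 0 ≃+* 𝓞 K) :
    ¬ (span {2, e omega}).IsPrincipal := by
  intro h
  have hrank : finrank ℤ (𝓞 K) = 2 := by
    rw [RingOfIntegers.rank, finrank_eq_two_of_ringOfIntegers_equiv e]
  have hnorm : absNorm (span {2, e omega}) = 2 :=
    absNorm_span_pair_of_sq_eq (n := 2) (m := 15) hrank ⟨-7, 1, by norm_num⟩
      ((map_omega_sq_eq_intCast e.toRingHom).trans (by norm_num))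
  obtain ⟨z, hz⟩ := exists_natAbs_norm_eq_absNorm_of_isPrincipal e h
  have hz_norm : z.norm = z.re ^ 2 - 30 * z.im ^ 2 := by
    rw [norm_def]
    ring
  exact natAbs_sq_sub_thirty_mul_sq_ne_two z.re z.im (hz_norm ▸ hz.trans hnorm)

lemma zpowers_mk0_span_two_eq_top {s : 𝓞 K} (hrank : finrank ℚ K = 2) (hdiscr : discr K = 120)
    (hs : s ^ 2 = 30) (htwo : span {2, s} ∈ nonZeroDivisors (Ideal (𝓞 K))) :
    Subgroup.zpowers (ClassGroup.mk0 ⟨span {2, s}, htwo⟩) = ⊤ := by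
  refine subgroup_eq_top_of_forall_isPrime hrank (by omega) fun P hP0 hP hle ↦ ?_
  have hle5 : absNorm P ≤ 5 := by
    rw [hdiscr] at hle
    zify
    nlinarith
  rcases eq_span_pair_of_isPrime_of_absNorm_le_five ((RingOfIntegers.rank K).trans hrank) hs
    (nonZeroDivisors.ne_zero hP0) hP hle5 with rfl | rfl | rfl
  · exact Subgroup.mem_zpowers _
  · have hmul : span {3, s} * span {2, s} = span {6 + s} := by
      rw [span_pair_mul_span_pair_of_isCoprime ⟨1, -1, by norm_num⟩,
        span_pair_eq_span_add isUnit_one.neg (by rw [hs]; norm_num)]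
      norm_num
    have hinv : ClassGroup.mk0 ⟨span {3, s}, hP0⟩ = (ClassGroup.mk0 ⟨span {2, s}, htwo⟩)⁻¹ := by
      rw [eq_inv_iff_mul_eq_one, ← map_mul, Submonoid.mk_mul_mk, ClassGroup.mk0_eq_one_iff, hmul]
      exact ⟨6 + s, rfl⟩
    exact hinv ▸ inv_mem (Subgroup.mem_zpowers _)
  · have hfive : span {5, s} = span {5 + s} :=
      span_pair_eq_span_add isUnit_one (by rw [hs]; norm_num)
    have hone : ClassGroup.mk0 ⟨span {5, s}, hP0⟩ = 1 :=
      (ClassGroup.mk0_eq_one_iff hP0).mpr ⟨5 + s, hfive⟩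
    exact hone ▸ one_mem _

lemma classNumber_eq_two_of_ringOfIntegers_equiv (e : QuadraticAlgebra ℤ 30 0 ≃+* 𝓞 K) :
    classNumber K = 2 := by
  have hs : e omega ^ 2 = 30 := mod_cast map_omega_sq_eq_intCast e.toRingHom
  have htwo : span {2, e omega} ∈ nonZeroDivisors (Ideal (𝓞 K)) :=
    mem_nonZeroDivisors_of_ne_zero fun h ↦ two_ne_zero (span_eq_bot.mp h 2 (by simp))
  have hsq : ClassGroup.mk0 ⟨span {2, e omega}, htwo⟩ ^ 2 = 1 := by
    rw [← map_pow, SubmonoidClass.mk_pow, ClassGroup.mk0_eq_one_iff,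
      span_pair_sq_eq_span_singleton (m := 15) ⟨-7, 1, by norm_num⟩ (by rw [hs]; norm_num)]
    exact ⟨2, rfl⟩
  have hne : ClassGroup.mk0 ⟨span {2, e omega}, htwo⟩ ≠ 1 := fun h ↦
    not_isPrincipal_span_two e ((ClassGroup.mk0_eq_one_iff htwo).mp h)
  have htop := zpowers_mk0_span_two_eq_top (finrank_eq_two_of_ringOfIntegers_equiv e)
    (discr_eq_of_ringOfIntegers_equiv e) hs htwo
  rw [classNumber, ← Nat.card_eq_fintype_card, natCard_eq_prime_of_zpowers_eq_top hsq hne htop]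

end Sqrt30

/-- The class number of the real quadratic field `ℚ(√30)` is 2. -/
theorem stmt_7 (K : Type*) [Field K] [NumberField K] (s : K) (hs : s ^ 2 = 30)
    (hgen : ∀ x : K, ∃ a b : ℚ, x = (a : K) + (b : K) * s) :
    NumberField.classNumber K = 2 := by
  have hsqfree : Squarefree (30 : ℤ) := by
    rw [← Int.squarefree_natAbs, Nat.squarefree_iff_nodup_primeFactorsList (by decide)]
    simp
  have hsquare : ¬ IsSquare ((30 : ℤ) : ℚ) := by norm_num
  obtain ⟨f⟩ := nonempty_quadraticAlgebra_algEquiv hsquare (s := s)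
    (by simpa using hs) (by simpa using hgen)
  obtain ⟨e⟩ := nonempty_ringOfIntegers_ringEquiv hsqfree (by decide) f
  exact classNumber_eq_two_of_ringOfIntegers_equiv e
end

section
/- The equation (x - y)^4 + x^4 + (x + y)^4 = z^3 has no integer solutions x, y, z with gcd(x, y) = 1. -/
/-!
With `w = x ^ 2 + 2 * y ^ 2` and `v = y ^ 2` the equation becomes `3 * w ^ 2 - 10 * v ^ 2 = z ^ 3`.
By Minkowski's theorem in `ℤ[√30]`, `w * √3 + v * √10` is a cube `(a * √3 + b * √10) ^ 3` times one
of the units `1`, `11 ± 2 * √30`. Congruences exclude the last two. The unit `1` forces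
`b = (2 * m * n) ^ 2` and `3 * a = m ^ 4 - 40 * n ^ 4`, which gives a rational point with abscissa
`(m ^ 4 - 24 * m ^ 2 * n ^ 2 - 40 * n ^ 4) / (2 * m * n) ^ 2` on the elliptic curve
`Y ^ 2 = X ^ 3 - 18 * X - 72`. A `2`-descent, whose finiteness is Minkowski's theorem in `ℤ[θ]` with
`θ ^ 3 = 18 * θ + 72`, and a comparison of heights show that the group of rational points is
generated by `(6, 6)`. Reduction modulo `3` and `163` shows that no multiple of `(6, 6)` has an
abscissa of this shape.
-/

namespace SumFourthPowers

section Minkowski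

open MeasureTheory

variable {ι : Type*} [Fintype ι] [DecidableEq ι]

theorem volume_abs_mulVec_lt {M : Matrix ι ι ℝ} (hM : M.det ≠ 0) {R : ι → ℝ} (hR : ∀ i, 0 < R i) :
    volume (M.toLin' ⁻¹' Set.univ.pi fun i ↦ Set.Ioo (-R i) (R i)) =
      ENNReal.ofReal (2 ^ Fintype.card ι * ((∏ i, R i) / |M.det|)) := by
  have hbox : volume (Set.univ.pi fun i ↦ Set.Ioo (-R i) (R i)) =
      ENNReal.ofReal (∏ i, 2 * R i) := by
    rw [Real.volume_pi_Ioo, ENNReal.ofReal_prod_of_nonneg fun i _ ↦ by linarith [hR i]]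
    simp only [sub_neg_eq_add, two_mul]
  rw [Measure.addHaar_preimage_linearMap volume (by rwa [LinearMap.det_toLin']), hbox,
    LinearMap.det_toLin', ← ENNReal.ofReal_mul (abs_nonneg _), abs_inv, Finset.prod_mul_distrib,
    Finset.prod_const, Finset.card_univ]
  congr 1
  ring

theorem exists_int_ne_zero_abs_mulVec_lt {M : Matrix ι ι ℝ} (hM : M.det ≠ 0) {R : ι → ℝ}
    (hR : ∀ i, 0 < R i) (h : |M.det| < ∏ i, R i) :
    ∃ k : ι → ℤ, k ≠ 0 ∧ ∀ i, |M.mulVec (fun j ↦ (k j : ℝ)) i| < R i := by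
  set b := Pi.basisFun ℝ ι
  set s := M.toLin' ⁻¹' Set.univ.pi fun i ↦ Set.Ioo (-R i) (R i) with hs
  let L := (Submodule.span ℤ (Set.range b)).toAddSubgroup
  have : Countable L := inferInstanceAs (Countable (Submodule.span ℤ (Set.range b)))
  have hL : IsAddFundamentalDomain L (ZSpan.fundamentalDomain b) volume :=
    ZSpan.isAddFundamentalDomain b volume
  have hcovol : volume (ZSpan.fundamentalDomain b) = 1 := by
    simp [b, ZSpan.fundamentalDomain_pi_basisFun, Real.volume_pi_Ico]
  have hconv : Convex ℝ s := (convex_pi fun i _ ↦ convex_Ioo _ _).linear_preimage _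
  have hsymm : ∀ x ∈ s, -x ∈ s := fun x hx i hi ↦ by
    have := hx i hi
    simp only [map_neg, Pi.neg_apply, Set.mem_Ioo] at this ⊢
    constructor <;> linarith
  have hvol : volume (ZSpan.fundamentalDomain b) * 2 ^ Module.finrank ℝ (ι → ℝ) < volume s := by
    have hdet : 1 < (∏ i, R i) / |M.det| := by rwa [one_lt_div (abs_pos.2 hM)]
    rw [hs, volume_abs_mulVec_lt hM hR, hcovol, one_mul, Module.finrank_fintype_fun_eq_card,
      ← ENNReal.ofReal_ofNat 2, ← ENNReal.ofReal_pow zero_le_two]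
    refine (ENNReal.ofReal_lt_ofReal_iff_of_nonneg (by positivity)).2 ?_
    exact lt_mul_of_one_lt_right (by positivity) hdet
  obtain ⟨x, hx0, hxs⟩ :=
    exists_ne_zero_mem_lattice_of_measure_mul_two_pow_lt_measure hL hsymm hconv hvol
  choose k hk using (b.mem_span_iff_repr_mem ℤ (x : ι → ℝ)).1 x.2
  have hkx : (fun j ↦ (k j : ℝ)) = x := funext fun j ↦ by simpa [b] using hk j
  refine ⟨k, fun hk0 ↦ hx0 (Subtype.ext ?_), fun i ↦ ?_⟩
  · rw [← hkx, hk0]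
    ext
    simp
  · simpa [hkx, abs_lt] using hxs i trivial

end Minkowski

/-- The ring `R[θ]` with `θ ^ 3 = 18 * θ + 72`; the triple `⟨u, v, w⟩` is `u + v * θ + w * θ ^ 2`.
Over `ℚ` it is the cubic field attached to the elliptic curve `Y ^ 2 = X ^ 3 - 18 * X - 72`. -/
@[ext]
structure ThetaRing (R : Type*) where
  u : R
  v : R
  w : R
  deriving DecidableEq

namespace ThetaRing

variable {R S : Type*} [CommRing R] [CommRing S]

instance : Zero (ThetaRing R) := ⟨⟨0, 0, 0⟩⟩

instance : One (ThetaRing R) := ⟨⟨1, 0, 0⟩⟩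

instance : Add (ThetaRing R) := ⟨fun a b ↦ ⟨a.u + b.u, a.v + b.v, a.w + b.w⟩⟩

instance : Neg (ThetaRing R) := ⟨fun a ↦ ⟨-a.u, -a.v, -a.w⟩⟩

instance : Mul (ThetaRing R) :=
  ⟨fun a b ↦
    ⟨a.u * b.u + 72 * (a.v * b.w + a.w * b.v),
      a.u * b.v + a.v * b.u + 18 * (a.v * b.w + a.w * b.v) + 72 * a.w * b.w,
      a.u * b.w + a.v * b.v + a.w * b.u + 18 * a.w * b.w⟩⟩

theorem zero_def : (0 : ThetaRing R) = ⟨0, 0, 0⟩ := rfl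

theorem one_def : (1 : ThetaRing R) = ⟨1, 0, 0⟩ := rfl

theorem add_def (a b : ThetaRing R) : a + b = ⟨a.u + b.u, a.v + b.v, a.w + b.w⟩ := rfl

theorem neg_def (a : ThetaRing R) : -a = ⟨-a.u, -a.v, -a.w⟩ := rfl

theorem mul_def (a b : ThetaRing R) :
    a * b =
      ⟨a.u * b.u + 72 * (a.v * b.w + a.w * b.v),
        a.u * b.v + a.v * b.u + 18 * (a.v * b.w + a.w * b.v) + 72 * a.w * b.w,
        a.u * b.w + a.v * b.v + a.w * b.u + 18 * a.w * b.w⟩ := rfl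

instance : CommRing (ThetaRing R) :=
  CommRing.ofMinimalAxioms
    (fun a b c ↦ by ext <;> simp only [add_def] <;> ring)
    (fun a ↦ by ext <;> simp only [add_def, zero_def] <;> ring)
    (fun a ↦ by ext <;> simp only [add_def, neg_def, zero_def] <;> ring)
    (fun a b c ↦ by ext <;> simp only [mul_def] <;> ring)
    (fun a b ↦ by ext <;> simp only [mul_def] <;> ring)
    (fun a ↦ by ext <;> simp only [mul_def, one_def] <;> ring)
    (fun a b c ↦ by ext <;> simp only [mul_def, add_def] <;> ring)

/-- The embedding of the base ring. -/
def C : R →+* ThetaRing R where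
  toFun x := ⟨x, 0, 0⟩
  map_zero' := rfl
  map_one' := rfl
  map_add' x y := by simp only [add_def, add_zero]
  map_mul' x y := by ext <;> simp only [mul_def] <;> ring

theorem C_apply (x : R) : C x = ⟨x, 0, 0⟩ := rfl

theorem C_mul_def (x : R) (a : ThetaRing R) : C x * a = ⟨x * a.u, x * a.v, x * a.w⟩ := by
  ext <;> simp only [C_apply, mul_def] <;> ring

theorem C_mul_right_inj [IsDomain R] {x : R} (hx : x ≠ 0) {a b : ThetaRing R} :
    C x * a = C x * b ↔ a = b := by
  simp only [C_mul_def, ThetaRing.ext_iff, mul_right_inj' hx]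

/-- Functoriality in the coefficients. -/
def map (f : R →+* S) : ThetaRing R →+* ThetaRing S where
  toFun a := ⟨f a.u, f a.v, f a.w⟩
  map_zero' := by simp only [zero_def, map_zero]
  map_one' := by simp only [one_def, map_one, map_zero]
  map_add' a b := by simp only [add_def, map_add]
  map_mul' a b := by simp only [mul_def, map_add, map_mul, map_ofNat]

theorem map_apply (f : R →+* S) (a : ThetaRing R) : map f a = ⟨f a.u, f a.v, f a.w⟩ := rfl

/-- Evaluation `θ ↦ r` at a root `r` of the cubic. -/
def eval (r : R) (hr : r ^ 3 = 18 * r + 72) : ThetaRing ℤ →+* R where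
  toFun a := a.u + a.v * r + a.w * r ^ 2
  map_zero' := by simp [zero_def]
  map_one' := by simp [one_def]
  map_add' a b := by
    simp only [add_def, Int.cast_add]
    ring
  map_mul' a b := by
    simp only [mul_def]
    push_cast
    linear_combination (-(a.v * b.w + a.w * b.v) - a.w * b.w * r : R) * hr

theorem eval_apply (r : R) (hr : r ^ 3 = 18 * r + 72) (a : ThetaRing ℤ) :
    eval r hr a = a.u + a.v * r + a.w * r ^ 2 := rfl

/-- The norm of `R[θ]` over `R`, that is, the determinant of the multiplication by `a`. -/
def norm : ThetaRing R →* R where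
  toFun a :=
    a.u * ((a.u + 18 * a.w) ^ 2 - a.v * (18 * a.v + 72 * a.w)) -
      a.v * (72 * a.w * (a.u + 18 * a.w) - 72 * a.v ^ 2) +
      a.w * (72 * a.w * (18 * a.v + 72 * a.w) - 72 * a.v * (a.u + 18 * a.w))
  map_one' := by simp [one_def]
  map_mul' a b := by
    simp only [mul_def]
    ring

theorem norm_apply (a : ThetaRing R) :
    norm a = a.u * ((a.u + 18 * a.w) ^ 2 - a.v * (18 * a.v + 72 * a.w)) -
      a.v * (72 * a.w * (a.u + 18 * a.w) - 72 * a.v ^ 2) +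
      a.w * (72 * a.w * (18 * a.v + 72 * a.w) - 72 * a.v * (a.u + 18 * a.w)) := rfl

/-- The element `c - e ^ 2 * θ`, which a `2`-descent attaches to a point with abscissa
`c / e ^ 2`. -/
def xi (c e : R) : ThetaRing R := ⟨c, -e ^ 2, 0⟩

/-- The cofactor of `xi c e`, that is, the product of its two other conjugates. -/
def xiAdj (c e : R) : ThetaRing R := ⟨c ^ 2 - 18 * e ^ 4, c * e ^ 2, e ^ 4⟩

theorem map_xi (f : R →+* S) (c e : R) : map f (xi c e) = xi (f c) (f e) := by
  simp only [map_apply, xi, map_neg, map_pow, map_zero]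

theorem norm_xi (c e : R) : norm (xi c e) = c ^ 3 - 18 * c * e ^ 4 - 72 * e ^ 6 := by
  simp only [norm_apply, xi]
  ring

theorem xi_mul_xiAdj (c e : R) : xi c e * xiAdj c e = C (norm (xi c e)) := by
  rw [norm_xi]
  ext <;> simp only [mul_def, xi, xiAdj, C_apply] <;> ring

end ThetaRing

theorem rat_cubic_ne_zero (x : ℚ) : x ^ 3 - 18 * x - 72 ≠ 0 := by
  intro h
  have hint : IsIntegral ℤ x := by
    refine ⟨Polynomial.X ^ 3 - Polynomial.C 18 * Polynomial.X - Polynomial.C 72, ?_, ?_⟩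
    · monicity!
    · simpa using h
  obtain ⟨n, rfl⟩ := IsIntegrallyClosed.isIntegral_iff.1 hint
  have hn : n ^ 3 - 18 * n - 72 = 0 := by
    rw [eq_intCast] at h
    exact_mod_cast h
  have hmod : ∀ m : ZMod 7, m ^ 3 - 18 * m - 72 ≠ 0 := by decide
  exact hmod n (by exact_mod_cast congrArg (Int.cast : ℤ → ZMod 7) hn)

namespace ThetaRing

theorem eq_zero_of_sq_eq_zero {a : ThetaRing ℤ} (h : a ^ 2 = 0) : a = 0 := by
  obtain ⟨u, v, w⟩ := a
  simp only [sq, mul_def, zero_def, ThetaRing.mk.injEq] at h ⊢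
  obtain ⟨hu, hv, hw⟩ := h
  have hw0 : w = 0 := by
    by_contra hw0
    have hcubic : w * (v ^ 3 - 18 * v * w ^ 2 - 72 * w ^ 3) = 0 := by
      linear_combination v * w * hw - w ^ 2 * hv
    have hcubic' : (v : ℚ) ^ 3 - 18 * v * w ^ 2 - 72 * w ^ 3 = 0 := by
      exact_mod_cast (mul_eq_zero.1 hcubic).resolve_left hw0
    apply rat_cubic_ne_zero (v / w)
    field_simp
    linear_combination hcubic'
  subst hw0
  have hv0 : v = 0 := by simpa using hw
  subst hv0
  simpa using hu

theorem isCoprime_of_sq_eq_norm_xi {c d e : ℤ} (hce : IsCoprime c e)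
    (h : d ^ 2 = norm (xi c e)) : IsCoprime e d := by
  have hd : d ^ 2 = c ^ 3 + e * (-18 * c * e ^ 3 - 72 * e ^ 5) := by
    rw [h, norm_xi]
    ring
  refine IsCoprime.of_isCoprime_of_dvd_right ?_ (dvd_pow_self d two_ne_zero)
  rw [hd]
  exact IsCoprime.add_mul_left_right hce.symm.pow_right _

theorem exists_root_mod_sq {c d e : ℤ} (hce : IsCoprime c e) (h : d ^ 2 = norm (xi c e)) :
    ∃ t s g : ℤ, c = t * e ^ 2 + d ^ 2 * s ∧ t ^ 3 - 18 * t - 72 = d ^ 2 * g := by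
  have hed := isCoprime_of_sq_eq_norm_xi hce h
  rw [norm_xi] at h
  obtain ⟨a, b, hab⟩ : IsCoprime (e ^ 2) (d ^ 2) := hed.pow
  have hc : c = c * a * e ^ 2 + d ^ 2 * (c * b) := by linear_combination (-c) * hab
  generalize c * a = t at hc
  generalize c * b = s at hc
  have hdvd : d ^ 2 ∣ e ^ 6 * (t ^ 3 - 18 * t - 72) := by
    refine ⟨1 + (-3 * c ^ 2 * s + 3 * c * d ^ 2 * s ^ 2 - d ^ 4 * s ^ 3 + 18 * s * e ^ 4), ?_⟩
    have hte : t * e ^ 2 = c - d ^ 2 * s := by linarith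
    calc e ^ 6 * (t ^ 3 - 18 * t - 72)
        = (t * e ^ 2) ^ 3 - 18 * (t * e ^ 2) * e ^ 4 - 72 * e ^ 6 := by ring
      _ = _ := by
        rw [hte]
        linear_combination -h
  obtain ⟨g, hg⟩ := (hed.symm.pow (m := 2) (n := 6)).dvd_of_dvd_mul_left hdvd
  exact ⟨t, s, g, hc, hg⟩

/-- A parametrization of the lattice of the `β` in `ℤ[θ]` that vanish modulo `d` at `θ = t`. -/
def latticePoint (d t : ℤ) (k : Fin 3 → ℤ) : ThetaRing ℤ :=
  ⟨d * k 0 - t * k 1 - t ^ 2 * k 2, k 1, k 2⟩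

theorem latticePoint_eq (d t : ℤ) (k : Fin 3 → ℤ) :
    latticePoint d t k = C d * C (k 0) + ⟨-t, 1, 0⟩ * ⟨k 1 + t * k 2, k 2, 0⟩ := by
  ext <;> simp only [latticePoint, add_def, mul_def, C_apply] <;> ring

theorem latticePoint_ne_zero {d t : ℤ} (hd : d ≠ 0) {k : Fin 3 → ℤ} (hk : k ≠ 0) :
    latticePoint d t k ≠ 0 := by
  contrapose! hk
  simp only [latticePoint, zero_def, ThetaRing.mk.injEq] at hk
  obtain ⟨h0, h1, h2⟩ := hk
  have h0' : k 0 = 0 := by simpa [h1, h2, hd] using h0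
  ext i
  fin_cases i <;> assumption

-- `C d ^ 2` divides `(latticePoint d t k) ^ 2 * xiAdj c e` since `xiAdj c e` is congruent modulo
-- `d ^ 2` to a multiple of `⟨t ^ 2 - 18, t, 1⟩`, the cofactor of `θ - t`.
theorem exists_latticePoint_sq_eq_mul_xi {c d e : ℤ} (hce : IsCoprime c e) (hd : d ≠ 0)
    (h : d ^ 2 = norm (xi c e)) :
    ∃ t : ℤ, ∀ k, ∃ α, latticePoint d t k ^ 2 = α * xi c e := by
  obtain ⟨t, s, g, hc, hg⟩ := exists_root_mod_sq hce h
  refine ⟨t, fun k ↦ ?_⟩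
  set β := latticePoint d t k with hβ
  have hcofactor : (⟨-t, 1, 0⟩ * ⟨t ^ 2 - 18, t, 1⟩ : ThetaRing ℤ) = -(C d ^ 2 * C g) := by
    rw [← map_pow, ← map_mul, ← hg]
    ext <;> simp only [mul_def, neg_def, C_apply] <;> ring
  have hxiAdj : xiAdj c e = C e ^ 4 * ⟨t ^ 2 - 18, t, 1⟩ +
      C d ^ 2 * ⟨2 * t * e ^ 2 * s + d ^ 2 * s ^ 2, s * e ^ 2, 0⟩ := by
    rw [← map_pow, ← map_pow, hc]
    ext <;> simp only [xiAdj, add_def, C_mul_def] <;> ring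
  obtain ⟨α, hα⟩ : C d ^ 2 ∣ β ^ 2 * xiAdj c e := by
    rw [hβ, latticePoint_eq, hxiAdj]
    generalize (⟨t ^ 2 - 18, t, 1⟩ : ThetaRing ℤ) = η at *
    generalize (⟨-t, 1, 0⟩ : ThetaRing ℤ) = τ at *
    generalize (⟨k 1 + t * k 2, k 2, 0⟩ : ThetaRing ℤ) = m
    generalize (⟨_, _, 0⟩ : ThetaRing ℤ) = ζ
    refine ⟨(C d * C (k 0) + τ * m) ^ 2 * ζ +
      C e ^ 4 * (C (k 0) ^ 2 * η - C g * (2 * C d * C (k 0) * m + τ * m ^ 2)), ?_⟩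
    linear_combination C e ^ 4 * (2 * C d * C (k 0) * m + τ * m ^ 2) * hcofactor
  refine ⟨α, (C_mul_right_inj (pow_ne_zero 2 hd)).1 ?_⟩
  have hxi := xi_mul_xiAdj c e
  rw [← h, map_pow] at hxi
  rw [map_pow]
  linear_combination (-β ^ 2) * hxi + xi c e * hα

end ThetaRing

theorem exists_real_root : ∃ r : ℝ, r ^ 3 = 18 * r + 72 ∧ 5.56267 < r ∧ r < 5.56268 := by
  have hcont : ContinuousOn (fun r : ℝ ↦ r ^ 3 - 18 * r - 72) (Set.Icc 5.56267 5.56268) := by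
    fun_prop
  obtain ⟨r, ⟨hr₁, hr₂⟩, hr⟩ := intermediate_value_Ioo (by norm_num) hcont
    (show (0 : ℝ) ∈ Set.Ioo _ _ by constructor <;> norm_num)
  exact ⟨r, by linarith [show r ^ 3 - 18 * r - 72 = 0 from hr], hr₁, hr₂⟩

namespace ThetaRing

/-- The real root of `X ^ 3 - 18 * X - 72`. -/
noncomputable def realRoot : ℝ := exists_real_root.choose

theorem realRoot_cubed : realRoot ^ 3 = 18 * realRoot + 72 := exists_real_root.choose_spec.1

theorem lt_realRoot : 5.56267 < realRoot := exists_real_root.choose_spec.2.1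

theorem realRoot_lt : realRoot < 5.56268 := exists_real_root.choose_spec.2.2

theorem lt_realRoot_sq : 30.9432 < realRoot ^ 2 := by nlinarith [lt_realRoot]

theorem realRoot_sq_lt : realRoot ^ 2 < 30.9435 := by nlinarith [realRoot_lt, lt_realRoot]

/-- The imaginary part of a nonreal root of `X ^ 3 - 18 * X - 72`. -/
noncomputable def imRoot : ℝ := √(3 * realRoot ^ 2 / 4 - 18)

theorem imRoot_sq : imRoot ^ 2 = 3 * realRoot ^ 2 / 4 - 18 :=
  Real.sq_sqrt (by linarith [lt_realRoot_sq])

theorem imRoot_pos : 0 < imRoot := Real.sqrt_pos.2 (by linarith [lt_realRoot_sq])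

/-- A nonreal root of `X ^ 3 - 18 * X - 72`. -/
noncomputable def complexRoot : ℂ := ⟨-realRoot / 2, imRoot⟩

theorem complexRoot_sq : complexRoot ^ 2 = ⟨18 - realRoot ^ 2 / 2, -realRoot * imRoot⟩ := by
  apply Complex.ext
  · simp only [complexRoot, sq, Complex.mul_re]
    linear_combination (-1 : ℝ) * imRoot_sq
  · simp only [complexRoot, sq, Complex.mul_im]
    ring

theorem complexRoot_cubed : complexRoot ^ 3 = 18 * complexRoot + 72 := by
  rw [pow_succ, complexRoot_sq, complexRoot]
  apply Complex.ext
  · simp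
    linear_combination realRoot_cubed + realRoot * imRoot_sq
  · simp
    ring

/-- The real embedding of `ℤ[θ]`. -/
noncomputable def realPlace : ThetaRing ℤ →+* ℝ := eval realRoot realRoot_cubed

/-- One of the two nonreal embeddings of `ℤ[θ]`. -/
noncomputable def complexPlace : ThetaRing ℤ →+* ℂ := eval complexRoot complexRoot_cubed

theorem realPlace_apply (a : ThetaRing ℤ) :
    realPlace a = a.u + a.v * realRoot + a.w * realRoot ^ 2 := rfl

theorem re_complexPlace (a : ThetaRing ℤ) :
    (complexPlace a).re = a.u - a.v * realRoot / 2 + a.w * (18 - realRoot ^ 2 / 2) := by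
  rw [complexPlace, eval_apply, complexRoot_sq, complexRoot]
  simp
  ring

theorem im_complexPlace (a : ThetaRing ℤ) :
    (complexPlace a).im = imRoot * (a.v - realRoot * a.w) := by
  rw [complexPlace, eval_apply, complexRoot_sq, complexRoot]
  simp
  ring

theorem norm_complexPlace_sq (a : ThetaRing ℤ) :
    ‖complexPlace a‖ ^ 2 = (complexPlace a).re ^ 2 + (complexPlace a).im ^ 2 := by
  rw [Complex.sq_norm, Complex.normSq_apply]
  ring

theorem norm_xi_eq_realPlace_mul (c e : ℤ) :
    ((norm (xi c e) : ℤ) : ℝ) = realPlace (xi c e) * ‖complexPlace (xi c e)‖ ^ 2 := by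
  rw [norm_complexPlace_sq, re_complexPlace, im_complexPlace, mul_pow, imRoot_sq, norm_xi,
    realPlace_apply]
  simp only [xi]
  push_cast
  linear_combination (e : ℝ) ^ 6 * realRoot_cubed

/-- The embeddings of `ℤ[θ]` restricted to the lattice of the points `latticePoint d t k`, as a
matrix acting on `k`. -/
noncomputable def placeMatrix (d t : ℤ) : Matrix (Fin 3) (Fin 3) ℝ :=
  !![(d : ℝ), realRoot - t, realRoot ^ 2 - t ^ 2;
    (d : ℝ), -realRoot / 2 - t, 18 - realRoot ^ 2 / 2 - t ^ 2;
    0, imRoot, -realRoot * imRoot]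

theorem placeMatrix_mulVec (d t : ℤ) (k : Fin 3 → ℤ) :
    (placeMatrix d t).mulVec (fun j ↦ (k j : ℝ)) =
      ![realPlace (latticePoint d t k), (complexPlace (latticePoint d t k)).re,
        (complexPlace (latticePoint d t k)).im] := by
  ext i
  fin_cases i <;>
    simp [placeMatrix, realPlace_apply, re_complexPlace, im_complexPlace, latticePoint,
      Matrix.mulVec, dotProduct, Fin.sum_univ_three] <;> ring

theorem abs_det_placeMatrix (d t : ℤ) :
    |(placeMatrix d t).det| = |(d : ℝ)| * (imRoot * (3 * realRoot ^ 2 - 18)) := by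
  have hpos : 0 < imRoot * (3 * realRoot ^ 2 - 18) :=
    mul_pos imRoot_pos (by linarith [lt_realRoot_sq])
  have hdet : (placeMatrix d t).det = d * (imRoot * (3 * realRoot ^ 2 - 18)) := by
    rw [placeMatrix, Matrix.det_fin_three]
    simp
    ring
  rw [hdet, abs_mul, abs_of_pos hpos]

theorem imRoot_mul_lt : imRoot * (3 * realRoot ^ 2 - 18) < 171.879616 := by
  have him : imRoot < 2.2821 :=
    lt_of_pow_lt_pow_left₀ 2 (by norm_num) (by linarith [imRoot_sq, realRoot_sq_lt])
  calc imRoot * (3 * realRoot ^ 2 - 18) < 2.2821 * 74.832 :=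
        mul_lt_mul'' him (by linarith [realRoot_sq_lt]) imRoot_pos.le
          (by linarith [lt_realRoot_sq])
    _ < 171.879616 := by norm_num

theorem exists_latticePoint_places_lt {d t : ℤ} (hd : d ≠ 0) {A B : ℝ} (hA : 0 < A) (hB : 0 < B)
    (h : 171.879616 * |(d : ℝ)| ≤ A * B ^ 2) :
    ∃ k, latticePoint d t k ≠ 0 ∧ |realPlace (latticePoint d t k)| < A ∧
      |(complexPlace (latticePoint d t k)).re| < B ∧
      |(complexPlace (latticePoint d t k)).im| < B := by
  have hd' : 0 < |(d : ℝ)| := abs_pos.2 (by exact_mod_cast hd)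
  have hdet : (placeMatrix d t).det ≠ 0 := by
    rw [← abs_pos, abs_det_placeMatrix]
    exact mul_pos hd' (mul_pos imRoot_pos (by linarith [lt_realRoot_sq]))
  have hlt : |(placeMatrix d t).det| < ∏ i, ![A, B, B] i := by
    rw [abs_det_placeMatrix, Fin.prod_univ_three]
    calc |(d : ℝ)| * (imRoot * (3 * realRoot ^ 2 - 18)) < |(d : ℝ)| * 171.879616 :=
          mul_lt_mul_of_pos_left imRoot_mul_lt hd'
      _ ≤ A * B ^ 2 := by rwa [mul_comm]
      _ = A * B * B := by ring
  have hpos : ∀ i, 0 < ![A, B, B] i := by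
    intro i
    fin_cases i <;> assumption
  obtain ⟨k, hk, hkR⟩ := exists_int_ne_zero_abs_mulVec_lt hdet hpos hlt
  rw [placeMatrix_mulVec] at hkR
  exact ⟨k, latticePoint_ne_zero hd hk, hkR 0, hkR 1, hkR 2⟩

theorem places_lt_of_sq_eq_mul {α β ξ : ThetaRing ℤ} (h : β ^ 2 = α * ξ) (hξ : 0 < realPlace ξ)
    (hξ' : 0 < ‖complexPlace ξ‖) (hβ : |realPlace β| < 5.56 * √(realPlace ξ))
    (hre : |(complexPlace β).re| < 5.56 * √‖complexPlace ξ‖)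
    (him : |(complexPlace β).im| < 5.56 * √‖complexPlace ξ‖) :
    0 ≤ realPlace α ∧ realPlace α < 30.92 ∧ ‖complexPlace α‖ ^ 2 < 3825 := by
  have hreal : realPlace α * realPlace ξ = realPlace β ^ 2 := by rw [← map_mul, ← h, map_pow]
  have hcomplex : ‖complexPlace α‖ * ‖complexPlace ξ‖ = ‖complexPlace β‖ ^ 2 := by
    rw [← norm_mul, ← map_mul, ← h, map_pow, norm_pow]
  rw [← sq_lt_sq₀ (abs_nonneg _) (by positivity), sq_abs, mul_pow, Real.sq_sqrt hξ.le] at hβ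
  rw [← sq_lt_sq₀ (abs_nonneg _) (by positivity), sq_abs, mul_pow, Real.sq_sqrt hξ'.le] at hre him
  have hα : ‖complexPlace α‖ < 61.8272 := by
    refine lt_of_mul_lt_mul_right ?_ hξ'.le
    rw [hcomplex, norm_complexPlace_sq]
    linarith
  refine ⟨nonneg_of_mul_nonneg_left (hreal ▸ sq_nonneg _) hξ,
    lt_of_mul_lt_mul_right (by linarith) hξ.le, ?_⟩
  nlinarith [norm_nonneg (complexPlace α)]

theorem exists_sq_eq_mul_xi_of_isCoprime {c d e : ℤ} (hce : IsCoprime c e) (hd : d ≠ 0)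
    (h : d ^ 2 = norm (xi c e)) :
    ∃ β α, β ≠ 0 ∧ β ^ 2 = α * xi c e ∧ 0 ≤ realPlace α ∧ realPlace α < 30.92 ∧
      ‖complexPlace α‖ ^ 2 < 3825 := by
  obtain ⟨t, ht⟩ := exists_latticePoint_sq_eq_mul_xi hce hd h
  have hprod := norm_xi_eq_realPlace_mul c e
  rw [← h, Int.cast_pow] at hprod
  set ξ := xi c e
  have hd2 : 0 < (d : ℝ) ^ 2 := by positivity
  have hξ' : 0 < ‖complexPlace ξ‖ := by
    refine (norm_nonneg _).lt_of_ne' fun h0 ↦ hd2.ne' ?_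
    rw [hprod, h0]
    ring
  have hξ : 0 < realPlace ξ := pos_of_mul_pos_left (hprod ▸ hd2) (sq_nonneg _)
  have hbox : 171.879616 * |(d : ℝ)| ≤
      5.56 * √(realPlace ξ) * (5.56 * √‖complexPlace ξ‖) ^ 2 := by
    have habs : |(d : ℝ)| = √(realPlace ξ) * ‖complexPlace ξ‖ := by
      rw [← Real.sqrt_sq_eq_abs, hprod, Real.sqrt_mul hξ.le, Real.sqrt_sq hξ'.le]
    rw [mul_pow, Real.sq_sqrt hξ'.le, habs]
    exact le_of_eq (by ring)
  obtain ⟨k, hk, hβ, hre, him⟩ :=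
    exists_latticePoint_places_lt (t := t) hd (by positivity) (by positivity) hbox
  obtain ⟨α, hα⟩ := ht k
  exact ⟨_, α, hk, hα, places_lt_of_sq_eq_mul hα hξ hξ' hβ hre him⟩

end ThetaRing

theorem abs_mul_le_of_abs_le {x y b δ : ℝ} (hx : |x| ≤ b) (hy : |y| ≤ δ) : |x * y| ≤ b * δ := by
  rw [abs_mul]
  exact mul_le_mul hx hy (abs_nonneg _) ((abs_nonneg _).trans hx)

theorem add_sq_le_of_abs_le {x y b δ : ℝ} (hx : |x| ≤ b) (hy : |y| ≤ δ) :
    (x + y) ^ 2 ≤ x ^ 2 + 2 * (b * δ) + δ ^ 2 := by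
  have hxy := (abs_le.1 (abs_mul_le_of_abs_le hx hy)).2
  have hy2 := (sq_le_sq₀ (abs_nonneg _) ((abs_nonneg _).trans hy)).2 hy
  rw [sq_abs] at hy2
  linarith

namespace ThetaRing

theorem abs_mul_realRoot_sub_le {x b : ℝ} (hx : |x| ≤ b) :
    |x * (realRoot - 5.5627)| ≤ b * 0.00003 :=
  abs_mul_le_of_abs_le hx (abs_le.2 ⟨by linarith [lt_realRoot], by linarith [realRoot_lt]⟩)

theorem abs_mul_realRoot_sq_sub_le {x b : ℝ} (hx : |x| ≤ b) :
    |x * (realRoot ^ 2 - 30.9434)| ≤ b * 0.0002 :=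
  abs_mul_le_of_abs_le hx (abs_le.2 ⟨by linarith [lt_realRoot_sq], by linarith [realRoot_sq_lt]⟩)

section Bounds

variable {a : ThetaRing ℤ}

theorem quadratic_lt_of_norm_complexPlace (h : ‖complexPlace a‖ ^ 2 < 3825) :
    (complexPlace a).re ^ 2 + 5.2074 * (a.v - realRoot * a.w) ^ 2 < 3825 := by
  rw [norm_complexPlace_sq, im_complexPlace, mul_pow, imRoot_sq] at h
  nlinarith [lt_realRoot_sq, sq_nonneg (a.v - realRoot * a.w)]

theorem abs_re_complexPlace_lt (h : ‖complexPlace a‖ ^ 2 < 3825) :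
    |(complexPlace a).re| < 61.85 :=
  abs_lt_of_sq_lt_sq
    (by linarith [quadratic_lt_of_norm_complexPlace h, sq_nonneg (a.v - realRoot * a.w)])
    (by norm_num)

theorem abs_v_sub_lt (h : ‖complexPlace a‖ ^ 2 < 3825) : |a.v - realRoot * a.w| < 27.105 :=
  abs_lt_of_sq_lt_sq
    (by linarith [quadratic_lt_of_norm_complexPlace h, sq_nonneg (complexPlace a).re])
    (by norm_num)

theorem abs_w_le_four (h₀ : 0 ≤ realPlace a) (h₁ : realPlace a < 30.92)
    (h₂ : ‖complexPlace a‖ ^ 2 < 3825) : |a.w| ≤ 4 := by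
  have hsum : realPlace a - (complexPlace a).re =
      3 * realRoot / 2 * (a.v - realRoot * a.w) + a.w * (3 * realRoot ^ 2 - 18) := by
    rw [realPlace_apply, re_complexPlace]
    ring
  have hre := abs_re_complexPlace_lt h₂
  have hv := abs_v_sub_lt h₂
  have hr₁ := lt_realRoot
  have hr₂ := realRoot_lt
  have hr₃ := lt_realRoot_sq
  have hw : |(a.w : ℝ)| < 5 := by
    generalize (a.v - realRoot * a.w : ℝ) = V at *
    rw [abs_lt] at *
    constructor <;> by_contra! hw <;> nlinarith
  exact Int.le_of_lt_add_one (by exact_mod_cast hw)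

theorem abs_v_lt_fifty (h : ‖complexPlace a‖ ^ 2 < 3825) (hw : |(a.w : ℝ)| ≤ 4) :
    |(a.v : ℝ)| < 50 := by
  have hv := abs_v_sub_lt h
  have hr₁ := lt_realRoot
  have hr₂ := realRoot_lt
  rw [abs_lt] at *
  rw [abs_le] at hw
  constructor <;> nlinarith

theorem linear_bounds_of_places (h₀ : 0 ≤ realPlace a) (h₁ : realPlace a < 30.92)
    (h₂ : ‖complexPlace a‖ ^ 2 < 3825) (hw : |(a.w : ℝ)| ≤ 4) :
    -100 ≤ 10000 * a.u + 55627 * a.v + 309434 * a.w ∧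
      10000 * a.u + 55627 * a.v + 309434 * a.w ≤ 309300 := by
  obtain ⟨hv₁, hv₂⟩ := abs_le.1 (abs_mul_realRoot_sub_le (abs_v_lt_fifty h₂ hw).le)
  obtain ⟨hw₁, hw₂⟩ := abs_le.1 (abs_mul_realRoot_sq_sub_le hw)
  rw [realPlace_apply] at h₀ h₁
  have hlo : (-100 : ℝ) ≤ 10000 * a.u + 55627 * a.v + 309434 * a.w := by linarith
  have hhi : (10000 * a.u + 55627 * a.v + 309434 * a.w : ℝ) ≤ 309300 := by linarith
  exact ⟨by exact_mod_cast hlo, by exact_mod_cast hhi⟩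

theorem quadratic_bound_of_places (h : ‖complexPlace a‖ ^ 2 < 3825) (hw : |(a.w : ℝ)| ≤ 4) :
    (20000 * a.u - 55627 * a.v + 50566 * a.w) ^ 2 + 20 * (10000 * a.v - 55627 * a.w) ^ 2 ≤
      1532000000000 := by
  have hre₂ : |2 * (complexPlace a).re| ≤ 2 * 61.85 :=
    abs_mul_le_of_abs_le (abs_two).le (abs_re_complexPlace_lt h).le
  have hre := add_sq_le_of_abs_le hre₂
    ((abs_add_le _ _).trans (add_le_add (abs_mul_realRoot_sub_le (abs_v_lt_fifty h hw).le)
      (abs_mul_realRoot_sq_sub_le hw)))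
  have him := add_sq_le_of_abs_le (abs_v_sub_lt h).le (abs_mul_realRoot_sub_le hw)
  have hquad := quadratic_lt_of_norm_complexPlace h
  have hP : (20000 * a.u - 55627 * a.v + 50566 * a.w : ℝ) = 10000 * (2 * (complexPlace a).re +
      (a.v * (realRoot - 5.5627) + a.w * (realRoot ^ 2 - 30.9434))) := by
    rw [re_complexPlace]
    ring
  have hV : (10000 * a.v - 55627 * a.w : ℝ) =
      10000 * (a.v - realRoot * a.w + a.w * (realRoot - 5.5627)) := by ring
  have hbound : (20000 * a.u - 55627 * a.v + 50566 * a.w : ℝ) ^ 2 +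
      20 * (10000 * a.v - 55627 * a.w) ^ 2 ≤ 1532000000000 := by
    rw [hP, hV, mul_pow, mul_pow]
    linarith [sq_nonneg (a.v - realRoot * a.w)]
  exact_mod_cast hbound

end Bounds

/-- The residues modulo `8` of the products of a square with `xiAdj c e`, where `norm (xi c e)` is
an odd square. -/
def sqClassesMod8 : List (ThetaRing (ZMod 8)) :=
  [⟨0, 0, 0⟩, ⟨1, 0, 0⟩, ⟨4, 0, 0⟩, ⟨7, 3, 0⟩, ⟨1, 4, 0⟩, ⟨4, 4, 0⟩, ⟨7, 7, 0⟩, ⟨0, 0, 1⟩,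
    ⟨1, 2, 1⟩, ⟨7, 3, 1⟩, ⟨4, 4, 1⟩, ⟨0, 6, 1⟩, ⟨1, 6, 1⟩, ⟨4, 6, 1⟩, ⟨7, 7, 1⟩, ⟨0, 0, 2⟩,
    ⟨4, 0, 2⟩, ⟨0, 4, 2⟩, ⟨0, 4, 3⟩, ⟨4, 6, 3⟩, ⟨0, 0, 4⟩, ⟨1, 0, 4⟩, ⟨4, 0, 4⟩, ⟨7, 3, 4⟩,
    ⟨1, 4, 4⟩, ⟨4, 4, 4⟩, ⟨7, 7, 4⟩, ⟨1, 2, 5⟩, ⟨7, 3, 5⟩, ⟨1, 6, 5⟩, ⟨7, 7, 5⟩, ⟨0, 0, 6⟩,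
    ⟨4, 0, 6⟩, ⟨0, 4, 6⟩, ⟨4, 0, 7⟩, ⟨0, 6, 7⟩]

theorem xiAdj_mem_of_norm_xi_eq_one {c e : ZMod 8} (h : norm (xi c e) = 1) :
    xiAdj c e ∈ [⟨1, 0, 0⟩, ⟨1, 4, 0⟩, ⟨7, 7, 1⟩] := by
  revert c e
  decide +kernel

theorem sq_mul_mem_sqClassesMod8 (p q s : ZMod 8) :
    ∀ x ∈ [⟨1, 0, 0⟩, ⟨1, 4, 0⟩, ⟨7, 7, 1⟩], (⟨p, q, s⟩ * ⟨p, q, s⟩ : ThetaRing (ZMod 8)) * x ∈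
      sqClassesMod8 := by
  revert p q s
  decide +kernel

theorem sq_eq_one_of_odd {d : ℤ} (hd : Odd d) : (d : ZMod 8) ^ 2 = 1 := by
  have h : ∀ k : ZMod 8, (2 * k + 1) ^ 2 = 1 := by decide
  obtain ⟨k, rfl⟩ := hd
  exact_mod_cast h k

theorem map_mem_sqClassesMod8 {c d e : ℤ} (hd : Odd d) (h : d ^ 2 = norm (xi c e))
    {α β : ThetaRing ℤ} (hαβ : β ^ 2 = α * xi c e) :
    map (Int.castRingHom (ZMod 8)) α ∈ sqClassesMod8 := by
  have hd8 : C ((d : ZMod 8) ^ 2) = 1 := by rw [sq_eq_one_of_odd hd, map_one]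
  have hnorm : norm (xi (c : ZMod 8) e) = 1 := by
    rw [← sq_eq_one_of_odd hd, norm_xi]
    rw [norm_xi] at h
    exact_mod_cast (congrArg (Int.cast : ℤ → ZMod 8) h).symm
  have hα : map (Int.castRingHom (ZMod 8)) α =
      map (Int.castRingHom (ZMod 8)) β ^ 2 * xiAdj (c : ZMod 8) e := by
    rw [← map_pow, hαβ, map_mul, map_xi, mul_assoc, eq_intCast, eq_intCast, xi_mul_xiAdj, hnorm,
      map_one, mul_one]
  rw [hα, sq]
  exact sq_mul_mem_sqClassesMod8 _ _ _ _ (xiAdj_mem_of_norm_xi_eq_one hnorm)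

/-- The values that the bounds at the two places and the conditions on the norm and modulo `8` leave
for the factor `α` in `β ^ 2 = α * xi c e`. -/
def descentCandidates : List (ThetaRing ℤ) :=
  [0, 1, ⟨4, 0, 0⟩, ⟨9, 0, 0⟩, ⟨16, 0, 0⟩, ⟨25, 0, 0⟩, ⟨36, 8, -2⟩, ⟨-12, 8, -1⟩, ⟨16, -8, 1⟩,
    ⟨9, -6, 1⟩, ⟨4, -4, 1⟩, ⟨1, -2, 1⟩, ⟨-39, 2, 1⟩, ⟨-48, -4, 3⟩, ⟨7, -5, 1⟩, ⟨-17, -1, 1⟩]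

theorem mem_descentCandidates_of_mem_Icc :
    ∀ w ∈ Finset.Icc (-4 : ℤ) 4,
      ∀ v ∈ Finset.Icc ((55627 * w - 276768) / 10000) ((55627 * w + 276768) / 10000),
        ∀ u ∈ Finset.Icc ((-100 - 55627 * v - 309434 * w) / 10000)
          ((309300 - 55627 * v - 309434 * w) / 10000),
          (20000 * u - 55627 * v + 50566 * w) ^ 2 + 20 * (10000 * v - 55627 * w) ^ 2 ≤
              1532000000000 ∧ IsSquare (norm (⟨u, v, w⟩ : ThetaRing ℤ)) ∧
            map (Int.castRingHom (ZMod 8)) ⟨u, v, w⟩ ∈ sqClassesMod8 →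
              (⟨u, v, w⟩ : ThetaRing ℤ) ∈ descentCandidates := by
  decide +kernel

theorem mem_descentCandidates {a : ThetaRing ℤ} (h₀ : 0 ≤ realPlace a) (h₁ : realPlace a < 30.92)
    (h₂ : ‖complexPlace a‖ ^ 2 < 3825) (hsq : IsSquare (norm a))
    (hmod : map (Int.castRingHom (ZMod 8)) a ∈ sqClassesMod8) : a ∈ descentCandidates := by
  have hw₄ := abs_w_le_four h₀ h₁ h₂
  have hw : |(a.w : ℝ)| ≤ 4 := by exact_mod_cast hw₄
  obtain ⟨hlo, hhi⟩ := linear_bounds_of_places h₀ h₁ h₂ hw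
  have hquad := quadratic_bound_of_places h₂ hw
  have hv : |10000 * a.v - 55627 * a.w| ≤ 276768 := by
    refine abs_le_of_sq_le_sq ?_ (by norm_num)
    linarith [sq_nonneg (20000 * a.u - 55627 * a.v + 50566 * a.w)]
  rw [abs_le] at hw₄ hv
  refine mem_descentCandidates_of_mem_Icc a.w ?_ a.v ?_ a.u ?_ ⟨hquad, hsq, hmod⟩ <;>
    rw [Finset.mem_Icc] <;> omega

theorem isSquare_norm_of_sq_eq_mul {d : ℤ} (hd : d ≠ 0) {α β ξ : ThetaRing ℤ}
    (hξ : d ^ 2 = norm ξ) (h : β ^ 2 = α * ξ) : IsSquare (norm α) := by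
  have hnorm : norm β ^ 2 = d ^ 2 * norm α := by
    rw [hξ, ← map_pow, h, map_mul, mul_comm]
  obtain ⟨k, hk⟩ := (Int.pow_dvd_pow_iff two_ne_zero).1 (Dvd.intro _ hnorm.symm)
  refine ⟨k, mul_left_cancel₀ (pow_ne_zero 2 hd) ?_⟩
  rw [← hnorm, hk]
  ring

theorem exists_descentCandidate {c d e : ℤ} (hce : IsCoprime c e) (hd : Odd d)
    (h : d ^ 2 = norm (xi c e)) :
    ∃ α ∈ descentCandidates, ∃ β, β ≠ 0 ∧ β ^ 2 = α * xi c e := by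
  have hd0 : d ≠ 0 := by
    rintro rfl
    exact Int.not_odd_zero hd
  obtain ⟨β, α, hβ, hαβ, h₀, h₁, h₂⟩ := exists_sq_eq_mul_xi_of_isCoprime hce hd0 h
  exact ⟨α, mem_descentCandidates h₀ h₁ h₂ (isSquare_norm_of_sq_eq_mul hd0 h hαβ)
    (map_mem_sqClassesMod8 hd h hαβ), β, hβ, hαβ⟩

theorem dvd_of_mul_eq_of_sq_sub_eq {ℓ s k : ℤ} (hℓ : Prime ℓ) (hk : ¬ℓ ∣ k)
    (hs : ¬ℓ ∣ 3 * (24 - s ^ 2)) {a b w e : ℤ} (hmul : b * (2 * a + s * b) = ℓ * (-k * w ^ 2))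
    (hsq : a ^ 2 - (s ^ 2 - 18) * b ^ 2 = ℓ * (k * (-e ^ 2 - 2 * b * w + 2 * s * w ^ 2))) :
    ℓ ∣ a ∧ ℓ ∣ b ∧ ℓ ∣ w ∧ ℓ ∣ e := by
  have hb : ℓ ∣ b := by
    rcases hℓ.dvd_or_dvd (Dvd.intro _ hmul.symm) with hb | ⟨m, hm⟩
    · exact hb
    · have hdvd : ℓ ∣ 3 * (24 - s ^ 2) * b ^ 2 :=
        ⟨4 * (k * (-e ^ 2 - 2 * b * w + 2 * s * w ^ 2)) - m * (2 * a - s * b), by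
          linear_combination 4 * hsq - (2 * a - s * b) * hm⟩
      exact hℓ.dvd_of_dvd_pow ((hℓ.dvd_or_dvd hdvd).resolve_left hs)
  have ha : ℓ ∣ a := by
    refine hℓ.dvd_of_dvd_pow (n := 2) ?_
    rw [sub_eq_iff_eq_add.1 hsq]
    exact dvd_add (Dvd.intro _ rfl) ((hb.pow two_ne_zero).mul_left _)
  refine ⟨ha, hb, ?_⟩
  obtain ⟨a, rfl⟩ := ha
  obtain ⟨b, rfl⟩ := hb
  have hw : ℓ ∣ w := by
    have hdvd : ℓ ∣ k * w ^ 2 :=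
      ⟨-b * (2 * a + s * b), mul_left_cancel₀ hℓ.ne_zero (by linear_combination hmul)⟩
    exact hℓ.dvd_of_dvd_pow ((hℓ.dvd_or_dvd hdvd).resolve_left hk)
  refine ⟨hw, ?_⟩
  obtain ⟨w, rfl⟩ := hw
  have hdvd : ℓ ∣ k * (e ^ 2 + ℓ * (2 * ℓ * b * w - 2 * s * ℓ * w ^ 2)) :=
    ⟨(s ^ 2 - 18) * b ^ 2 - a ^ 2, mul_left_cancel₀ hℓ.ne_zero (by linear_combination hsq)⟩
  have he2 := (hℓ.dvd_or_dvd hdvd).resolve_left hk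
  exact hℓ.dvd_of_dvd_pow ((dvd_add_left (Dvd.intro _ rfl)).1 he2)

-- The ideal `(ℓ, θ + s)` divides `⟨s ^ 2 - 18, -s, 1⟩ = (s ^ 3 - 18 * s + 72) / (θ + s)` to an odd
-- power, which shows in the congruences satisfied by the coordinates of `β`.
theorem sq_ne_mul_xi {ℓ s k : ℤ} (hℓ : Prime ℓ) (hF : s ^ 3 - 18 * s + 72 = ℓ * k) (hk : ¬ℓ ∣ k)
    (hs : ¬ℓ ∣ 3 * (24 - s ^ 2)) {c e : ℤ} (hce : IsCoprime c e) (β : ThetaRing ℤ) :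
    β ^ 2 ≠ ⟨s ^ 2 - 18, -s, 1⟩ * xi c e := by
  obtain ⟨u, v, w⟩ := β
  intro h
  simp only [sq, mul_def, xi, ThetaRing.mk.injEq] at h
  obtain ⟨h0, h1, h2⟩ := h
  obtain ⟨a, rfl⟩ : ∃ a, u = a + (s ^ 2 - 18) * w := ⟨u - (s ^ 2 - 18) * w, by ring⟩
  obtain ⟨b, rfl⟩ : ∃ b, v = b - s * w := ⟨v + s * w, by ring⟩
  obtain ⟨-, hb, hw, he⟩ := dvd_of_mul_eq_of_sq_sub_eq (a := a) (b := b) (w := w) (e := e) hℓ hk hs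
    (by linear_combination h1 + s * h2 - w ^ 2 * hF)
    (by linear_combination h0 - (s ^ 2 - 18) * h2 + (-e ^ 2 - 2 * b * w + 2 * s * w ^ 2) * hF)
  have hc : ℓ ∣ c := by
    have hc_eq : c = b * (b - 2 * s * w) + w * (2 * a + 2 * (s ^ 2 - 18) * w + s ^ 2 * w + 18 * w) -
        e * (s * e) := by linear_combination -h2
    rw [hc_eq]
    exact dvd_sub (dvd_add (hb.mul_right _) (hw.mul_right _)) (he.mul_right _)
  exact hℓ.not_isUnit (hce.isUnit_of_dvd' hc he)

/-- Inverse square roots in `ℚ(θ)` of the members of `descentCandidates` that are squares there. -/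
def inverseRoots : List (ThetaRing ℚ) :=
  [1, ⟨1 / 2, 0, 0⟩, ⟨1 / 3, 0, 0⟩, ⟨1 / 4, 0, 0⟩, ⟨1 / 5, 0, 0⟩, ⟨0, 1 / 24, 0⟩,
    ⟨1 / 10, 1 / 30, 1 / 60⟩, ⟨-1 / 40, 1 / 20, 1 / 80⟩, ⟨-1 / 11, 1 / 33, 1 / 99⟩,
    ⟨-7 / 50, 1 / 50, 1 / 100⟩, ⟨-17 / 89, 1 / 89, 1 / 89⟩, ⟨1 / 5, 1 / 15, 0⟩,
    ⟨7 / 44, 1 / 33, -1 / 264⟩]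

theorem exists_inverseRoot : ∀ α ∈ descentCandidates,
    (∃ κ ∈ inverseRoots, κ * κ * map (Int.castRingHom ℚ) α = 1) ∨
      α = 0 ∨ α = ⟨7, -5, 1⟩ ∨ α = ⟨-17, -1, 1⟩ := by
  decide +kernel

theorem isSquare_xi {c d e : ℤ} (hce : IsCoprime c e) (hd : Odd d) (h : d ^ 2 = norm (xi c e)) :
    IsSquare (xi (c : ℚ) e) := by
  obtain ⟨α, hα, β, hβ, hαβ⟩ := exists_descentCandidate hce hd h
  rcases exists_inverseRoot α hα with ⟨κ, -, hκ⟩ | rfl | rfl | rfl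
  · refine ⟨κ * map (Int.castRingHom ℚ) β, ?_⟩
    have hβα := congrArg (map (Int.castRingHom ℚ)) hαβ
    rw [map_pow, map_mul, map_xi, eq_intCast, eq_intCast] at hβα
    linear_combination (-xi (c : ℚ) e) * hκ - κ ^ 2 * hβα
  · rw [zero_mul] at hαβ
    exact (hβ (eq_zero_of_sq_eq_zero hαβ)).elim
  · exact (sq_ne_mul_xi (ℓ := 107) (s := 5) (k := 1) (by norm_num) (by norm_num) (by norm_num)
      (by norm_num) hce β hαβ).elim
  · exact (sq_ne_mul_xi (ℓ := 5) (s := 1) (k := 11) (by norm_num) (by norm_num) (by norm_num)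
      (by norm_num) hce β hαβ).elim

-- If `(u + v * θ + w * θ ^ 2) ^ 2 = c - e ^ 2 * θ`, then `x = v / w` and `y = e / w`.
theorem exists_tangent_of_isSquare_xi {c e : ℚ} (he : e ≠ 0) (h : IsSquare (xi c e)) :
    ∃ x y : ℚ, y ^ 2 = x ^ 3 - 18 * x - 72 ∧
      c / e ^ 2 = ((3 * x ^ 2 - 18) / (2 * y)) ^ 2 - 2 * x := by
  obtain ⟨⟨u, v, w⟩, h⟩ := h
  simp only [xi, mul_def, ThetaRing.mk.injEq] at h
  obtain ⟨h0, h1, h2⟩ := h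
  have hw : w ≠ 0 := by
    rintro rfl
    have hv : v = 0 := by simpa using h2
    exact he (by simpa [hv] using h1)
  obtain ⟨x, rfl⟩ : ∃ x, v = x * w := ⟨v / w, by field_simp⟩
  obtain rfl : u = -w * (x ^ 2 + 18) / 2 := mul_left_cancel₀ hw (by linear_combination -h2 / 2)
  have he2 : e ^ 2 = w ^ 2 * (x ^ 3 - 18 * x - 72) := by linear_combination -h1
  have hcubic := rat_cubic_ne_zero x
  refine ⟨x, e / w, ?_, ?_⟩
  · rw [div_pow, he2]
    field_simp
  · have hslope : ((3 * x ^ 2 - 18) / (2 * (e / w))) ^ 2 =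
        (3 * x ^ 2 - 18) ^ 2 * w ^ 2 / (4 * e ^ 2) := by
      field_simp
      ring
    rw [hslope, he2, h0]
    generalize hF : x ^ 3 - 18 * x - 72 = F at hcubic
    field_simp
    rw [← hF]
    ring

end ThetaRing

section Curve

open WeierstrassCurve WeierstrassCurve.Affine

/-- The elliptic curve `Y ^ 2 = X ^ 3 - 18 * X - 72`. -/
abbrev curve : Affine ℚ := (⟨0, 0, 0, -18, -72⟩ : WeierstrassCurve ℚ)

/-- `P` is the affine point `(X, Y)`. -/
def HasCoords (P : curve.Point) (X Y : ℚ) : Prop :=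
  ∃ h : curve.Nonsingular X Y, P = .some X Y h

variable {P Q : curve.Point} {X Y X₁ Y₁ X₂ Y₂ : ℚ}

theorem curve_equation_iff : curve.Equation X Y ↔ Y ^ 2 = X ^ 3 - 18 * X - 72 := by
  rw [equation_iff]
  constructor <;> intro h <;> linear_combination h

theorem curve_nonsingular (h : Y ^ 2 = X ^ 3 - 18 * X - 72) : curve.Nonsingular X Y :=
  (equation_iff_nonsingular_of_Δ_ne_zero (by
    norm_num [WeierstrassCurve.Δ, b₂, b₄, b₆, b₈])).1 (curve_equation_iff.2 h)

/-- The point `(6, 6)`, which generates the group of rational points. -/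
def generator : curve.Point :=
  .some 6 6 (curve_nonsingular (by norm_num))

theorem hasCoords_generator : HasCoords generator 6 6 :=
  ⟨_, rfl⟩

theorem eq_zero_or_exists_hasCoords (P : curve.Point) : P = 0 ∨ ∃ X Y, HasCoords P X Y := by
  cases P with
  | zero => exact .inl rfl
  | some X Y h => exact .inr ⟨X, Y, h, rfl⟩

namespace HasCoords

theorem equation (h : HasCoords P X Y) : Y ^ 2 = X ^ 3 - 18 * X - 72 :=
  curve_equation_iff.1 h.choose.1

theorem y_ne_zero (h : HasCoords P X Y) : Y ≠ 0 := by
  rintro rfl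
  exact rat_cubic_ne_zero X (by linear_combination -h.equation)

theorem eq_or_eq_neg (hP : HasCoords P X Y₁) (hQ : HasCoords Q X Y₂) : P = Q ∨ P = -Q := by
  obtain ⟨_, rfl⟩ := hP
  obtain ⟨_, rfl⟩ := hQ
  exact Point.X_eq_iff.1 rfl

theorem inj (h₁ : HasCoords P X₁ Y₁) (h₂ : HasCoords P X₂ Y₂) : X₁ = X₂ ∧ Y₁ = Y₂ := by
  obtain ⟨_, rfl⟩ := h₁
  obtain ⟨_, h⟩ := h₂
  exact (Point.some.injEq ..).mp h

theorem neg (h : HasCoords P X Y) : HasCoords (-P) X (-Y) := by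
  obtain ⟨h, rfl⟩ := h
  have hY : curve.negY X Y = -Y := by simp [negY]
  exact ⟨hY ▸ (nonsingular_neg X Y).2 h, by simp [Point.neg_some]⟩

theorem add_of_slope_eq (hP : HasCoords P X₁ Y₁) (hQ : HasCoords Q X₂ Y₂)
    (hne : ¬(X₁ = X₂ ∧ Y₁ = curve.negY X₂ Y₂)) {l : ℚ} (hl : curve.slope X₁ X₂ Y₁ Y₂ = l) :
    HasCoords (P + Q) (l ^ 2 - X₁ - X₂) (l * (X₁ - (l ^ 2 - X₁ - X₂)) - Y₁) := by
  obtain ⟨hP, rfl⟩ := hP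
  obtain ⟨hQ, rfl⟩ := hQ
  have hX : curve.addX X₁ X₂ l = l ^ 2 - X₁ - X₂ := by simp [addX]
  have hY : curve.addY X₁ X₂ Y₁ l = l * (X₁ - (l ^ 2 - X₁ - X₂)) - Y₁ := by
    simp only [addY, negY, negAddY, hX]
    ring
  rw [← hY, ← hX, ← hl]
  exact ⟨nonsingular_add hP hQ hne, Point.add_some hne⟩

theorem add (hP : HasCoords P X₁ Y₁) (hQ : HasCoords Q X₂ Y₂) (hX : X₁ ≠ X₂) {l : ℚ}
    (hl : l * (X₁ - X₂) = Y₁ - Y₂) :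
    HasCoords (P + Q) (l ^ 2 - X₁ - X₂) (l * (X₁ - (l ^ 2 - X₁ - X₂)) - Y₁) :=
  hP.add_of_slope_eq hQ (fun h ↦ hX h.1) <| by
    rw [slope_of_X_ne hX, div_eq_iff (sub_ne_zero.2 hX), hl]

theorem add_self (hP : HasCoords P X Y) {l : ℚ} (hl : l * (2 * Y) = 3 * X ^ 2 - 18) :
    HasCoords (P + P) (l ^ 2 - X - X) (l * (X - (l ^ 2 - X - X)) - Y) := by
  have hY : Y - curve.negY X Y = 2 * Y := by
    simp only [negY]
    ring
  have hY0 : Y - curve.negY X Y ≠ 0 := hY ▸ mul_ne_zero two_ne_zero hP.y_ne_zero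
  refine hP.add_of_slope_eq hP (fun h ↦ sub_ne_zero.1 hY0 h.2) ?_
  rw [slope_of_Y_ne rfl (sub_ne_zero.1 hY0), div_eq_iff hY0, hY, hl]
  ring

theorem exists_eq_add_self_of_tangent (hP : HasCoords P X₂ Y₂) (h : Y ^ 2 = X ^ 3 - 18 * X - 72)
    (hX : X₂ = ((3 * X ^ 2 - 18) / (2 * Y)) ^ 2 - 2 * X) : ∃ Q, P = Q + Q ∧ Q ≠ 0 := by
  obtain ⟨Q, hQ⟩ : ∃ Q, HasCoords Q X Y := ⟨_, curve_nonsingular h, rfl⟩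
  have hY := hQ.y_ne_zero
  have hQQ := hQ.add_self (l := (3 * X ^ 2 - 18) / (2 * Y)) (by field_simp)
  rw [sub_sub, ← two_mul X, ← hX] at hQQ
  have hQ0 : Q ≠ 0 := by
    rintro rfl
    obtain ⟨_, h⟩ := hQ
    exact Point.some_ne_zero _ h.symm
  rcases hP.eq_or_eq_neg hQQ with rfl | rfl
  · exact ⟨Q, rfl, hQ0⟩
  · exact ⟨-Q, neg_add Q Q, neg_ne_zero.2 hQ0⟩

end HasCoords

/-- The affine point `P` is `(c / e ^ 2, d / e ^ 3)` in lowest terms with `0 < e`. -/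
def HasIntCoords (P : curve.Point) (c d e : ℤ) : Prop :=
  0 < e ∧ IsCoprime c e ∧ HasCoords P (c / e ^ 2) (d / e ^ 3)

theorem exists_den_sq {n q m : ℤ} (hq : 0 < q) (hnq : IsCoprime n q)
    (h : q * (n ^ 3 - 18 * n * q ^ 2 - 72 * q ^ 3) = m ^ 2) : ∃ e, 0 < e ∧ q = e ^ 2 := by
  have hcop : IsCoprime q (n ^ 3 - 18 * n * q ^ 2 - 72 * q ^ 3) := by
    have h_eq : n ^ 3 - 18 * n * q ^ 2 - 72 * q ^ 3 = n ^ 3 + q * (-18 * n * q - 72 * q ^ 2) := by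
      ring
    exact h_eq ▸ IsCoprime.add_mul_left_right hnq.symm.pow_right _
  obtain ⟨e, rfl | rfl⟩ := Int.sq_of_isCoprime hcop h
  · exact ⟨|e|, abs_pos.2 (pow_ne_zero_iff two_ne_zero |>.1 hq.ne'), (sq_abs e).symm⟩
  · nlinarith [sq_nonneg e]

theorem exists_hasIntCoords_of_hasCoords (h : HasCoords P X Y) : ∃ c d e, HasIntCoords P c d e := by
  have hq : (0 : ℤ) < X.den := mod_cast X.den_pos
  have hnq : IsCoprime X.num X.den := Int.isCoprime_iff_nat_coprime.2 X.reduced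
  have hsq : (Y * (X.den : ℤ) ^ 2) ^ 2 =
      ((X.den * (X.num ^ 3 - 18 * X.num * X.den ^ 2 - 72 * X.den ^ 3) : ℤ) : ℚ) := by
    have hX : X * X.den = X.num := Rat.mul_den_eq_num X
    push_cast
    rw [mul_pow, h.equation, ← hX]
    ring
  obtain ⟨m, hm⟩ : ∃ m : ℤ, m = Y * (X.den : ℤ) ^ 2 :=
    IsIntegrallyClosed.isIntegral_iff.1 <| IsIntegral.of_pow (n := 2) two_pos <|
      hsq ▸ isIntegral_algebraMap
  rw [← hm] at hsq
  have hsqZ : (X.den * (X.num ^ 3 - 18 * X.num * X.den ^ 2 - 72 * X.den ^ 3) : ℤ) = m ^ 2 :=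
    mod_cast hsq.symm
  obtain ⟨e, he, hqe⟩ := exists_den_sq hq hnq hsqZ
  obtain ⟨d, rfl⟩ : e ∣ m := by
    rw [← Int.pow_dvd_pow_iff two_ne_zero, ← hsqZ, hqe]
    exact dvd_mul_right _ _
  have he0 : (e : ℚ) ≠ 0 := mod_cast he.ne'
  refine ⟨X.num, d, e, he, (IsCoprime.pow_right_iff two_pos).1 (hqe ▸ hnq), ?_⟩
  convert h using 1
  · rw [← Int.cast_pow, ← hqe]
    exact Rat.num_div_den X
  · rw [hqe] at hm
    push_cast at hm
    rw [div_eq_iff (pow_ne_zero 3 he0)]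
    exact mul_left_cancel₀ he0 (by linear_combination hm)

theorem eq_zero_or_exists_hasIntCoords (P : curve.Point) :
    P = 0 ∨ ∃ c d e, HasIntCoords P c d e := by
  rcases eq_zero_or_exists_hasCoords P with rfl | ⟨X, Y, h⟩
  · exact .inl rfl
  · exact .inr (exists_hasIntCoords_of_hasCoords h)

/-- The numerator of `X(2 • P)` where `X(P) = a / b`. -/
def dupNum {R : Type*} [CommRing R] (a b : R) : R :=
  a ^ 4 + 36 * a ^ 2 * b ^ 2 + 576 * a * b ^ 3 + 324 * b ^ 4

/-- The denominator of `X(2 • P)` where `X(P) = a / b`; it need not be coprime to `dupNum a b`. -/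
def dupDen {R : Type*} [CommRing R] (a b : R) : R :=
  4 * b * (a ^ 3 - 18 * a * b ^ 2 - 72 * b ^ 3)

namespace HasIntCoords

variable {a b c d e f : ℤ}

theorem sq_eq (h : HasIntCoords P c d e) : d ^ 2 = c ^ 3 - 18 * c * e ^ 4 - 72 * e ^ 6 := by
  obtain ⟨he, -, h⟩ := h
  have he0 : (e : ℚ) ≠ 0 := mod_cast he.ne'
  have heq := h.equation
  field_simp at heq
  exact_mod_cast show (d : ℚ) ^ 2 = c ^ 3 - 18 * c * e ^ 4 - 72 * e ^ 6 by linear_combination heq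

theorem exists_eq_add_self_of_odd (h : HasIntCoords P c d e) (hd : Odd d) :
    ∃ Q a f b, HasIntCoords Q a f b ∧ P = Q + Q := by
  have hnorm : d ^ 2 = ThetaRing.norm (ThetaRing.xi c e) := by
    rw [h.sq_eq, ThetaRing.norm_xi]
  obtain ⟨x, y, hxy, hX⟩ := ThetaRing.exists_tangent_of_isSquare_xi (mod_cast h.1.ne')
    (ThetaRing.isSquare_xi h.2.1 hd hnorm)
  obtain ⟨Q, hPQ, hQ0⟩ := h.2.2.exists_eq_add_self_of_tangent hxy hX
  obtain ⟨a, f, b, hQ⟩ := (eq_zero_or_exists_hasIntCoords Q).resolve_left hQ0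
  exact ⟨Q, a, f, b, hQ, hPQ⟩

theorem duplication (hQ : HasIntCoords Q a f b) (hQQ : HasIntCoords (Q + Q) c d e) :
    c * dupDen a (b ^ 2) = e ^ 2 * dupNum a (b ^ 2) := by
  have hsq := congrArg (Int.cast : ℤ → ℚ) hQ.sq_eq
  obtain ⟨hb, -, hQ⟩ := hQ
  obtain ⟨he, -, hQQ⟩ := hQQ
  have hb0 : (b : ℚ) ≠ 0 := mod_cast hb.ne'
  have he0 : (e : ℚ) ≠ 0 := mod_cast he.ne'
  have hf0 : (f : ℚ) ≠ 0 := (div_ne_zero_iff.1 hQ.y_ne_zero).1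
  have hX := (hQQ.inj (hQ.add_self
    (l := (3 * (a : ℚ) ^ 2 - 18 * b ^ 4) / (2 * f * b)) (by field_simp))).1
  push_cast at hsq
  field_simp at hX
  rw [dupDen, dupNum]
  qify
  linear_combination hX + (-4 * c * b ^ 2 - 8 * a * e ^ 2) * hsq

theorem translation {c' d' e' : ℤ} (hP : HasIntCoords P c d e)
    (hPG : HasIntCoords (P + generator) c' d' e') (hc : c ≠ 6 * e ^ 2) :
    c' * (c - 6 * e ^ 2) ^ 2 =
      6 * (c ^ 2 + 3 * c * e ^ 2 - 2 * d * e - 42 * e ^ 4) * e' ^ 2 := by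
  have hsq := congrArg (Int.cast : ℤ → ℚ) hP.sq_eq
  obtain ⟨he, -, hP⟩ := hP
  obtain ⟨he', -, hPG⟩ := hPG
  have he0 : (e : ℚ) ≠ 0 := mod_cast he.ne'
  have he0' : (e' : ℚ) ≠ 0 := mod_cast he'.ne'
  have hc0 : (c : ℚ) - 6 * e ^ 2 ≠ 0 := mod_cast sub_ne_zero.2 hc
  have hne : (c : ℚ) / e ^ 2 ≠ 6 := by
    rwa [Ne, div_eq_iff (pow_ne_zero 2 he0), ← sub_eq_zero]
  have hX := (hPG.inj (hP.add hasCoords_generator hne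
    (l := (d - 6 * e ^ 3) / (e * (c - 6 * e ^ 2))) (by field_simp))).1
  push_cast at hsq
  field_simp at hX
  qify
  apply mul_left_cancel₀ (pow_ne_zero 2 he0)
  linear_combination hX + e' ^ 2 * hsq

end HasIntCoords

end Curve

section DuplicationHeight

section Archimedean

variable {K : Type*} [Field K] [LinearOrder K] [IsStrictOrderedRing K] {a b : K}

theorem pow_four_le_dupNum (ha : 0 ≤ a) (hb : 0 ≤ b) : a ^ 4 ≤ dupNum a b := by
  rw [dupNum, add_assoc, add_assoc, le_add_iff_nonneg_right]
  positivity

theorem four_mul_pow_four_le_neg_dupDen (hb : 0 ≤ b) (hab : |a| ≤ b) :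
    4 * b ^ 4 ≤ -dupDen a b := by
  obtain ⟨h₁, h₂⟩ := abs_le.1 hab
  have hcubic : a ^ 3 - 18 * a * b ^ 2 - 72 * b ^ 3 ≤ -b ^ 3 := by
    nlinarith [pow_nonneg hb 3, mul_nonneg (neg_le_iff_add_nonneg.1 h₁) (mul_nonneg hb hb),
      mul_nonneg (sub_nonneg.2 h₂) (sq_nonneg a),
      mul_nonneg (sub_nonneg.2 h₂) (neg_le_iff_add_nonneg.1 h₁)]
  have := mul_le_mul_of_nonneg_left hcubic hb
  rw [dupDen]
  linarith

theorem pow_four_le_dupNum_neg (hb : 0 ≤ b) (hab : 100 * b ≤ 13 * a) :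
    43 * a ^ 4 ≤ 100 * dupNum (-a) b := by
  obtain ⟨s, hs⟩ : ∃ s, s = 13 * a - 100 * b := ⟨_, rfl⟩
  have hs0 : 0 ≤ s := hs ▸ sub_nonneg.2 hab
  obtain rfl : a = (s + 100 * b) / 13 := by linear_combination -hs / 13
  rw [dupNum]
  nlinarith [pow_nonneg hs0 4, mul_nonneg (pow_nonneg hs0 3) hb,
    mul_nonneg (sq_nonneg s) (sq_nonneg b), mul_nonneg hs0 (pow_nonneg hb 3), pow_nonneg hb 4]

theorem pow_four_le_neg_dupDen_neg (ha : 0 ≤ a) (hb : 0 ≤ b) (hab : 13 * a ≤ 100 * b) :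
    43 * a ^ 4 ≤ 100 * -dupDen (-a) b := by
  have hcubic : 5 / 6 * a ^ 3 ≤ a ^ 3 - 18 * a * b ^ 2 + 72 * b ^ 3 := by
    nlinarith [mul_nonneg (by positivity : 0 ≤ a + 12 * b) (sq_nonneg (a - 6 * b))]
  have h₁ := mul_le_mul_of_nonneg_left hcubic hb
  have h₂ := mul_le_mul_of_nonneg_right hab (pow_nonneg ha 3)
  rw [dupDen]
  nlinarith [pow_nonneg ha 4]

theorem max_pow_four_le_dup (hb : 0 ≤ b) :
    43 * max |a| b ^ 4 ≤ 100 * max |dupNum a b| |dupDen a b| := by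
  have hnum : dupNum a b ≤ max |dupNum a b| |dupDen a b| := (le_abs_self _).trans (le_max_left _ _)
  have hden : -dupDen a b ≤ max |dupNum a b| |dupDen a b| :=
    (neg_le_abs _).trans (le_max_right _ _)
  rcases le_total |a| b with hab | hab
  · rw [max_eq_right hab]
    linarith [four_mul_pow_four_le_neg_dupDen hb hab, pow_nonneg hb 4]
  · rw [max_eq_left hab, (show Even 4 by decide).pow_abs]
    rcases le_total 0 a with ha | ha
    · linarith [pow_four_le_dupNum ha hb, pow_nonneg ha 4]
    · obtain ⟨α, rfl⟩ : ∃ α, a = -α := ⟨-a, (neg_neg a).symm⟩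
      rw [Even.neg_pow (by decide)]
      rcases le_total (100 * b) (13 * α) with h | h
      · linarith [pow_four_le_dupNum_neg hb h]
      · linarith [pow_four_le_neg_dupDen_neg (neg_nonpos.1 ha) hb h]

end Archimedean

section Cancellation

variable {a b g : ℤ}

theorem dvd_pow_mul_of_not_pow_succ_dvd {p n m : ℤ} (hp : Prime p) {k j : ℕ}
    (h : n ∣ p ^ k * m) (hn : ¬p ^ (j + 1) ∣ n) : n ∣ p ^ j * m := by
  obtain ⟨x, y, hx, hy, rfl⟩ := exists_dvd_and_dvd_of_dvd_mul h
  obtain ⟨i, -, hi⟩ := (dvd_prime_pow hp k).1 hx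
  have hij : i ≤ j := by
    by_contra! hij
    exact hn (((pow_dvd_pow p hij).trans hi.symm.dvd).mul_right y)
  exact mul_dvd_mul (hi.dvd.trans (pow_dvd_pow p hij)) hy

-- The two combinations are Bézout identities for the resultant of the duplication polynomials.
theorem dvd_resultant_of_dvd_dup (hab : IsCoprime a b) (hnum : g ∣ dupNum a b)
    (hden : g ∣ dupDen a b) : g ∣ 2 ^ 7 * (3 ^ 5 * 5) := by
  have ha : g ∣ 40 * a ^ 7 := by
    have h_eq : 40 * a ^ 7 =
        (40 * a ^ 3 + 8 * a ^ 2 * b - 596 * a * b ^ 2 - 2640 * b ^ 3) * dupNum a b -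
        (2 * a ^ 3 + 211 * a ^ 2 * b + 5208 * a * b ^ 2 + 2970 * b ^ 3) * dupDen a b := by
      rw [dupNum, dupDen]
      ring
    exact h_eq ▸ dvd_sub (hnum.mul_left _) (hden.mul_left _)
  have hb : g ∣ 155520 * b ^ 7 := by
    have h_eq : 155520 * b ^ 7 = (4 * a ^ 2 * b - 96 * b ^ 3) * dupNum a b -
        (a ^ 3 + 30 * a * b ^ 2 + 648 * b ^ 3) * dupDen a b := by
      rw [dupNum, dupDen]
      ring
    exact h_eq ▸ dvd_sub (hnum.mul_left _) (hden.mul_left _)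
  obtain ⟨u, v, huv⟩ : IsCoprime (a ^ 7) (b ^ 7) := hab.pow
  have h_eq : (2 ^ 7 * (3 ^ 5 * 5) : ℤ) = 3888 * u * (40 * a ^ 7) + v * (155520 * b ^ 7) := by
    linear_combination -155520 * huv
  exact h_eq ▸ dvd_add (ha.mul_left _) (hb.mul_left _)

theorem not_eight_dvd_dupNum (hab : IsCoprime a b) : ¬8 ∣ dupNum a b := by
  rintro ⟨k, hk⟩
  rw [dupNum] at hk
  obtain ⟨a, rfl⟩ : 2 ∣ a := Int.prime_two.dvd_of_dvd_pow
    (n := 4) ⟨4 * k - 18 * a ^ 2 * b ^ 2 - 288 * a * b ^ 3 - 162 * b ^ 4, by linear_combination hk⟩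
  have hb : 2 ∣ b := Int.prime_two.dvd_of_dvd_pow
    (n := 4) ⟨k - 2 * a ^ 4 - 18 * a ^ 2 * b ^ 2 - 144 * a * b ^ 3 - 40 * b ^ 4, by
      linarith⟩
  exact Int.prime_two.not_isUnit (hab.isUnit_of_dvd' (dvd_mul_right _ _) hb)

theorem not_twentySeven_dvd_dup (hab : IsCoprime a b) (hnum : 27 ∣ dupNum a b) :
    ¬27 ∣ dupDen a b := by
  rintro ⟨l, hl⟩
  obtain ⟨k, hk⟩ := hnum
  rw [dupNum] at hk
  rw [dupDen] at hl
  obtain ⟨a, rfl⟩ : 3 ∣ a := Int.prime_three.dvd_of_dvd_pow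
    (n := 4) ⟨9 * k - 12 * a ^ 2 * b ^ 2 - 192 * a * b ^ 3 - 108 * b ^ 4, by linear_combination hk⟩
  have hb : 3 ∣ b := Int.prime_three.dvd_of_dvd_pow
    (n := 4) ⟨l - 4 * a ^ 3 * b + 8 * a * b ^ 3 + 11 * b ^ 4, by linarith⟩
  exact Int.prime_three.not_isUnit (hab.isUnit_of_dvd' (dvd_mul_right _ _) hb)

theorem dvd_of_dvd_dup (hab : IsCoprime a b) (hnum : g ∣ dupNum a b) (hden : g ∣ dupDen a b) :
    g ∣ 180 := by
  have h₂ : g ∣ 2 ^ 2 * (3 ^ 5 * 5) :=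
    dvd_pow_mul_of_not_pow_succ_dvd Int.prime_two (dvd_resultant_of_dvd_dup hab hnum hden)
      fun h ↦ not_eight_dvd_dupNum hab (h.trans hnum)
  rw [mul_left_comm] at h₂
  exact dvd_pow_mul_of_not_pow_succ_dvd (j := 2) Int.prime_three h₂
    fun h ↦ not_twentySeven_dvd_dup hab (h.trans hnum) (h.trans hden)

end Cancellation

theorem max_pow_four_le_of_dup {a b c e : ℤ} (hb : 0 < b) (he : 0 < e) (hab : IsCoprime a b)
    (hce : IsCoprime c e) (h : c * dupDen a b = e * dupNum a b) :
    43 * max |a| b ^ 4 ≤ 18000 * max |c| e := by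
  obtain ⟨g, hg⟩ : e ∣ dupDen a b := hce.symm.dvd_of_dvd_mul_left (Dvd.intro _ h.symm)
  have hg' : dupNum a b = c * g :=
    mul_left_cancel₀ he.ne' (by linear_combination -h + c * hg)
  have hg_le : |g| ≤ 180 := by
    refine Int.le_of_dvd (by norm_num) ((abs_dvd _ _).2 (dvd_of_dvd_dup hab ?_ ?_))
    · exact hg' ▸ dvd_mul_left g c
    · exact hg ▸ dvd_mul_left g e
  have hmax : max |dupNum a b| |dupDen a b| ≤ 180 * max |c| e := by
    rw [hg, hg', abs_mul, abs_mul, abs_of_pos he, ← max_mul_of_nonneg _ _ (abs_nonneg g), mul_comm]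
    gcongr
  have hreal := max_pow_four_le_dup (K := ℚ) (a := a) (b := b) (mod_cast hb.le)
  have : 43 * max |a| b ^ 4 ≤ 100 * max |dupNum a b| |dupDen a b| := by
    simp only [dupNum, dupDen] at hreal ⊢
    exact_mod_cast hreal
  linarith

end DuplicationHeight

section Generation

theorem abs_mul_le_of_sq_eq {c d e m : ℤ} (h : d ^ 2 = c ^ 3 - 18 * c * e ^ 4 - 72 * e ^ 6)
    (hc : |c| ≤ m) (he : e ^ 2 ≤ m) : |d * e| ≤ 5 * m ^ 2 := by
  obtain ⟨hc₁, hc₂⟩ := abs_le.1 hc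
  have hm : 0 ≤ m := (sq_nonneg e).trans he
  obtain ⟨t, ht⟩ : ∃ t, t = e ^ 2 := ⟨_, rfl⟩
  have ht0 : 0 ≤ t := ht ▸ sq_nonneg e
  rw [← ht] at he
  have ht3 : t ^ 3 ≤ m ^ 3 := pow_le_pow_left₀ ht0 he 3
  have h₁ : c ^ 3 * t ≤ m ^ 3 * m :=
    mul_le_mul ((show Odd 3 by decide).pow_le_pow.2 hc₂) he ht0 (by positivity)
  have h₂ : -c * t ^ 3 ≤ m * m ^ 3 := mul_le_mul (by linarith) ht3 (by positivity) hm
  refine abs_le_of_sq_le_sq ?_ (by positivity)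
  calc (d * e) ^ 2 = c ^ 3 * t + 18 * (-c * t ^ 3) - 72 * t ^ 4 := by
        rw [ht]
        linear_combination e ^ 2 * h
    _ ≤ 25 * m ^ 4 := by nlinarith [pow_nonneg ht0 4, pow_nonneg hm 4]
    _ = (5 * m ^ 2) ^ 2 := by ring

theorem abs_translation_le {c d e m : ℤ} (h : d ^ 2 = c ^ 3 - 18 * c * e ^ 4 - 72 * e ^ 6)
    (hc : |c| ≤ m) (he : e ^ 2 ≤ m) :
    |3 * (c ^ 2 + 3 * c * e ^ 2 - 2 * d * e - 42 * e ^ 4)| ≤ 168 * m ^ 2 := by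
  have hde := abs_le.1 (abs_mul_le_of_sq_eq h hc he)
  have hct : |c * e ^ 2| ≤ m * m := by
    rw [abs_mul, abs_of_nonneg (sq_nonneg e)]
    exact mul_le_mul hc he (sq_nonneg e) ((abs_nonneg c).trans hc)
  have hct := abs_le.1 hct
  have hc2 : c ^ 2 ≤ m ^ 2 := sq_le_sq' (abs_le.1 hc).1 (abs_le.1 hc).2
  have he4 : (e ^ 2) ^ 2 ≤ m ^ 2 := pow_le_pow_left₀ (sq_nonneg e) he 2
  rw [abs_le]
  constructor <;> nlinarith [sq_nonneg c, sq_nonneg (e ^ 2)]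

variable {P : curve.Point} {c d e c' d' e' : ℤ}

namespace HasIntCoords

theorem even_of_even (h : HasIntCoords P c d e) (hd : Even d) : Even c := by
  have hc : Even (c ^ 3) := by
    rw [show c ^ 3 = d ^ 2 + 2 * (9 * c * e ^ 4 + 36 * e ^ 6) by linear_combination -h.sq_eq]
    exact (hd.pow_of_ne_zero two_ne_zero).add (even_two_mul _)
  exact (Int.even_pow.1 hc).1

theorem odd_den_of_even (h : HasIntCoords P c d e) (hc : Even c) : Odd e := by
  rw [← Int.not_even_iff_odd]
  exact fun he ↦ Int.prime_two.not_isUnit (h.2.1.isUnit_of_dvd' hc.two_dvd he.two_dvd)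

-- The numerators of `X(P + G)` and `X(P - G)` multiply to
-- `(c ^ 2 + 14 * c * e ^ 2 + 57 * e ^ 4) * (c - 6 * e ^ 2) ^ 2`, up to the factor `36`.
theorem translation_conj (hP : HasIntCoords P c d e)
    (hPG : HasIntCoords (P + generator) c' d' e') (hc : c ≠ 6 * e ^ 2) :
    c' * (c ^ 2 + 3 * c * e ^ 2 + 2 * d * e - 42 * e ^ 4) =
      6 * (c ^ 2 + 14 * c * e ^ 2 + 57 * e ^ 4) * e' ^ 2 := by
  apply mul_left_cancel₀ (pow_ne_zero 2 (sub_ne_zero.2 hc))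
  linear_combination (c ^ 2 + 3 * c * e ^ 2 + 2 * d * e - 42 * e ^ 4) * hP.translation hPG hc -
    24 * e ^ 2 * e' ^ 2 * hP.sq_eq

theorem odd_of_translation (hP : HasIntCoords P c d e)
    (hPG : HasIntCoords (P + generator) c' d' e') (hc : c ≠ 6 * e ^ 2) (hd : Even d) :
    Odd c' := by
  have hcEven := hP.even_of_even hd
  have he := hP.odd_den_of_even hcEven
  have hconj := hP.translation_conj hPG hc
  obtain ⟨k, rfl⟩ := hd.two_dvd
  obtain ⟨l, rfl⟩ := hcEven.two_dvd
  have hconj' : c' * (2 * l ^ 2 + 3 * l * e ^ 2 + 2 * k * e - 21 * e ^ 4) =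
      3 * (4 * l ^ 2 + 28 * l * e ^ 2 + 57 * e ^ 4) * e' ^ 2 :=
    mul_left_cancel₀ two_ne_zero (by linear_combination hconj)
  have hodd : Odd (3 * (4 * l ^ 2 + 28 * l * e ^ 2 + 57 * e ^ 4)) := by
    have h57 : Odd (57 * e ^ 4) := Odd.mul (by decide) he.pow
    refine Odd.mul (by decide) (Even.add_odd ⟨2 * l ^ 2 + 14 * l * e ^ 2, by ring⟩ h57)
  by_contra hc'
  have hc'Even := Int.not_odd_iff_even.1 hc'
  have he' := hPG.odd_den_of_even hc'Even
  exact Int.not_even_iff_odd.2 (hodd.mul he'.pow) (hconj' ▸ hc'Even.mul_right _)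

theorem max_le_of_translation (hP : HasIntCoords P c d e)
    (hPG : HasIntCoords (P + generator) c' d' e') (hc : c ≠ 6 * e ^ 2) (hd : Even d) :
    max |c'| (e' ^ 2) ≤ 84 * max |c| (e ^ 2) ^ 2 := by
  have hodd := hP.odd_of_translation hPG hc hd
  have htrans := hP.translation hPG hc
  obtain ⟨m, hm⟩ : ∃ m, m = max |c| (e ^ 2) := ⟨_, rfl⟩
  have hcm : |c| ≤ m := hm ▸ le_max_left _ _
  have hem : e ^ 2 ≤ m := hm ▸ le_max_right _ _
  have hnum := abs_translation_le hP.sq_eq hcm hem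
  have hcEven := hP.even_of_even hd
  obtain ⟨k, rfl⟩ := hd.two_dvd
  obtain ⟨l, rfl⟩ := hcEven.two_dvd
  obtain ⟨n, hn⟩ : ∃ n, n = 3 * (2 * l ^ 2 + 3 * l * e ^ 2 - 2 * k * e - 21 * e ^ 4) := ⟨_, rfl⟩
  have hreduced : c' * (l - 3 * e ^ 2) ^ 2 = n * e' ^ 2 :=
    mul_left_cancel₀ four_ne_zero (by rw [hn]; linear_combination htrans)
  have hden0 : l - 3 * e ^ 2 ≠ 0 := fun h ↦ hc (by linear_combination 2 * h)
  have hn0 : n ≠ 0 := by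
    rintro rfl
    have hc' : c' ≠ 0 := by
      rintro rfl
      simp at hodd
    exact mul_ne_zero hc' (pow_ne_zero 2 hden0) (by rw [hreduced, zero_mul])
  have hcop : IsCoprime c' (e' ^ 2) := hPG.2.1.pow_right
  rw [← hm]
  refine max_le ?_ ?_
  · have hle := Int.le_of_dvd (abs_pos.2 hn0) <| (abs_dvd_abs _ _).2 <|
      hcop.dvd_of_dvd_mul_right (Dvd.intro _ hreduced)
    rw [show 3 * _ = 2 * n by rw [hn]; ring, abs_mul, abs_two] at hnum
    linarith
  · have hle := Int.le_of_dvd (by positivity) <|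
      hcop.symm.dvd_of_dvd_mul_left (Dvd.intro_left _ hreduced.symm)
    have hl := abs_le.1 hcm
    nlinarith [sq_nonneg e]

theorem eq_or_eq_of_max_le (h : HasIntCoords P c d e) (hle : max |c| (e ^ 2) ≤ 204) :
    (c = 6 ∧ e = 1) ∨ (c = 177 ∧ e = 2) := by
  have hsearch : ∀ e ∈ Finset.Icc (1 : ℤ) 14, ∀ c ∈ Finset.Icc (0 : ℤ) 204, Int.gcd c e = 1 →
      IsSquare (c ^ 3 - 18 * c * e ^ 4 - 72 * e ^ 6) → (c = 6 ∧ e = 1) ∨ (c = 177 ∧ e = 2) := by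
    decide +kernel
  obtain ⟨hc, he⟩ := max_le_iff.1 hle
  have he0 := h.1
  have hc0 : 0 ≤ c := by
    obtain ⟨t, ht⟩ : ∃ t, t = e ^ 2 := ⟨_, rfl⟩
    have ht0 : 0 < t := ht ▸ sq_pos_of_pos he0
    have hsq : d ^ 2 = c ^ 3 - 18 * c * t ^ 2 - 72 * t ^ 3 := by
      rw [h.sq_eq, ht]
      ring
    by_contra! hc0
    nlinarith [sq_nonneg d, pow_pos ht0 3, mul_nonneg (sub_nonneg.2 hc0.le) ht0.le,
      mul_nonneg (by linarith : 0 ≤ 4 * t - c) (sq_nonneg (c + 2 * t))]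
  exact hsearch e (Finset.mem_Icc.2 ⟨he0, by nlinarith⟩) c
    (Finset.mem_Icc.2 ⟨hc0, (abs_le.1 hc).2⟩) (Int.isCoprime_iff_gcd_eq_one.1 h.2.1)
    ⟨d, by rw [← h.sq_eq, sq]⟩

theorem max_pow_four_le {a f b : ℤ} {Q : curve.Point} (hQ : HasIntCoords Q a f b)
    (hQQ : HasIntCoords (Q + Q) c d e) :
    43 * max |a| (b ^ 2) ^ 4 ≤ 18000 * max |c| (e ^ 2) :=
  max_pow_four_le_of_dup (sq_pos_of_pos hQ.1) (sq_pos_of_pos hQQ.1) hQ.2.1.pow_right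
    hQQ.2.1.pow_right (hQ.duplication hQQ)

theorem ne_six_of_lt (h : HasIntCoords P c d e) (hbig : 204 < max |c| (e ^ 2)) :
    c ≠ 6 * e ^ 2 := by
  rintro rfl
  have he : IsUnit e := h.2.1.isUnit_of_dvd' ⟨6 * e, by ring⟩ dvd_rfl
  rcases Int.isUnit_iff.1 he with rfl | rfl <;> norm_num at hbig

theorem add_generator_ne_zero (h : HasIntCoords P c d e) (hc : c ≠ 6 * e ^ 2) :
    P + generator ≠ 0 := by
  intro h0
  have hX := (h.2.2.inj (add_eq_zero_iff_eq_neg.1 h0 ▸ hasCoords_generator.neg)).1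
  rw [div_eq_iff (pow_ne_zero 2 (mod_cast h.1.ne'))] at hX
  exact hc (mod_cast hX)

theorem exists_smaller (h : HasIntCoords P c d e) (hbig : 204 < max |c| (e ^ 2)) :
    ∃ Q a f b, HasIntCoords Q a f b ∧ max |a| (b ^ 2) < max |c| (e ^ 2) ∧
      (P = Q + Q ∨ P + generator = Q + Q) := by
  have hsq : 204 ^ 2 < max |c| (e ^ 2) ^ 2 := pow_lt_pow_left₀ hbig (by norm_num) two_ne_zero
  rcases Int.even_or_odd d with hd | hd
  · have hc := h.ne_six_of_lt hbig
    obtain ⟨c', d', e', hPG⟩ := (eq_zero_or_exists_hasIntCoords _).resolve_left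
      (h.add_generator_ne_zero hc)
    have hmax := h.max_le_of_translation hPG hc hd
    have hd' : Odd d' := Int.not_even_iff_odd.1 fun hd' ↦
      Int.not_even_iff_odd.2 (h.odd_of_translation hPG hc hd) (hPG.even_of_even hd')
    obtain ⟨Q, a, f, b, hQ, hPQ⟩ := hPG.exists_eq_add_self_of_odd hd'
    refine ⟨Q, a, f, b, hQ, ?_, .inr hPQ⟩
    have hdup := hQ.max_pow_four_le (hPQ ▸ hPG)
    refine lt_of_pow_lt_pow_left₀ 4 (by positivity) ?_
    nlinarith
  · obtain ⟨Q, a, f, b, hQ, hPQ⟩ := h.exists_eq_add_self_of_odd hd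
    refine ⟨Q, a, f, b, hQ, ?_, .inl hPQ⟩
    have hdup := hQ.max_pow_four_le (hPQ ▸ h)
    refine lt_of_pow_lt_pow_left₀ 4 (by positivity) ?_
    nlinarith

theorem mem_zmultiples_generator_of_max_le (h : HasIntCoords P c d e)
    (hle : max |c| (e ^ 2) ≤ 204) : P ∈ AddSubgroup.zmultiples generator := by
  have hG := AddSubgroup.mem_zmultiples generator
  rcases h.eq_or_eq_of_max_le hle with ⟨rfl, rfl⟩ | ⟨rfl, rfl⟩
  · have hP := h.2.2
    norm_num at hP
    rcases hP.eq_or_eq_neg hasCoords_generator with rfl | rfl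
    · exact hG
    · exact neg_mem hG
  · have hP := h.2.2
    have hGG := hasCoords_generator.add_self (l := 15 / 2) (by norm_num)
    norm_num at hP hGG
    rcases hP.eq_or_eq_neg hGG with rfl | rfl
    · exact add_mem hG hG
    · exact neg_mem (add_mem hG hG)

theorem mem_zmultiples_generator (h : HasIntCoords P c d e) :
    P ∈ AddSubgroup.zmultiples generator := by
  induction hN : (max |c| (e ^ 2)).toNat using Nat.strong_induction_on generalizing P c d e with
  | _ N ih =>
    rcases le_or_gt (max |c| (e ^ 2)) 204 with hle | hbig
    · exact h.mem_zmultiples_generator_of_max_le hle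
    · obtain ⟨Q, a, f, b, hQ, hlt, hPQ⟩ := h.exists_smaller hbig
      have hQG := ih _ (by omega) hQ rfl
      rcases hPQ with rfl | hPQ
      · exact add_mem hQG hQG
      · exact (AddSubgroup.add_mem_cancel_right _ (AddSubgroup.mem_zmultiples _)).1
          (hPQ ▸ add_mem hQG hQG)

end HasIntCoords

theorem exists_eq_zsmul_generator (P : curve.Point) : ∃ n : ℤ, P = n • generator := by
  suffices h : P ∈ AddSubgroup.zmultiples generator by
    obtain ⟨n, hn⟩ := AddSubgroup.mem_zmultiples_iff.1 h
    exact ⟨n, hn.symm⟩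
  rcases eq_zero_or_exists_hasIntCoords P with rfl | ⟨c, d, e, h⟩
  · exact zero_mem _
  · exact h.mem_zmultiples_generator

end Generation

section Reduction

variable {p : ℕ} [Fact p.Prime] {x y : ℚ} {a b : ZMod p}

/-- The rational number `x` is integral at `p` and its residue class modulo `p` is `a`. -/
def ReducesTo (x : ℚ) (a : ZMod p) : Prop :=
  ∃ m n : ℤ, (n : ZMod p) ≠ 0 ∧ x * n = m ∧ a * n = m

namespace ReducesTo

theorem intCast (m : ℤ) : ReducesTo (m : ℚ) (m : ZMod p) :=
  ⟨m, 1, by simp, by simp, by simp⟩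

theorem ofNat (n : ℕ) [n.AtLeastTwo] :
    ReducesTo (OfNat.ofNat n : ℚ) (OfNat.ofNat n : ZMod p) :=
  mod_cast intCast (p := p) (OfNat.ofNat n)

theorem one : ReducesTo 1 (1 : ZMod p) :=
  mod_cast intCast (p := p) 1

theorem add (hx : ReducesTo x a) (hy : ReducesTo y b) : ReducesTo (x + y) (a + b) := by
  obtain ⟨m, n, hn, hx, ha⟩ := hx
  obtain ⟨m', n', hn', hy, hb⟩ := hy
  refine ⟨m * n' + m' * n, n * n', by push_cast; exact mul_ne_zero hn hn', ?_, ?_⟩ <;> push_cast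
  · rw [← hx, ← hy]
    ring
  · rw [← ha, ← hb]
    ring

theorem mul (hx : ReducesTo x a) (hy : ReducesTo y b) : ReducesTo (x * y) (a * b) := by
  obtain ⟨m, n, hn, hx, ha⟩ := hx
  obtain ⟨m', n', hn', hy, hb⟩ := hy
  refine ⟨m * m', n * n', by push_cast; exact mul_ne_zero hn hn', ?_, ?_⟩ <;> push_cast
  · rw [← hx, ← hy]
    ring
  · rw [← ha, ← hb]
    ring

theorem pow (hx : ReducesTo x a) (k : ℕ) : ReducesTo (x ^ k) (a ^ k) := by
  induction k with
  | zero => simpa using one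
  | succ k ih => simpa only [pow_succ] using ih.mul hx

theorem neg (hx : ReducesTo x a) : ReducesTo (-x) (-a) := by
  simpa using (intCast (-1)).mul hx

theorem sub (hx : ReducesTo x a) (hy : ReducesTo y b) : ReducesTo (x - y) (a - b) := by
  simpa only [sub_eq_add_neg] using hx.add hy.neg

theorem unique (hx : ReducesTo x a) (hx' : ReducesTo x b) : a = b := by
  obtain ⟨m, n, hn, hx, ha⟩ := hx
  obtain ⟨m', n', hn', hx', hb⟩ := hx'
  have hmn : m * n' = m' * n := by
    qify
    rw [← hx, ← hx']
    ring
  apply mul_right_cancel₀ (mul_ne_zero hn hn')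
  have hmn := congrArg (Int.cast : ℤ → ZMod p) hmn
  push_cast at hmn
  linear_combination n' * ha - n * hb + hmn

theorem ne_zero (hx : ReducesTo x a) (ha : a ≠ 0) : x ≠ 0 := by
  rintro rfl
  exact ha (hx.unique (mod_cast intCast 0))

theorem inv (hx : ReducesTo x a) (ha : a ≠ 0) : ReducesTo x⁻¹ a⁻¹ := by
  have hx0 := hx.ne_zero ha
  obtain ⟨m, n, hn, hx, hm⟩ := hx
  refine ⟨n, m, hm ▸ mul_ne_zero ha hn, ?_, ?_⟩
  · rw [← hx, inv_mul_cancel_left₀ hx0]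
  · rw [← hm, inv_mul_cancel_left₀ ha]

theorem div (hx : ReducesTo x a) (hy : ReducesTo y b) (hb : b ≠ 0) :
    ReducesTo (x / y) (a / b) := by
  simpa only [div_eq_mul_inv] using hx.mul (hy.inv hb)

theorem exists_of_sq (hx : ReducesTo (x ^ 2) a) : ∃ b : ZMod p, ReducesTo x b := by
  obtain ⟨m, n, hn, hx, -⟩ := hx
  have hsq : (x * n) ^ 2 = (m * n : ℤ) := by
    push_cast
    rw [← hx]
    ring
  obtain ⟨k, hk⟩ : ∃ k : ℤ, k = x * n :=
    IsIntegrallyClosed.isIntegral_iff.1 <| IsIntegral.of_pow (n := 2) two_pos <|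
      hsq ▸ isIntegral_algebraMap
  exact ⟨k / n, k, n, hn, hk.symm, div_mul_cancel₀ _ hn⟩

end ReducesTo

/-- `P` is an affine point reducing modulo `p` to the affine point `(a, b)`. -/
def PointReducesTo (P : curve.Point) (a b : ZMod p) : Prop :=
  ∃ X Y, HasCoords P X Y ∧ ReducesTo X a ∧ ReducesTo Y b

/-- `P` reduces modulo `p` to the point at infinity. For an affine point, `1 / X` and `Y / X ^ 2`
are used because they are the functions vanishing at infinity that the addition law involves. -/
def ReducesToInfinity (p : ℕ) [Fact p.Prime] (P : curve.Point) : Prop :=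
  P = 0 ∨ ∃ X Y, HasCoords P X Y ∧ X ≠ 0 ∧
    ReducesTo X⁻¹ (0 : ZMod p) ∧ ReducesTo (Y / X ^ 2) (0 : ZMod p)

/-- `P` is an affine point whose abscissa reduces modulo `p` to `a`. -/
def AbscissaReducesTo (P : curve.Point) (a : ZMod p) : Prop :=
  ∃ X Y, HasCoords P X Y ∧ ReducesTo X a

variable {P Q T : curve.Point}

theorem PointReducesTo.abscissaReducesTo (hP : PointReducesTo P a b) : AbscissaReducesTo P a := by
  obtain ⟨X, Y, hP, hX, -⟩ := hP
  exact ⟨X, Y, hP, hX⟩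

theorem PointReducesTo.add_self (hP : PointReducesTo P a b) (hb : 2 * b ≠ 0) {l : ZMod p}
    (hl : l * (2 * b) = 3 * a ^ 2 - 18) :
    PointReducesTo (P + P) (l ^ 2 - a - a) (l * (a - (l ^ 2 - a - a)) - b) := by
  obtain ⟨X, Y, hP, hX, hY⟩ := hP
  have h2Y := (ReducesTo.ofNat 2).mul hY
  have hslope : ReducesTo ((3 * X ^ 2 - 18) / (2 * Y)) l := by
    rw [eq_div_of_mul_eq hb hl]
    exact (((ReducesTo.ofNat 3).mul (hX.pow 2)).sub (ReducesTo.ofNat 18)).div h2Y hb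
  have hX' := ((hslope.pow 2).sub hX).sub hX
  exact ⟨_, _, hP.add_self (div_mul_cancel₀ _ (h2Y.ne_zero hb)), hX',
    (hslope.mul (hX.sub hX')).sub hY⟩

theorem ReducesToInfinity.neg (hT : ReducesToInfinity p T) : ReducesToInfinity p (-T) := by
  rcases hT with rfl | ⟨X, Y, hT, hX, hs, hu⟩
  · exact .inl neg_zero
  · exact .inr ⟨X, -Y, hT.neg, hX, hs, by simpa [neg_div] using hu.neg⟩

theorem ReducesToInfinity.add_of_neg (hP : PointReducesTo P a b) (hQ : PointReducesTo Q a (-b))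
    (hb : 2 * b ≠ 0) : ReducesToInfinity p (P + Q) := by
  obtain ⟨X₁, Y₁, hP, hX₁, hY₁⟩ := hP
  obtain ⟨X₂, Y₂, hQ, hX₂, hY₂⟩ := hQ
  have hY : ReducesTo (Y₁ - Y₂) (2 * b) := by simpa [two_mul] using hY₁.sub hY₂
  have hY0 := hY.ne_zero hb
  rcases eq_or_ne X₁ X₂ with rfl | hX
  · rcases hP.eq_or_eq_neg hQ with rfl | rfl
    · exact absurd (sub_eq_zero.2 (hP.inj hQ).2) hY0
    · exact .inl (neg_add_cancel Q)
  -- The slope is infinite modulo `p`, so work with its inverse `μ`.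
  set μ := (X₁ - X₂) / (Y₁ - Y₂) with hμdef
  have hX0 := sub_ne_zero.2 hX
  have hμ0 : μ ≠ 0 := div_ne_zero hX0 hY0
  have hμ : ReducesTo μ (0 : ZMod p) := by simpa using (hX₁.sub hX₂).div hY hb
  have hD : ReducesTo (1 - (X₁ + X₂) * μ ^ 2) (1 : ZMod p) := by
    simpa using ReducesTo.one.sub ((hX₁.add hX₂).mul (hμ.pow 2))
  set D := 1 - (X₁ + X₂) * μ ^ 2 with hDdef
  have hD0 := hD.ne_zero one_ne_zero
  have hadd := hP.add hQ hX (l := μ⁻¹) (by rw [hμdef]; field_simp)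
  have hX₃ : μ⁻¹ ^ 2 - X₁ - X₂ = D / μ ^ 2 := by
    rw [hDdef]
    field_simp
    ring
  rw [hX₃] at hadd
  refine .inr ⟨_, _, hadd, div_ne_zero hD0 (pow_ne_zero 2 hμ0), ?_, ?_⟩
  · simpa [inv_div] using (hμ.pow 2).div hD one_ne_zero
  · have hu : (μ⁻¹ * (X₁ - D / μ ^ 2) - Y₁) / (D / μ ^ 2) ^ 2 =
        μ * (X₁ * μ ^ 2 - D - Y₁ * μ ^ 3) / D ^ 2 := by
      field_simp
    rw [hu]
    simpa using (hμ.mul (((hX₁.mul (hμ.pow 2)).sub hD).sub (hY₁.mul (hμ.pow 3)))).div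
      (hD.pow 2) (pow_ne_zero 2 one_ne_zero)

theorem AbscissaReducesTo.neg (hP : AbscissaReducesTo P a) : AbscissaReducesTo (-P) a := by
  obtain ⟨X, Y, hP, hX⟩ := hP
  exact ⟨X, -Y, hP.neg, hX⟩

theorem AbscissaReducesTo.ne_zero (hP : AbscissaReducesTo P a) : P ≠ 0 := by
  rintro rfl
  obtain ⟨X, Y, ⟨_, h⟩, -⟩ := hP
  exact WeierstrassCurve.Affine.Point.some_ne_zero _ h.symm

theorem AbscissaReducesTo.eq_mul_sq (hP : AbscissaReducesTo P a) {X Y : ℚ} (h : HasCoords P X Y)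
    {c e : ℤ} (hX : X * e ^ 2 = c) : (c : ZMod p) = a * e ^ 2 := by
  obtain ⟨X', Y', h', hX'⟩ := hP
  obtain ⟨rfl, -⟩ := h.inj h'
  exact (ReducesTo.intCast c).unique (hX ▸ hX'.mul ((ReducesTo.intCast e).pow 2))

theorem AbscissaReducesTo.add (hP : AbscissaReducesTo P a) (hT : ReducesToInfinity p T) :
    AbscissaReducesTo (P + T) a := by
  rcases hT with rfl | ⟨X', Y', hT, hX'0, hs, hu⟩
  · rwa [add_zero]
  obtain ⟨X, Y, hP, hX⟩ := hP
  obtain ⟨b, hY⟩ : ∃ b : ZMod p, ReducesTo Y b := by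
    apply ReducesTo.exists_of_sq (a := a ^ 3 - 18 * a - 72)
    rw [hP.equation]
    exact ((hX.pow 3).sub ((ReducesTo.ofNat 18).mul hX)).sub (ReducesTo.ofNat 72)
  set s := X'⁻¹ with hsdef
  set u := Y' / X' ^ 2 with hudef
  have hD : ReducesTo (1 - X * s) (1 : ZMod p) := by simpa using ReducesTo.one.sub (hX.mul hs)
  have hD0 := hD.ne_zero one_ne_zero
  have hne : X ≠ X' := by
    rintro rfl
    exact hD0 (by rw [hsdef, mul_inv_cancel₀ hX'0, sub_self])
  refine ⟨_, _, hP.add hT hne (div_mul_cancel₀ _ (sub_ne_zero.2 hne)), ?_⟩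
  have hsum : ((Y - Y') / (X - X')) ^ 2 - X - X' =
      ((X - 18 * s) * (X * s + 1) - 144 * s ^ 2 - 2 * Y * u) / (1 - X * s) ^ 2 := by
    have h1 : 1 - X * s = -(X - X') / X' := by
      rw [hsdef]
      field_simp
      ring
    have hXX := sub_ne_zero.2 hne
    rw [h1, hsdef, hudef]
    field_simp
    linear_combination hP.equation + hT.equation
  rw [hsum]
  simpa using ((((hX.sub ((ReducesTo.ofNat 18).mul hs)).mul ((hX.mul hs).add .one)).sub
    ((ReducesTo.ofNat 144).mul (hs.pow 2))).sub (((ReducesTo.ofNat 2).mul hY).mul hu)).div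
    (hD.pow 2) (pow_ne_zero 2 one_ne_zero)

theorem AbscissaReducesTo.add_zsmul (hP : AbscissaReducesTo P a) (hT : ReducesToInfinity p T)
    (k : ℤ) : AbscissaReducesTo (P + k • T) a := by
  induction k using Int.induction_on with
  | zero => simpa using hP
  | succ i ih => simpa only [add_one_zsmul, add_assoc] using ih.add hT
  | pred i ih => simpa only [sub_one_zsmul, add_assoc] using ih.add hT.neg

end Reduction

section Sieve

variable {P : curve.Point} {a b : ZMod 163} {m n : ℤ}

theorem hasCoords_two_zsmul_generator :
    HasCoords ((2 : ℤ) • generator) (177 / 4) (-2343 / 8) := by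
  have h := hasCoords_generator.add_self (l := 15 / 2) (by norm_num)
  rw [two_zsmul]
  convert h using 1 <;> norm_num

theorem hasCoords_three_zsmul_generator :
    HasCoords ((3 : ℤ) • generator) (28102 / 2601) (4183750 / 132651) := by
  have h := hasCoords_two_zsmul_generator.add hasCoords_generator (by norm_num)
    (l := -797 / 102) (by norm_num)
  rw [show (3 : ℤ) = 2 + 1 from rfl, add_one_zsmul]
  convert h using 1 <;> norm_num

theorem reducesToInfinity_three_zsmul_generator :
    ReducesToInfinity 3 ((3 : ℤ) • generator) := by
  refine .inr ⟨_, _, hasCoords_three_zsmul_generator, by norm_num,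
    ⟨2601, 28102, by decide, by norm_num, by decide⟩,
    ⟨4183750 * 51, 28102 ^ 2, by decide, by norm_num, by decide⟩⟩

theorem not_three_dvd_of_abscissaReducesTo {j : ℤ}
    (h : AbscissaReducesTo (j • generator) (0 : ZMod 3)) : ¬3 ∣ j := by
  rintro ⟨k, rfl⟩
  apply (h.add_zsmul reducesToInfinity_three_zsmul_generator (-k)).ne_zero
  rw [← mul_zsmul', mul_neg, neg_zsmul, add_neg_cancel]

instance : Fact (Nat.Prime 163) := ⟨by norm_num⟩

theorem pointReducesTo_generator : PointReducesTo generator (6 : ZMod 163) 6 :=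
  ⟨6, 6, hasCoords_generator, .ofNat 6, .ofNat 6⟩

theorem PointReducesTo.two_zsmul (h : PointReducesTo P a b) (hb : 2 * b ≠ 0) (l x y : ZMod 163)
    (hl : l * (2 * b) = 3 * a ^ 2 - 18) (hx : l ^ 2 - a - a = x) (hy : l * (a - x) - b = y) :
    PointReducesTo ((2 : ℤ) • P) x y := by
  subst hx hy
  rw [_root_.two_zsmul]
  exact h.add_self hb hl

theorem pointReducesTo_two_zsmul : PointReducesTo ((2 : ℤ) • generator) (85 : ZMod 163) 135 :=
  pointReducesTo_generator.two_zsmul (by decide) 89 _ _ (by decide) (by decide) (by decide)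

theorem pointReducesTo_four_zsmul : PointReducesTo ((4 : ℤ) • generator) (89 : ZMod 163) 73 := by
  rw [show (4 : ℤ) = 2 * 2 from rfl, mul_zsmul]
  exact pointReducesTo_two_zsmul.two_zsmul (by decide) 111 _ _ (by decide) (by decide) (by decide)

theorem pointReducesTo_eight_zsmul : PointReducesTo ((8 : ℤ) • generator) (6 : ZMod 163) (-6) := by
  rw [show (8 : ℤ) = 4 * 2 from rfl, mul_zsmul]
  exact pointReducesTo_four_zsmul.two_zsmul (by decide) 99 _ _ (by decide) (by decide) (by decide)

theorem reducesToInfinity_nine_zsmul_generator :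
    ReducesToInfinity 163 ((9 : ℤ) • generator) := by
  rw [show (9 : ℤ) = 1 + 8 from rfl, add_zsmul, one_zsmul]
  exact .add_of_neg pointReducesTo_generator pointReducesTo_eight_zsmul (by decide)

theorem exists_abscissaReducesTo_of_not_three_dvd {j : ℤ} (hj : ¬3 ∣ j) :
    ∃ a : ZMod 163, (a = 6 ∨ a = 85 ∨ a = 89) ∧ AbscissaReducesTo (j • generator) a := by
  have h1 : AbscissaReducesTo ((1 : ℤ) • generator) (6 : ZMod 163) := by
    rw [one_zsmul]
    exact pointReducesTo_generator.abscissaReducesTo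
  have h2 := pointReducesTo_two_zsmul.abscissaReducesTo
  have h4 := pointReducesTo_four_zsmul.abscissaReducesTo
  obtain ⟨a, i, ha, hi, hji⟩ : ∃ (a : ZMod 163) (i : ℤ), (a = 6 ∨ a = 85 ∨ a = 89) ∧
      AbscissaReducesTo (i • generator) a ∧ 9 ∣ j - i := by
    obtain h | h | h | h | h | h : j % 9 = 1 ∨ j % 9 = 2 ∨ j % 9 = 4 ∨ j % 9 = 5 ∨ j % 9 = 7 ∨
      j % 9 = 8 := by omega
    · exact ⟨6, 1, by simp, h1, by omega⟩
    · exact ⟨85, 2, by simp, h2, by omega⟩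
    · exact ⟨89, 4, by simp, h4, by omega⟩
    · exact ⟨89, -4, by simp, neg_zsmul generator 4 ▸ h4.neg, by omega⟩
    · exact ⟨85, -2, by simp, neg_zsmul generator 2 ▸ h2.neg, by omega⟩
    · exact ⟨6, -1, by simp, neg_zsmul generator 1 ▸ h1.neg, by omega⟩
  obtain ⟨k, hk⟩ := hji
  refine ⟨a, ha, ?_⟩
  rw [eq_add_of_sub_eq' hk, add_zsmul, mul_zsmul']
  exact hi.add_zsmul reducesToInfinity_nine_zsmul_generator k

theorem quartic_ne_zero (ha : a = 6 ∨ a = 85 ∨ a = 89) (t : ZMod 163) :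
    t ^ 4 - 24 * t ^ 2 - 40 - a * (2 * t) ^ 2 ≠ 0 := by
  rcases ha with rfl | rfl | rfl <;> revert t <;> decide +kernel

/-- The numerator of the abscissa of the point attached to a solution; the denominator is
`(2 * m * n) ^ 2`. -/
def abscissaNum (m n : ℤ) : ℤ :=
  m ^ 4 - 24 * m ^ 2 * n ^ 2 - 40 * n ^ 4

theorem abscissaNum_ne_mod_163 (ha : a = 6 ∨ a = 85 ∨ a = 89) (hmn : IsCoprime m n) :
    (abscissaNum m n : ZMod 163) ≠ a * (2 * m * n : ℤ) ^ 2 := by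
  intro h
  rw [abscissaNum] at h
  push_cast at h
  by_cases hn : (n : ZMod 163) = 0
  · have hm : (m : ZMod 163) = 0 := by
      rw [hn] at h
      exact pow_eq_zero_iff four_ne_zero |>.1 (by linear_combination h)
    have hunit := hmn.isUnit_of_dvd' ((ZMod.intCast_zmod_eq_zero_iff_dvd m 163).1 hm)
      ((ZMod.intCast_zmod_eq_zero_iff_dvd n 163).1 hn)
    norm_num [Int.isUnit_iff] at hunit
  · apply quartic_ne_zero ha (m / n)
    field_simp
    linear_combination h

theorem abscissaNum_eq_zero_mod_three (hm : (m : ZMod 3) ≠ 0) (hn : (n : ZMod 3) ≠ 0) :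
    (abscissaNum m n : ZMod 3) = 0 := by
  rw [abscissaNum]
  push_cast
  generalize (m : ZMod 3) = m at hm ⊢
  generalize (n : ZMod 3) = n at hn ⊢
  revert m n
  decide

/-- The only multiples `j • generator` whose abscissa modulo `163` is compatible with
`abscissaNum m n / (2 * m * n) ^ 2` have `3 ∣ j`, and these do not reduce to `(0, 0)` modulo `3`. -/
theorem sq_ne_of_abscissaNum (hmn : IsCoprime m n) (hm : ¬3 ∣ m) (hn : ¬3 ∣ n) (d : ℤ) :
    d ^ 2 ≠ abscissaNum m n ^ 3 - 18 * abscissaNum m n * (2 * m * n) ^ 4 -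
      72 * (2 * m * n) ^ 6 := by
  intro hd
  have hm3 : (m : ZMod 3) ≠ 0 := mt (ZMod.intCast_zmod_eq_zero_iff_dvd m 3).1 hm
  have hn3 : (n : ZMod 3) ≠ 0 := mt (ZMod.intCast_zmod_eq_zero_iff_dvd n 3).1 hn
  have hc3 := abscissaNum_eq_zero_mod_three hm3 hn3
  have hc163 {a} (ha) := abscissaNum_ne_mod_163 (a := a) ha hmn
  generalize abscissaNum m n = c at hc3 hc163 hd
  have he3 : ((2 * m * n : ℤ) : ZMod 3) ≠ 0 := by
    push_cast
    exact mul_ne_zero (mul_ne_zero (by decide) hm3) hn3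
  generalize 2 * m * n = e at he3 hc163 hd
  have he0 : (e : ℚ) ≠ 0 := by
    rintro h
    exact he3 (by rw [Int.cast_eq_zero.1 h, Int.cast_zero])
  have hcurve : ((d : ℚ) / e ^ 3) ^ 2 = (c / e ^ 2) ^ 3 - 18 * (c / e ^ 2) - 72 := by
    field_simp
    exact_mod_cast (by linear_combination hd)
  obtain ⟨P, hP⟩ : ∃ P, HasCoords P _ _ := ⟨_, curve_nonsingular hcurve, rfl⟩
  obtain ⟨j, rfl⟩ := exists_eq_zsmul_generator P
  have hred3 : AbscissaReducesTo (j • generator) (0 : ZMod 3) := by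
    refine ⟨_, _, hP, ?_⟩
    simpa [hc3] using (ReducesTo.intCast c).div ((ReducesTo.intCast e).pow 2) (pow_ne_zero 2 he3)
  obtain ⟨a, ha, hred⟩ :=
    exists_abscissaReducesTo_of_not_three_dvd (not_three_dvd_of_abscissaReducesTo hred3)
  exact hc163 ha (hred.eq_mul_sq hP (div_mul_cancel₀ _ (pow_ne_zero 2 he0)))

end Sieve

section Cubes

variable {a b c r t u v x y : ℤ}

/-- The coefficient of `√3` in `(a * √3 + b * √10) ^ 3`. -/
def cubeFst (a b : ℤ) : ℤ :=
  3 * a ^ 3 + 30 * a * b ^ 2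

/-- The coefficient of `√10` in `(a * √3 + b * √10) ^ 3`. -/
def cubeSnd (a b : ℤ) : ℤ :=
  9 * a ^ 2 * b + 10 * b ^ 3

theorem isCoprime_of_isCoprime_linearCombination {A₁ B₁ A₂ B₂ : ℤ}
    (h : IsCoprime (A₁ * a + B₁ * b) (A₂ * a + B₂ * b)) : IsCoprime a b := by
  obtain ⟨s, t, hst⟩ := h
  exact ⟨s * A₁ + t * A₂, s * B₁ + t * B₂, by rw [← hst]; ring⟩

theorem isCoprime_of_isCoprime_cubes {A₁ B₁ A₂ B₂ : ℤ}
    (h : IsCoprime (A₁ * cubeFst a b + B₁ * cubeSnd a b)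
      (A₂ * cubeFst a b + B₂ * cubeSnd a b)) : IsCoprime a b := by
  have hUV := isCoprime_of_isCoprime_linearCombination h
  apply isCoprime_of_isCoprime_linearCombination (A₁ := 3 * a ^ 2 + 30 * b ^ 2) (B₁ := 0)
    (A₂ := 0) (B₂ := 9 * a ^ 2 + 10 * b ^ 2)
  convert hUV using 1
  · rw [cubeFst]
    ring
  · rw [cubeSnd]
    ring

theorem exists_eq_pow_of_isCoprime_of_mul_eq_pow {k : ℕ} (hk : Even k) (h : IsCoprime u v)
    (hu : 0 < u) (huv : u * v = r ^ k) : ∃ n, u = n ^ k := by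
  obtain ⟨n, hn⟩ := exists_associated_pow_of_mul_eq_pow' h huv
  rcases Int.associated_iff.1 hn with hn | hn
  · exact ⟨n, hn.symm⟩
  · linarith [hk.pow_nonneg n]

theorem sq_emod_eight_of_odd (h : Odd t) : t ^ 2 % 8 = 1 := by
  have := Int.eight_dvd_sq_sub_one_of_odd h
  omega

theorem pow_four_emod_eight_of_odd (h : Odd t) : t ^ 4 % 8 = 1 := by
  rw [show t ^ 4 = (t ^ 2) ^ 2 by ring]
  exact sq_emod_eight_of_odd h.pow

theorem three_dvd_cubeFst (a b : ℤ) : 3 ∣ cubeFst a b :=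
  ⟨a ^ 3 + 10 * a * b ^ 2, by rw [cubeFst]; ring⟩

theorem three_dvd_cubeSnd (hb : 3 ∣ b) : 3 ∣ cubeSnd a b :=
  (hb.mul_left _).add ((hb.pow three_ne_zero).mul_left _)

theorem not_three_dvd_of_sq_eq {A B : ℤ} (hy : ¬3 ∣ y)
    (h : y ^ 2 = A * cubeFst a b + B * cubeSnd a b) : ¬3 ∣ b := fun hb ↦
  hy <| Int.prime_three.dvd_of_dvd_pow <|
    h ▸ ((three_dvd_cubeFst a b).mul_left A).add ((three_dvd_cubeSnd hb).mul_left B)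

theorem sq_ne_cubes_of_pos_unit (hy : ¬3 ∣ y)
    (hy2 : y ^ 2 = 6 * cubeFst a b + 11 * cubeSnd a b) :
    x ^ 2 ≠ -1 * cubeFst a b + -2 * cubeSnd a b := by
  intro hx2
  have hy3 : (y : ZMod 3) ≠ 0 := mt (ZMod.intCast_zmod_eq_zero_iff_dvd y 3).1 hy
  have hxy : (x : ZMod 3) ^ 2 = 2 * (y : ZMod 3) ^ 2 := by
    obtain ⟨k, hk⟩ := three_dvd_cubeFst a b
    have hdvd : (3 : ℤ) ∣ x ^ 2 - 2 * y ^ 2 :=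
      ⟨-13 * k - 8 * cubeSnd a b, by rw [hx2, hy2, hk]; ring⟩
    have h0 := (ZMod.intCast_zmod_eq_zero_iff_dvd _ 3).2 hdvd
    push_cast at h0
    exact sub_eq_zero.1 h0
  generalize (x : ZMod 3) = x at hxy
  generalize (y : ZMod 3) = y at hxy hy3
  revert x y
  decide

theorem three_dvd_of_mul_eq (hb : ¬3 ∣ b) {k : ℤ}
    (h : c * (2 * (b + 3 * c) ^ 2 + 5 * c ^ 2) = 3 * k) : 3 ∣ c := by
  have hb3 : (b : ZMod 3) ≠ 0 := mt (ZMod.intCast_zmod_eq_zero_iff_dvd b 3).1 hb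
  have h3 := congrArg (Int.cast : ℤ → ZMod 3) h
  push_cast at h3
  refine (ZMod.intCast_zmod_eq_zero_iff_dvd c 3).1 ?_
  generalize (b : ZMod 3) = b at h3 hb3
  generalize (c : ZMod 3) = c at h3
  generalize (k : ZMod 3) = k at h3
  revert b c k
  decide

theorem three_mul_mul_ne_sq (hb : ¬3 ∣ b) (hcb : IsCoprime c b) (hc : Odd c) (x : ℤ) :
    3 * c * (2 * (b + 3 * c) ^ 2 + 5 * c ^ 2) ≠ x ^ 2 := by
  intro h
  set f := 2 * (b + 3 * c) ^ 2 + 5 * c ^ 2 with hf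
  obtain ⟨x', rfl⟩ : 3 ∣ x :=
    Int.prime_three.dvd_of_dvd_pow (n := 2) ⟨c * f, by rw [← h, mul_assoc]⟩
  obtain ⟨c', rfl⟩ : 3 ∣ c := three_dvd_of_mul_eq hb (k := x' ^ 2) (by linarith)
  have hc' : Odd c' := (Int.odd_mul.1 hc).2
  have hcf : IsCoprime c' f := by
    have h2b : IsCoprime c' (2 * b ^ 2) :=
      (Int.isCoprime_two_right.2 hc').mul_right hcb.of_mul_left_right.pow_right
    have hf' : f = 2 * b ^ 2 + c' * (207 * c' + 36 * b) := by
      rw [hf]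
      ring
    exact hf' ▸ h2b.add_mul_left_right _
  have hc8 := sq_emod_eight_of_odd hc
  have hf0 : 0 < f := by
    have hc2 : 0 < (3 * c') ^ 2 := sq_pos_of_ne_zero (by rintro h0; simp [h0] at hc8)
    positivity
  obtain ⟨g, hg⟩ := exists_eq_pow_of_isCoprime_of_mul_eq_pow even_two hcf.symm hf0
    (r := x') (by linarith)
  have hg8 : g ^ 2 % 8 = 1 := by
    apply sq_emod_eight_of_odd
    rw [← Int.odd_pow' two_ne_zero, ← hg]
    exact (even_two_mul _).add_odd ((by decide : Odd (5 : ℤ)).mul hc.pow)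
  rcases Int.even_or_odd' (b + 3 * (3 * c')) with ⟨k, hk | hk⟩
  · have : f = 8 * k ^ 2 + 5 * (3 * c') ^ 2 := by rw [hf, hk]; ring
    omega
  · have := sq_emod_eight_of_odd ⟨k, hk⟩
    omega

theorem sq_ne_cubes_of_neg_unit (hxy : IsCoprime x y) (hx : Odd x) (hy : ¬3 ∣ y)
    (hy2 : y ^ 2 = -6 * cubeFst a b + 11 * cubeSnd a b) :
    x ^ 2 ≠ 23 * cubeFst a b + -42 * cubeSnd a b := by
  intro hx2
  have hab : IsCoprime a b := by
    have hxy2 := hxy.pow (m := 2) (n := 2)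
    rw [hx2, hy2] at hxy2
    exact isCoprime_of_isCoprime_cubes hxy2
  have hcb : IsCoprime (a - 2 * b) b := by
    simpa [sub_eq_add_neg] using IsCoprime.add_mul_right_left hab (-2)
  have hx2' : 3 * (a - 2 * b) * (2 * (b + 3 * (a - 2 * b)) ^ 2 + 5 * (a - 2 * b) ^ 2) = x ^ 2 := by
    rw [hx2, cubeFst, cubeSnd]
    ring
  have hc : Odd (a - 2 * b) := by
    have h := hx.pow (n := 2)
    rw [← hx2'] at h
    exact (Int.odd_mul.1 (Int.odd_mul.1 h).1).2
  exact three_mul_mul_ne_sq (not_three_dvd_of_sq_eq hy hy2) hcb hc x hx2'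

theorem exists_sq_of_sq_eq_cubeSnd (hab : IsCoprime a b) (hb : ¬3 ∣ b) (hy0 : y ≠ 0)
    (hy : y ^ 2 = cubeSnd a b) :
    (∃ s, b = s ^ 2) ∧ ∃ t, 0 < t ∧ 9 * a ^ 2 + 10 * b ^ 2 = t ^ 2 := by
  have hy' : b * (9 * a ^ 2 + 10 * b ^ 2) = y ^ 2 := by
    rw [hy, cubeSnd]
    ring
  have hcop : IsCoprime b (9 * a ^ 2 + 10 * b ^ 2) := by
    have h3 : IsCoprime b 3 := (Int.prime_three.coprime_iff_not_dvd.2 hb).symm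
    have h9 : IsCoprime b (3 ^ 2 * a ^ 2) := h3.pow_right.mul_right hab.symm.pow_right
    have he : 9 * a ^ 2 + 10 * b ^ 2 = 3 ^ 2 * a ^ 2 + b * (10 * b) := by ring
    exact he ▸ h9.add_mul_left_right _
  have hb0 : b ≠ 0 := by
    rintro rfl
    exact hb (dvd_zero 3)
  have hpos : 0 < 9 * a ^ 2 + 10 * b ^ 2 := by positivity
  have hb0' : 0 < b := (pos_iff_pos_of_mul_pos (hy' ▸ by positivity)).2 hpos
  obtain ⟨t, ht⟩ := exists_eq_pow_of_isCoprime_of_mul_eq_pow even_two hcop.symm hpos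
    (r := y) (by linarith)
  refine ⟨exists_eq_pow_of_isCoprime_of_mul_eq_pow even_two hcop hb0' hy', |t|, ?_, ?_⟩
  · rw [abs_pos]
    rintro rfl
    simp [ht] at hpos
  · rw [sq_abs, ht]

theorem exists_two_mul_eq_of_sq {s : ℤ} (ha : Odd a) (h : 9 * a ^ 2 + 10 * s ^ 4 = t ^ 2) :
    ∃ r, s = 2 * r := by
  have ha8 := sq_emod_eight_of_odd ha
  rcases Int.even_or_odd' s with ⟨r, hr | hr⟩
  · exact ⟨r, hr⟩
  · have hs8 : s ^ 4 % 8 = 1 := by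
      have := sq_emod_eight_of_odd (Odd.pow ⟨r, hr⟩ (n := 2))
      rwa [← pow_mul] at this
    rcases Int.even_or_odd' t with ⟨k, rfl | hk⟩
    · rw [mul_pow] at h
      omega
    · have := sq_emod_eight_of_odd ⟨k, hk⟩
      omega

theorem exists_mul_eq_of_sq (ha : Odd a) (hr : r ≠ 0) (ht : 0 < t)
    (h : 9 * a ^ 2 + 160 * r ^ 4 = t ^ 2) :
    ∃ u v, 0 < u ∧ 0 < v ∧ v - u = 3 * a ∧ u * v = 40 * r ^ 4 := by
  have ht2 : Odd t := by
    rw [← Int.odd_pow' two_ne_zero, ← h]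
    exact ((by decide : Odd (9 : ℤ)).mul ha.pow).add_even ((by decide : Even (160 : ℤ)).mul_right _)
  obtain ⟨u, hu⟩ := (ht2.sub_odd ((by decide : Odd (3 : ℤ)).mul ha)).two_dvd
  have huv : u * (u + 3 * a) = 40 * r ^ 4 := by
    have : t = 2 * u + 3 * a := by linarith
    rw [this] at h
    linarith
  have hpos : 0 < u * (u + 3 * a) := by
    rw [huv]
    positivity
  rcases pos_and_pos_or_neg_and_neg_of_mul_pos hpos with ⟨hu0, hv0⟩ | ⟨hu0, hv0⟩
  · exact ⟨u, u + 3 * a, hu0, hv0, by ring, huv⟩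
  · linarith

theorem isCoprime_of_sub_eq_of_mul_eq (ha : Odd a) (hr : ¬3 ∣ r) (har : IsCoprime a r)
    (hsub : v - u = 3 * a) (huv : u * v = 40 * r ^ 4) : IsCoprime u v := by
  have h5 : Prime (5 : ℤ) := Nat.prime_iff_prime_int.1 Nat.prime_five
  have ha5 : ¬5 ∣ a := fun ⟨k, hk⟩ ↦ by
    have hv : v = u + 15 * k := by linarith
    have hu5 : 5 ∣ u := h5.dvd_of_dvd_pow (n := 2)
      ⟨8 * r ^ 4 - 3 * k * u, by rw [hv] at huv; linear_combination huv⟩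
    obtain ⟨w, rfl⟩ := hu5
    have hr5 : 5 ∣ r := by
      have : 5 ∣ 8 * r ^ 4 := ⟨w * (w + 3 * k), by rw [hv] at huv; linarith⟩
      exact h5.dvd_of_dvd_pow ((h5.dvd_or_dvd this).resolve_left (by decide))
    exact h5.not_isUnit (har.isUnit_of_dvd' ⟨k, hk⟩ hr5)
  have h3a : IsCoprime (3 * a) r :=
    (Int.prime_three.coprime_iff_not_dvd.2 hr).mul_left har
  have h2 : IsCoprime (3 * a) 2 :=
    Int.isCoprime_two_right.2 ((by decide : Odd (3 : ℤ)).mul ha)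
  have h35 : IsCoprime (3 * a) 5 := by
    refine (h5.coprime_iff_not_dvd.2 fun h ↦ ?_).symm
    exact ha5 ((h5.dvd_or_dvd h).resolve_left (by decide))
  have hmul : IsCoprime (v - u) (u * v) := by
    rw [hsub, huv, show (40 : ℤ) = 2 ^ 3 * 5 by norm_num]
    exact (h2.pow_right.mul_right h35).mul_right h3a.pow_right
  simpa using hmul.of_mul_right_left.symm.add_mul_left_right 1

theorem exists_eq_of_isCoprime_of_mul_eq_prime_mul_pow {p : ℤ} {k : ℕ} (hp : Prime p) (hp0 : 0 < p)
    (hk : Even k) (h : IsCoprime u v) (hu : 0 < u) (hv : 0 < v) (huv : u * v = p * r ^ k) :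
    (∃ m n, u = p * m ^ k ∧ v = n ^ k) ∨ ∃ m n, u = m ^ k ∧ v = p * n ^ k := by
  rcases hp.dvd_or_dvd ⟨r ^ k, huv⟩ with ⟨w, rfl⟩ | ⟨w, rfl⟩
  · have hw := pos_of_mul_pos_right hu hp0.le
    have hwv : w * v = r ^ k := mul_left_cancel₀ hp.ne_zero (by rw [← huv, mul_assoc])
    have hcop := h.of_mul_left_right
    obtain ⟨m, hm⟩ := exists_eq_pow_of_isCoprime_of_mul_eq_pow hk hcop hw hwv
    obtain ⟨n, hn⟩ := exists_eq_pow_of_isCoprime_of_mul_eq_pow hk hcop.symm hv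
      (mul_comm w v ▸ hwv)
    exact .inl ⟨m, n, by rw [hm], hn⟩
  · have hw := pos_of_mul_pos_right hv hp0.le
    have huw : u * w = r ^ k := mul_left_cancel₀ hp.ne_zero (by rw [← huv, mul_left_comm])
    have hcop := h.of_mul_right_right
    obtain ⟨m, hm⟩ := exists_eq_pow_of_isCoprime_of_mul_eq_pow hk hcop hu huw
    obtain ⟨n, hn⟩ := exists_eq_pow_of_isCoprime_of_mul_eq_pow hk hcop.symm hw
      (mul_comm u w ▸ huw)
    exact .inr ⟨m, n, hm, by rw [hn]⟩

theorem eight_dvd_and_of_mul_eq (h : IsCoprime u v) (hu : 0 < u) (hv : 0 < v) (hv2 : Odd v)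
    (huv : u * v = 40 * r ^ 4) :
    8 ∣ u ∧ ((v % 8 = 1 ∧ ∃ m n, v = m ^ 4 ∧ u = 40 * n ^ 4) ∨ v % 8 = 5) := by
  have h8 : IsCoprime (2 ^ 3) v := (Int.isCoprime_two_left.2 hv2).pow_left
  obtain ⟨w, rfl⟩ : 2 ^ 3 ∣ u := h8.dvd_of_dvd_mul_right ⟨5 * r ^ 4, by rw [huv]; ring⟩
  refine ⟨dvd_mul_right _ _, ?_⟩
  rcases exists_eq_of_isCoprime_of_mul_eq_prime_mul_pow (r := r)
    (Nat.prime_iff_prime_int.1 Nat.prime_five) (by norm_num) (by decide : Even 4)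
    h.of_mul_left_right (by linarith) hv (by push_cast; linarith) with
    ⟨n, m, rfl, rfl⟩ | ⟨n, m, rfl, rfl⟩
  · have hm : Odd m := (Int.odd_pow' four_ne_zero).1 hv2
    exact .inl ⟨pow_four_emod_eight_of_odd hm, m, n, rfl, by push_cast; ring⟩
  · have hm : Odd m := (Int.odd_pow' four_ne_zero).1 (Int.odd_mul.1 hv2).2
    have := pow_four_emod_eight_of_odd hm
    push_cast
    omega

theorem exists_eq_pow_four_of_mul_eq (h : IsCoprime u v) (hu : 0 < u) (hv : 0 < v)
    (hsub : (v - u) % 8 = 1) (huv : u * v = 40 * r ^ 4) :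
    ∃ m n, v = m ^ 4 ∧ u = 40 * n ^ 4 := by
  rcases Int.even_or_odd v with hv2 | hv2
  · have hu2 : Odd u := by
      obtain ⟨k, hk⟩ := hv2.two_dvd
      rw [Int.odd_iff]
      omega
    have := eight_dvd_and_of_mul_eq h.symm hv hu hu2 (r := r) (by rw [mul_comm, huv])
    omega
  · obtain ⟨_, ⟨_, hmn⟩ | _⟩ := eight_dvd_and_of_mul_eq h hu hv hv2 huv
    · exact hmn
    · omega

theorem three_mul_emod_eight_of_sq_eq (ha : Odd a) (hx : Odd x)
    (hx2 : x ^ 2 = cubeFst a ((2 * r) ^ 2) + -2 * cubeSnd a ((2 * r) ^ 2)) : 3 * a % 8 = 1 := by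
  obtain ⟨k, hk⟩ := Int.eight_dvd_sq_sub_one_of_odd ha
  have hx8 := sq_emod_eight_of_odd hx
  have : x ^ 2 = 3 * a + 8 * (3 * a * k + (60 * a * r ^ 4 - 9 * a ^ 2 * r ^ 2 - 160 * r ^ 6)) := by
    rw [hx2, cubeFst, cubeSnd]
    linear_combination 3 * a * hk
  omega

theorem exists_eq_of_sq_eq_cubes (hxy : IsCoprime x y) (hx : Odd x) (hy : ¬3 ∣ y)
    (hy2 : y ^ 2 = cubeSnd a b) (hx2 : x ^ 2 = cubeFst a b + -2 * cubeSnd a b) :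
    ∃ m n, IsCoprime m n ∧ b = (2 * m * n) ^ 2 ∧ 3 * a = m ^ 4 - 40 * n ^ 4 := by
  have hab : IsCoprime a b := by
    have hxy2 := hxy.pow (m := 2) (n := 2)
    rw [hx2, hy2] at hxy2
    exact isCoprime_of_isCoprime_cubes (A₁ := 1) (B₁ := -2) (A₂ := 0) (B₂ := 1)
      (by rwa [one_mul, zero_mul, zero_add, one_mul])
  have hb : ¬3 ∣ b := not_three_dvd_of_sq_eq (a := a) (A := 0) (B := 1) hy (by rw [hy2]; ring)
  have ha : Odd a := by
    have hcube : Odd (a * (3 * a ^ 2 + 30 * b ^ 2) + 2 * -cubeSnd a b) := by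
      convert hx.pow (n := 2) using 1
      rw [hx2, cubeFst]
      ring
    exact (Int.odd_mul.1 ((Int.odd_add.1 hcube).2 (even_two_mul _))).1
  have hy0 : y ≠ 0 := by
    rintro rfl
    exact hy (dvd_zero 3)
  obtain ⟨⟨s, rfl⟩, t, ht, hst⟩ := exists_sq_of_sq_eq_cubeSnd hab hb hy0 hy2
  obtain ⟨r, rfl⟩ := exists_two_mul_eq_of_sq ha (s := s) (t := t) (by linarith)
  have hr3 : ¬3 ∣ r := fun h ↦ hb ((h.mul_left 2).pow two_ne_zero)
  have hr0 : r ≠ 0 := by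
    rintro rfl
    exact hr3 (dvd_zero 3)
  have ha8 := three_mul_emod_eight_of_sq_eq ha hx hx2
  obtain ⟨u, v, hu, hv, hsub, huv⟩ := exists_mul_eq_of_sq ha hr0 ht (by linarith)
  have har : IsCoprime a r := ((IsCoprime.pow_right_iff two_pos).1 hab).of_mul_right_right
  have hcop := isCoprime_of_sub_eq_of_mul_eq ha hr3 har hsub huv
  obtain ⟨m, n, rfl, rfl⟩ := exists_eq_pow_four_of_mul_eq hcop hu hv (by rw [hsub, ha8]) huv
  have hmn : IsCoprime m n := (IsCoprime.pow_iff four_pos four_pos).1 hcop.of_mul_left_right.symm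
  refine ⟨m, n, hmn, ?_, hsub.symm⟩
  have hr4 : (r ^ 2) ^ 2 = ((m * n) ^ 2) ^ 2 := by linarith
  have hr2 := (pow_left_inj₀ (sq_nonneg r) (sq_nonneg (m * n)) two_ne_zero).1 hr4
  linear_combination 4 * hr2

theorem sq_ne_cubes_of_one (hxy : IsCoprime x y) (hx : Odd x) (hy : ¬3 ∣ y)
    (hy2 : y ^ 2 = cubeSnd a b) :
    x ^ 2 ≠ cubeFst a b + -2 * cubeSnd a b := by
  intro hx2
  have hb : ¬3 ∣ b := not_three_dvd_of_sq_eq (a := a) (A := 0) (B := 1) hy (by rw [hy2]; ring)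
  obtain ⟨m, n, hmn, rfl, ha⟩ := exists_eq_of_sq_eq_cubes hxy hx hy hy2 hx2
  refine sq_ne_of_abscissaNum hmn
    (fun h ↦ hb (((h.mul_left 2).mul_right n).pow two_ne_zero))
    (fun h ↦ hb ((h.mul_left (2 * m)).pow two_ne_zero)) (3 * x) ?_
  have hnum : abscissaNum m n = 3 * a - 6 * (2 * m * n) ^ 2 := by
    rw [ha, abscissaNum]
    ring
  rw [hnum, mul_pow, hx2, cubeFst, cubeSnd]
  ring

end Cubes

section CubeDescent

variable {a b c d k p q t v w z A B C D : ℤ}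

/-- `w * √3 + v * √10` is a cube `(a * √3 + b * √10) ^ 3` times one of the units
`1`, `11 + 2 * √30`, `11 - 2 * √30`. -/
def IsUnitMulCube (w v : ℤ) : Prop :=
  ∃ a b C D, (C = 1 ∧ D = 0 ∨ C = 11 ∧ D = 2 ∨ C = 11 ∧ D = -2) ∧
    w = C * cubeFst a b + 10 * D * cubeSnd a b ∧ v = C * cubeSnd a b + 3 * D * cubeFst a b

/-- The relation `(A + B * √30) * (w * √3 + v * √10) = (p * √3 + q * √10) ^ 3`, together with
`k`, the cube root of the norm of the multiplier, dividing `3 * p ^ 2 - 10 * q ^ 2`. -/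
structure IsCubeMultiplier (w v p q A B k : ℤ) : Prop where
  norm_eq : A ^ 2 - 30 * B ^ 2 = k ^ 3
  dvd : k ∣ 3 * p ^ 2 - 10 * q ^ 2
  fst_eq : cubeFst p q = A * w + 10 * B * v
  snd_eq : cubeSnd p q = A * v + 3 * B * w

theorem IsUnitMulCube.of_neg (h : IsUnitMulCube w (-v)) : IsUnitMulCube w v := by
  obtain ⟨a, b, C, D, hCD, hw, hv⟩ := h
  refine ⟨a, -b, C, -D, by omega, ?_, ?_⟩
  · rw [hw, cubeFst, cubeSnd, cubeFst, cubeSnd]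
    ring
  · rw [← neg_neg v, hv, cubeFst, cubeSnd, cubeFst, cubeSnd]
    ring

namespace IsCubeMultiplier

theorem neg (h : IsCubeMultiplier w v p q A B k) : IsCubeMultiplier w v (-p) (-q) (-A) (-B) k where
  norm_eq := by simpa only [neg_sq] using h.norm_eq
  dvd := by simpa only [neg_sq] using h.dvd
  fst_eq := by
    have := h.fst_eq
    rw [cubeFst] at this ⊢
    linear_combination -this
  snd_eq := by
    have := h.snd_eq
    rw [cubeSnd] at this ⊢
    linear_combination -this

theorem conj (h : IsCubeMultiplier w v p q A B k) : IsCubeMultiplier w (-v) p (-q) A (-B) k where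
  norm_eq := by simpa only [neg_sq] using h.norm_eq
  dvd := by simpa only [neg_sq] using h.dvd
  fst_eq := by
    have := h.fst_eq
    rw [cubeFst] at this ⊢
    linear_combination this
  snd_eq := by
    have := h.snd_eq
    rw [cubeSnd] at this ⊢
    linear_combination -this

-- If the multiplier is `θ ^ 3` up to a unit, with `θ = c + d * √30` dividing `p * √3 + q * √10`,
-- then the cube of the quotient is `w * √3 + v * √10` up to that unit.
theorem isUnitMulCube (h : IsCubeMultiplier w v p q A B k) (hk : k ≠ 0) (a b C D c d : ℤ)
    (hCD : C = 1 ∧ D = 0 ∨ C = 11 ∧ D = 2 ∨ C = 11 ∧ D = -2)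
    (hfst : A * C + 30 * B * D = c ^ 3 + 90 * c * d ^ 2)
    (hsnd : A * D + B * C = 3 * c ^ 2 * d + 30 * d ^ 3)
    (hp : p = c * a + 10 * d * b) (hq : q = c * b + 3 * d * a) : IsUnitMulCube w v := by
  obtain ⟨hnorm, -, hF, hS⟩ := h
  have hk3 : k ^ 3 ≠ 0 := pow_ne_zero 3 hk
  rw [hp, hq, cubeFst] at hF
  rw [hp, hq, cubeSnd] at hS
  refine ⟨a, b, C, D, hCD, mul_left_cancel₀ hk3 ?_, mul_left_cancel₀ hk3 ?_⟩
  · rw [← hnorm]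
    linear_combination (norm := skip) -A * hF + 10 * B * hS
      - (A * cubeFst a b - 10 * B * cubeSnd a b) * hfst
      - (10 * A * cubeSnd a b - 30 * B * cubeFst a b) * hsnd
    rw [cubeFst, cubeSnd]
    ring
  · rw [← hnorm]
    linear_combination (norm := skip) 3 * B * hF - A * hS
      - (A * cubeSnd a b - 3 * B * cubeFst a b) * hfst
      - (3 * A * cubeFst a b - 30 * B * cubeSnd a b) * hsnd
    rw [cubeFst, cubeSnd]
    ring

theorem norm_cases : ∀ A ∈ Finset.Icc (0 : ℤ) 36, ∀ B ∈ Finset.Icc (0 : ℤ) 6,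
    ∀ k ∈ Finset.Icc (-10 : ℤ) 10, A ^ 2 - 30 * B ^ 2 = k ^ 3 →
      (A = 0 ∧ B = 0) ∨ (k = 1 ∧ A = 1 ∧ B = 0) ∨ (k = 1 ∧ A = 11 ∧ B = 2) ∨
    (k = 4 ∧ A = 8 ∧ B = 0) ∨ (k = 9 ∧ A = 27 ∧ B = 0) ∨
      (k = -5 ∧ A = 25 ∧ B = 5) ∨ (k = 6 ∧ A = 36 ∧ B = 6) := by
  decide +kernel

theorem norm_cases_of_nonneg (h : A ^ 2 - 30 * B ^ 2 = k ^ 3) (hA : 0 ≤ A) (hA' : A ≤ 36)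
    (hB : 0 ≤ B) (hB' : B ≤ 6) :
    (A = 0 ∧ B = 0) ∨ (k = 1 ∧ A = 1 ∧ B = 0) ∨ (k = 1 ∧ A = 11 ∧ B = 2) ∨
    (k = 4 ∧ A = 8 ∧ B = 0) ∨ (k = 9 ∧ A = 27 ∧ B = 0) ∨
    (k = -5 ∧ A = 25 ∧ B = 5) ∨ (k = 6 ∧ A = 36 ∧ B = 6) := by
  have hk : k < 11 := lt_of_pow_lt_pow_left₀ 3 (by norm_num) (by nlinarith)
  have hk' : -k < 11 := lt_of_pow_lt_pow_left₀ 3 (by norm_num) (by nlinarith)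
  exact norm_cases A (Finset.mem_Icc.2 ⟨hA, hA'⟩) B (Finset.mem_Icc.2 ⟨hB, hB'⟩) k
    (Finset.mem_Icc.2 ⟨by omega, by omega⟩) h

theorem isUnitMulCube_of_nonneg (h : IsCubeMultiplier w v p q A B k) (hA : 0 ≤ A) (hA' : A ≤ 36)
    (hB : 0 ≤ B) (hB' : B ≤ 6) (hne : A ≠ 0 ∨ B ≠ 0) : IsUnitMulCube w v := by
  have dvd_of_sq {n m : ℤ} (hn : Prime n) (hm : n ∣ m ^ 2) : n ∣ m := hn.dvd_of_dvd_pow hm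
  have hdvd := h.dvd
  rcases norm_cases_of_nonneg h.norm_eq hA hA' hB hB' with ⟨hA0, hB0⟩ | ⟨rfl, rfl, rfl⟩ |
    ⟨rfl, rfl, rfl⟩ | ⟨rfl, rfl, rfl⟩ | ⟨rfl, rfl, rfl⟩ | ⟨rfl, rfl, rfl⟩ | ⟨rfl, rfl, rfl⟩
  · omega
  · exact h.isUnitMulCube one_ne_zero p q 1 0 1 0 (by norm_num) rfl rfl (by ring) (by ring)
  · exact h.isUnitMulCube one_ne_zero p q 11 (-2) 1 0 (by norm_num) rfl rfl (by ring) (by ring)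
  · obtain ⟨p', rfl⟩ := dvd_of_sq Int.prime_two (m := p) (by omega)
    obtain ⟨q', rfl⟩ := dvd_of_sq Int.prime_two (m := q) (by grind)
    exact h.isUnitMulCube four_ne_zero p' q' 1 0 2 0 (by norm_num) rfl rfl (by ring) (by ring)
  · obtain ⟨q', rfl⟩ := dvd_of_sq Int.prime_three (m := q) (by omega)
    obtain ⟨p', rfl⟩ := dvd_of_sq Int.prime_three (m := p) (by grind)
    exact h.isUnitMulCube (by norm_num) p' q' 1 0 3 0 (by norm_num) rfl rfl (by ring) (by ring)
  · obtain ⟨p', rfl⟩ := dvd_of_sq (Nat.prime_iff_prime_int.1 Nat.prime_five) (m := p)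
      (by have := Int.neg_dvd.1 hdvd; push_cast; omega)
    push_cast at h
    exact h.isUnitMulCube (by norm_num) (2 * q - 5 * p') (3 * p' - q) 11 2 5 1 (by norm_num)
      rfl rfl (by ring) (by ring)
  · obtain ⟨p', rfl⟩ := dvd_of_sq Int.prime_two (m := p) (by omega)
    obtain ⟨q', rfl⟩ := dvd_of_sq Int.prime_three (m := q) (by omega)
    exact h.isUnitMulCube (by norm_num) (2 * p' - 5 * q') (3 * q' - p') 11 2 6 1 (by norm_num)
      rfl rfl (by ring) (by ring)

theorem isUnitMulCube_of_abs_le (h : IsCubeMultiplier w v p q A B k) (hA : |A| ≤ 36)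
    (hB : |B| ≤ 6) (hne : A ≠ 0 ∨ B ≠ 0) : IsUnitMulCube w v := by
  have of_nonneg {v p q A B : ℤ} (h : IsCubeMultiplier w v p q A B k) (hA : |A| ≤ 36)
      (hB : |B| ≤ 6) (hne : A ≠ 0 ∨ B ≠ 0) (hB0 : 0 ≤ B) : IsUnitMulCube w v := by
    rw [abs_le] at hA hB
    rcases le_total 0 A with hA0 | hA0
    · exact h.isUnitMulCube_of_nonneg hA0 hA.2 hB0 hB.2 hne
    · exact .of_neg <| h.neg.conj.isUnitMulCube_of_nonneg (by omega) (by omega) (by omega)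
        (by omega) (by omega)
  rcases le_total 0 B with hB0 | hB0
  · exact of_nonneg h hA hB hne hB0
  · exact .of_neg <| of_nonneg h.conj hA (by rwa [abs_neg]) (by omega) (by omega)

end IsCubeMultiplier

theorem eq_zero_of_cubes_eq_zero (h : cubeFst p q = 0) (h' : cubeSnd p q = 0) :
    p = 0 ∧ q = 0 := by
  have hp : p * (3 * p ^ 2 + 30 * q ^ 2) = 0 := by
    rw [← h, cubeFst]
    ring
  have hq : q * (9 * p ^ 2 + 10 * q ^ 2) = 0 := by
    rw [← h', cubeSnd]
    ring
  by_contra! hpq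
  rcases eq_or_ne p 0 with rfl | hp0
  · have hq0 := hpq rfl
    have : 0 < 9 * (0 : ℤ) ^ 2 + 10 * q ^ 2 := by positivity
    exact mul_ne_zero hq0 this.ne' hq
  · have : 0 < 3 * p ^ 2 + 30 * q ^ 2 := by positivity
    exact mul_ne_zero hp0 this.ne' hp

theorem exists_pow_three_dvd (hwz : IsCoprime w z) (h : 3 * w ^ 2 - 10 * v ^ 2 = z ^ 3) :
    ∃ t, z ^ 3 ∣ v - t * w ∧ z ^ 3 ∣ 10 * t ^ 2 - 3 := by
  obtain ⟨m, n, hmn⟩ : IsCoprime w (z ^ 3) := hwz.pow_right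
  have hv : v = v * m * w + z ^ 3 * (v * n) := by linear_combination -v * hmn
  refine ⟨v * m, ⟨v * n, by linear_combination hv⟩, ?_⟩
  have hdvd : z ^ 3 ∣ w ^ 2 * (10 * (v * m) ^ 2 - 3) :=
    ⟨-1 - 10 * (v * n) * (v + v * m * w), by
      linear_combination -h - 10 * (v + v * m * w) * hv⟩
  exact (hwz.symm.pow : IsCoprime (z ^ 3) (w ^ 2)).dvd_of_dvd_mul_left hdvd

theorem exists_isCubeMultiplier (hz : z ≠ 0) (h : 3 * w ^ 2 - 10 * v ^ 2 = z ^ 3)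
    (hv : z ^ 3 ∣ v - t * w) (ht : z ^ 3 ∣ 10 * t ^ 2 - 3) (hq : z ∣ q - t * p) :
    ∃ A B k, IsCubeMultiplier w v p q A B k := by
  obtain ⟨g, hg⟩ := hv
  obtain ⟨T, hT⟩ := ht
  obtain ⟨l, hl⟩ := hq
  have hz3 : z ^ 3 ≠ 0 := pow_ne_zero 3 hz
  obtain ⟨S, hS⟩ : z ^ 3 ∣ cubeSnd p q - t * cubeFst p q :=
    ⟨10 * l ^ 3 + T * (-3 * p ^ 2 * q + t * p ^ 3), by
      rw [cubeFst, cubeSnd]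
      linear_combination (-3 * p ^ 2 * q + t * p ^ 3) * hT +
        10 * ((q - t * p) ^ 2 + (q - t * p) * (z * l) + (z * l) ^ 2) * hl⟩
  obtain ⟨B, hB⟩ : z ^ 3 ∣ cubeSnd p q * w - cubeFst p q * v :=
    ⟨w * S - cubeFst p q * g, by linear_combination w * hS - cubeFst p q * hg⟩
  obtain ⟨A, hA⟩ : z ^ 3 ∣ 3 * cubeFst p q * w - 10 * cubeSnd p q * v :=
    ⟨w * (-10 * t * S - cubeFst p q * T) - 10 * cubeSnd p q * g, by
      linear_combination (-10 * t * w) * hS - cubeFst p q * w * hT - 10 * cubeSnd p q * hg⟩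
  obtain ⟨k, hk⟩ : z ∣ 3 * p ^ 2 - 10 * q ^ 2 :=
    ⟨-(p ^ 2 * z ^ 2 * T) - 10 * (q + t * p) * l, by
      linear_combination -p ^ 2 * hT - 10 * (q + t * p) * hl⟩
  have hfst : cubeFst p q = A * w + 10 * B * v :=
    mul_left_cancel₀ hz3 (by linear_combination -cubeFst p q * h + w * hA + 10 * v * hB)
  have hsnd : cubeSnd p q = A * v + 3 * B * w :=
    mul_left_cancel₀ hz3 (by linear_combination -cubeSnd p q * h + v * hA + 3 * w * hB)
  refine ⟨A, B, k, mul_left_cancel₀ hz3 ?_, ⟨z, by rw [hk, mul_comm]⟩, hfst, hsnd⟩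
  have hcube : 3 * cubeFst p q ^ 2 - 10 * cubeSnd p q ^ 2 = (z * k) ^ 3 := by
    rw [← hk, cubeFst, cubeSnd]
    ring
  rw [hfst, hsnd] at hcube
  linear_combination hcube - (A ^ 2 - 30 * B ^ 2) * h

theorem exists_int_abs_lt {α γ c₁ c₂ : ℝ} (hα : 0 < α) (hγ : 0 < γ) (hc₁ : 0 < c₁) (hc₂ : 0 < c₂)
    (hz : 0 < z) (t : ℤ) (h : 2 * (α * γ) * z < c₁ * c₂) :
    ∃ p q : ℤ, (p ≠ 0 ∨ q ≠ 0) ∧ z ∣ q - t * p ∧ |α * p + γ * q| < c₁ ∧ |α * p - γ * q| < c₂ := by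
  have hzR : (0 : ℝ) < z := by exact_mod_cast hz
  set M : Matrix (Fin 2) (Fin 2) ℝ := !![α + γ * t, γ * z; α - γ * t, -(γ * z)] with hM
  have hdet : M.det = -(2 * (α * γ) * z) := by
    rw [hM, Matrix.det_fin_two_of]
    ring
  have hpos : 0 < 2 * (α * γ) * z := by positivity
  obtain ⟨κ, hκ0, hκ⟩ := exists_int_ne_zero_abs_mulVec_lt (M := M) (R := ![c₁, c₂])
    (by rw [hdet]; exact neg_ne_zero.2 hpos.ne') (by simp [Fin.forall_fin_two, hc₁, hc₂])
    (by simpa [hdet, abs_of_pos hα, abs_of_pos hγ, abs_of_pos hzR] using h)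
  simp only [Fin.forall_fin_two, hM, Matrix.mulVec, dotProduct, Fin.sum_univ_two, Matrix.of_apply,
    Matrix.cons_val_zero, Matrix.cons_val_one] at hκ
  refine ⟨κ 0, t * κ 0 + z * κ 1, ?_, ⟨κ 1, by ring⟩, ?_, ?_⟩
  · by_contra! h0
    obtain ⟨h0, h1⟩ := h0
    rw [h0, mul_zero, zero_add] at h1
    apply hκ0
    ext i
    fin_cases i
    · exact h0
    · exact (mul_eq_zero.1 h1).resolve_left hz.ne'
  · convert hκ.1 using 2
    push_cast
    ring
  · convert hκ.2 using 2
    push_cast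
    ring

theorem abs_lt_pow_of_mul_pow_eq {s c x u : ℝ} {n : ℕ} (hn : n ≠ 0) (hx : 0 < x)
    (h : s * x ^ n = u ^ n) (hu : |u| < c * x) : |s| < c ^ n := by
  refine lt_of_mul_lt_mul_right ?_ (pow_pos hx n).le
  calc |s| * x ^ n = |u| ^ n := by rw [← abs_pow, ← h, abs_mul, abs_of_pos (pow_pos hx n)]
    _ < (c * x) ^ n := pow_lt_pow_left₀ hu (abs_nonneg u) hn
    _ = c ^ n * x ^ n := mul_pow ..

theorem IsCubeMultiplier.real_mul_eq (h : IsCubeMultiplier w v p q A B k) {α γ : ℝ}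
    (hα : α ^ 2 = 3) (hγ : γ ^ 2 = 10) :
    (A + B * (α * γ)) * (α * w + γ * v) = (α * p + γ * q) ^ 3 := by
  have hfst := congrArg (Int.cast : ℤ → ℝ) h.fst_eq
  have hsnd := congrArg (Int.cast : ℤ → ℝ) h.snd_eq
  rw [cubeFst] at hfst
  rw [cubeSnd] at hsnd
  push_cast at hfst hsnd
  linear_combination (B * γ * w - (α * p ^ 3 + 3 * p ^ 2 * q * γ)) * hα +
    (B * α * v - (3 * α * p * q ^ 2 + γ * q ^ 3)) * hγ - α * hfst - γ * hsnd

theorem abs_le_of_abs_add_mul_lt {δ : ℝ} (hδ : δ ^ 2 = 30) (hδ0 : 0 < δ)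
    (h : |A + B * δ| < 3.31 ^ 3) (h' : |A - B * δ| < 3.31 ^ 3) : |A| ≤ 36 ∧ |B| ≤ 6 := by
  have hδl : 5.4 < δ := lt_of_pow_lt_pow_left₀ 2 hδ0.le (by norm_num [hδ])
  have hA : |(A : ℝ)| < 37 := by
    rw [abs_lt] at h h' ⊢
    norm_num at h h'
    constructor <;> linarith
  have hB : |(B : ℝ)| < 7 := by
    have hBδ : |B * δ| < 7 * 5.4 := by
      rw [abs_lt] at h h' ⊢
      norm_num at h h'
      constructor <;> linarith
    rw [abs_mul, abs_of_pos hδ0] at hBδ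
    nlinarith [abs_nonneg (B : ℝ)]
  constructor
  · exact Int.lt_add_one_iff.1 (by exact_mod_cast hA)
  · exact Int.lt_add_one_iff.1 (by exact_mod_cast hB)

theorem pos_of_mul_pos_of_add_pos {x y : ℝ} (hmul : 0 < x * y) (hadd : 0 < x + y) :
    0 < x ∧ 0 < y := by
  rcases pos_and_pos_or_neg_and_neg_of_mul_pos hmul with h | ⟨hx, hy⟩
  · exact h
  · linarith

theorem exists_pos_pow_eq {ξ : ℝ} (hξ : 0 < ξ) {n : ℕ} (hn : n ≠ 0) : ∃ x, 0 < x ∧ x ^ n = ξ :=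
  ⟨ξ ^ (n : ℝ)⁻¹, Real.rpow_pos_of_pos hξ _, Real.rpow_inv_natCast_pow hξ.le hn⟩

theorem exists_pos_cube_roots {α γ : ℝ} (hα0 : 0 < α) (hα : α ^ 2 = 3) (hγ : γ ^ 2 = 10)
    (hz : 0 < z) (hw : 0 < w) (h : 3 * w ^ 2 - 10 * v ^ 2 = z ^ 3) :
    ∃ x₁ x₂ : ℝ, 0 < x₁ ∧ 0 < x₂ ∧ x₁ * x₂ = z ∧
      x₁ ^ 3 = α * w + γ * v ∧ x₂ ^ 3 = α * w - γ * v := by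
  have hzR : (0 : ℝ) < z := by exact_mod_cast hz
  have hprod : (α * w + γ * v) * (α * w - γ * v) = (z : ℝ) ^ 3 := by
    have hR : (3 : ℝ) * w ^ 2 - 10 * v ^ 2 = z ^ 3 := by exact_mod_cast h
    linear_combination hR + w ^ 2 * hα - v ^ 2 * hγ
  have hsum : 0 < (α * w + γ * v) + (α * w - γ * v) := by
    have : 0 < α * w := by positivity
    linarith
  obtain ⟨hξ, hη⟩ := pos_of_mul_pos_of_add_pos (by rw [hprod]; positivity) hsum
  obtain ⟨x₁, hx₁, hx₁ξ⟩ := exists_pos_pow_eq hξ three_ne_zero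
  obtain ⟨x₂, hx₂, hx₂η⟩ := exists_pos_pow_eq hη three_ne_zero
  refine ⟨x₁, x₂, hx₁, hx₂, ?_, hx₁ξ, hx₂η⟩
  refine (pow_left_inj₀ (by positivity) hzR.le three_ne_zero).1 ?_
  rw [mul_pow, hx₁ξ, hx₂η, hprod]

-- Minkowski's theorem makes the multiplier small: both of its conjugates are below `3.31 ^ 3`,
-- because `2 * √30 < 3.31 ^ 2`.
theorem isUnitMulCube_of_eq_cube (hz : 0 < z) (hw : 0 < w) (hwz : IsCoprime w z)
    (h : 3 * w ^ 2 - 10 * v ^ 2 = z ^ 3) : IsUnitMulCube w v := by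
  obtain ⟨α, hα0, hα⟩ := exists_pos_pow_eq (ξ := 3) (by norm_num) two_ne_zero
  obtain ⟨γ, hγ0, hγ⟩ := exists_pos_pow_eq (ξ := 10) (by norm_num) two_ne_zero
  have hδ : (α * γ) ^ 2 = 30 := by
    rw [mul_pow, hα, hγ]
    norm_num
  have hδ' : 2 * (α * γ) < 3.31 ^ 2 :=
    lt_of_pow_lt_pow_left₀ 2 (by norm_num) (by rw [mul_pow, hδ]; norm_num)
  obtain ⟨x₁, x₂, hx₁, hx₂, hx, hξ, hη⟩ := exists_pos_cube_roots hα0 hα hγ hz hw h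
  obtain ⟨t, htv, ht⟩ := exists_pow_three_dvd hwz h
  obtain ⟨p, q, hpq, hqt, hp₁, hp₂⟩ := exists_int_abs_lt hα0 hγ0 (c₁ := 3.31 * x₁)
    (c₂ := 3.31 * x₂) (by positivity) (by positivity) hz t
    (by rw [← hx]; nlinarith [mul_pos hx₁ hx₂])
  obtain ⟨A, B, k, hm⟩ := exists_isCubeMultiplier hz.ne' h htv ht hqt
  have hm₁ : |A + B * (α * γ)| < 3.31 ^ 3 :=
    abs_lt_pow_of_mul_pow_eq three_ne_zero hx₁ (by rw [hξ, hm.real_mul_eq hα hγ]) hp₁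
  have hm₂ : |A - B * (α * γ)| < 3.31 ^ 3 := by
    refine abs_lt_pow_of_mul_pow_eq three_ne_zero hx₂ (u := α * p - γ * q) ?_ hp₂
    have := hm.real_mul_eq hα ((neg_sq γ).trans hγ)
    simpa only [hη, mul_neg, neg_mul, ← sub_eq_add_neg] using this
  obtain ⟨hA, hB⟩ := abs_le_of_abs_add_mul_lt hδ (mul_pos hα0 hγ0) hm₁ hm₂
  refine hm.isUnitMulCube_of_abs_le hA hB ?_
  by_contra! hAB
  obtain ⟨rfl, rfl⟩ := hAB
  have := eq_zero_of_cubes_eq_zero (p := p) (q := q) (by rw [hm.fst_eq]; ring)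
    (by rw [hm.snd_eq]; ring)
  omega

end CubeDescent

section Equation

variable {x y z : ℤ}

theorem odd_of_eq_cube (hxy : IsCoprime x y)
    (h : 3 * x ^ 4 + 12 * x ^ 2 * y ^ 2 + 2 * y ^ 4 = z ^ 3) : Odd x := by
  rw [← Int.not_even_iff_odd, even_iff_two_dvd]
  rintro ⟨k, rfl⟩
  obtain ⟨l, rfl⟩ : 2 ∣ z := Int.prime_two.dvd_of_dvd_pow (n := 3)
    ⟨24 * k ^ 4 + 24 * k ^ 2 * y ^ 2 + y ^ 4, by rw [← h]; ring⟩
  have hy : 2 ∣ y := Int.prime_two.dvd_of_dvd_pow (n := 4)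
    ⟨2 * l ^ 3 - 12 * k ^ 4 - 12 * k ^ 2 * y ^ 2, by linarith⟩
  exact Int.prime_two.not_isUnit (hxy.isUnit_of_dvd' (dvd_mul_right 2 k) hy)

theorem not_three_dvd_of_eq_cube (hxy : IsCoprime x y)
    (h : 3 * x ^ 4 + 12 * x ^ 2 * y ^ 2 + 2 * y ^ 4 = z ^ 3) : ¬3 ∣ y := by
  rintro ⟨k, rfl⟩
  obtain ⟨l, rfl⟩ : 3 ∣ z := Int.prime_three.dvd_of_dvd_pow (n := 3)
    ⟨x ^ 4 + 36 * x ^ 2 * k ^ 2 + 54 * k ^ 4, by rw [← h]; ring⟩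
  have hx : 3 ∣ x := Int.prime_three.dvd_of_dvd_pow (n := 4)
    ⟨3 * l ^ 3 - 12 * x ^ 2 * k ^ 2 - 18 * k ^ 4, by linarith⟩
  exact Int.prime_three.not_isUnit (hxy.isUnit_of_dvd' hx (dvd_mul_right 3 k))

theorem not_five_dvd_sq_add_two_mul_sq (hxy : IsCoprime x y) : ¬5 ∣ x ^ 2 + 2 * y ^ 2 := by
  have key : ∀ x y : ZMod 5, x ^ 2 + 2 * y ^ 2 = 0 → x = 0 ∧ y = 0 := by decide
  intro h
  have h5 := (ZMod.intCast_zmod_eq_zero_iff_dvd (x ^ 2 + 2 * y ^ 2) 5).2 h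
  push_cast at h5
  obtain ⟨hx, hy⟩ := key x y h5
  exact (Nat.prime_iff_prime_int.1 Nat.prime_five).not_isUnit <| hxy.isUnit_of_dvd'
    ((ZMod.intCast_zmod_eq_zero_iff_dvd x 5).1 hx) ((ZMod.intCast_zmod_eq_zero_iff_dvd y 5).1 hy)

theorem isCoprime_of_eq_cube (hxy : IsCoprime x y) (hx : Odd x)
    (h : 3 * (x ^ 2 + 2 * y ^ 2) ^ 2 - 10 * (y ^ 2) ^ 2 = z ^ 3) :
    IsCoprime (x ^ 2 + 2 * y ^ 2) z := by
  set w := x ^ 2 + 2 * y ^ 2 with hw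
  have h2 : IsCoprime w 2 := Int.isCoprime_two_right.2 (hx.pow.add_even (even_two_mul _))
  have h5 : IsCoprime w 5 := ((Nat.prime_iff_prime_int.1 Nat.prime_five).coprime_iff_not_dvd.2
    (not_five_dvd_sq_add_two_mul_sq hxy)).symm
  have hwy : IsCoprime w y := by
    have hx2 : IsCoprime (x ^ 2) y := hxy.pow_left
    have : w = x ^ 2 + y * (2 * y) := by rw [hw]; ring
    exact this ▸ hx2.add_mul_left_left _
  have h10 : IsCoprime w (-(2 * 5 * (y ^ 2) ^ 2)) :=
    ((h2.mul_right h5).mul_right hwy.pow_right.pow_right).neg_right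
  have hz3 : z ^ 3 = -(2 * 5 * (y ^ 2) ^ 2) + w * (3 * w) := by rw [← h]; ring
  exact (IsCoprime.pow_right_iff three_pos).1 (hz3 ▸ h10.add_mul_left_right _)

theorem no_coprime_solution (hxy : IsCoprime x y) :
    3 * x ^ 4 + 12 * x ^ 2 * y ^ 2 + 2 * y ^ 4 ≠ z ^ 3 := by
  intro h
  have hx := odd_of_eq_cube hxy h
  have hy := not_three_dvd_of_eq_cube hxy h
  have hx0 : x ≠ 0 := by
    rintro rfl
    exact Int.not_odd_zero hx
  have hz : 0 < z := (by decide : Odd 3).pow_pos_iff.1 (h ▸ by positivity)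
  have hnorm : 3 * (x ^ 2 + 2 * y ^ 2) ^ 2 - 10 * (y ^ 2) ^ 2 = z ^ 3 := by
    rw [← h]
    ring
  obtain ⟨a, b, C, D, hCD, hw, hv⟩ := isUnitMulCube_of_eq_cube hz (by positivity)
    (isCoprime_of_eq_cube hxy hx hnorm) hnorm
  rcases hCD with ⟨rfl, rfl⟩ | ⟨rfl, rfl⟩ | ⟨rfl, rfl⟩
  · exact sq_ne_cubes_of_one hxy hx hy (a := a) (b := b) (by linarith) (by linarith)
  · exact sq_ne_cubes_of_pos_unit hy (x := x) (a := a) (b := b) (by linarith) (by linarith)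
  · exact sq_ne_cubes_of_neg_unit hxy hx hy (a := a) (b := b) (by linarith) (by linarith)

end Equation

end SumFourthPowers

theorem stmt_13 :
    ¬ ∃ x y z : ℤ, Int.gcd x y = 1 ∧ (x - y) ^ 4 + x ^ 4 + (x + y) ^ 4 = z ^ 3 := by
  rintro ⟨x, y, z, hxy, h⟩
  exact SumFourthPowers.no_coprime_solution (Int.isCoprime_iff_gcd_eq_one.2 hxy)
    (by rw [← h]; ring)
end
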